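/- arXiv:1602.05750 — 5 statements merged into one kernel-verified Lean document; each statement's English description precedes it below -/
import Mathlib

section
/- Let (X,d) be a metric space, F ⊆ X a closed set, Z a normed linear space and L : F → Z a Baire one function. Then there exists a continuous function A : X \ F → Z such that: (NT) for every a in the boundary of F, lim_{x→a, x∈X\F} ‖A(x) − L(a)‖_Z · dist(x,F)/d(x,a) = 0; (C) lim_{x→a, x∈X\F} A(x) = L(a) whenever a is a boundary point of F at which L is continuous (with respect to F); and (B) for every a ∈ F and every r ∈ (0,∞) ∪ {∞}, if L is bounded on B(a,12r) ∩ F then A is bounded on B(a,r) \ F. -/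
/-! The values of `A` are averages of a (discontinuous) function `c : Fᶜ → Z` which already has
the three required properties.

Write `δ = dist(y, F)` and let `g n` be continuous functions on `F` converging to `L`. For `y ∉ F`
pick `p ∈ F` with `d(y, p) < 2δ`, and let `n` be the largest natural number with `n² δ ≤ 1` such
that `g n` varies by at most `1 / (n + 1)` from its value at `p` on `F ∩ B(p, nδ)` (closed ball); by
continuity of each `g N`, `n → ∞` as `y` tends to any point of `F`. Among the points of
`F ∩ B(p, nδ)` pick `b` such that `L b` is, up to `1 / (n + 1)`, as close as possible to `g n p`.
Put `c y = L b` if `‖L b‖² ≤ n`, and `c y = 0` otherwise.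

* (C): `nδ ≤ √δ → 0`, so `b → a` as `y → a`, and `L b → L a` if `L` is continuous at `a`.
* (NT): if `a ∈ B(p, nδ)`, then `a` competes with `b`, so `L b` is close to `g n p`, hence to `g n a`,
  hence to `L a`. Otherwise `d(y, a) / δ > n - 2`, while `‖c y‖ ≤ √n`.
* (B): let `y ∈ B(a, 2r)`. If `nδ ≤ 6r` then `b` lies in the ball where `L` is bounded; otherwise `n² δ ≤ 1` bounds `n`,
  hence `‖c y‖ ≤ √n`.

Finally, a partition of unity on `Fᶜ` yields a continuous `A` whose value at `x` is a convex
combination of the values `c y` with `d(y, x) < dist(x, F) / 4`, and each of the three properties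
passes from `c` to `A`. -/

open Filter Metric Set Topology
open scoped ENNReal

/-- `L` is a Baire one function on `F`: the pointwise limit on `F` of a sequence of
functions continuous on `F` (equivalently, of continuous functions on the subspace `F`). -/
def BaireOneOn {X : Type*} [TopologicalSpace X] {Z : Type*} [TopologicalSpace Z]
    (L : X → Z) (F : Set X) : Prop :=
  ∃ g : ℕ → X → Z, (∀ n, ContinuousOn (g n) F) ∧
    ∀ x ∈ F, Tendsto (fun n => g n x) atTop (𝓝 (L x))

/-- Any `c` can be averaged to a function continuous off `F`, using at `x` only the values of
`c` at points whose distance from `x` is less than a quarter of `infDist x F`. -/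
lemma exists_continuousOn_average {X : Type*} [MetricSpace X] {Z : Type*} [NormedAddCommGroup Z]
    [NormedSpace ℝ Z] {F : Set X} (hF : IsClosed F) (hne : F.Nonempty) (c : X → Z) :
    ∃ A : X → Z, ContinuousOn A Fᶜ ∧ ∀ x ∉ F,
      A x ∈ convexHull ℝ (c '' {y | y ∉ F ∧ dist y x < infDist x F / 4}) := by
  classical
  obtain ⟨g, hg⟩ := exists_continuous_forall_mem_convex_of_local_const
    (X := ↥(Fᶜ)) (t := fun x => convexHull ℝ (c '' {y | y ∉ F ∧ dist y x < infDist (x : X) F / 4}))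
    (fun x => convex_convexHull ℝ _) (by
      rintro ⟨x, hx⟩
      refine ⟨c x, ?_⟩
      have hpos : 0 < infDist x F := (hF.notMem_iff_infDist_pos hne).1 hx
      have h : ∀ᶠ y : ↥(Fᶜ) in 𝓝 ⟨x, hx⟩, dist x (y : X) < infDist (y : X) F / 4 := by
        apply ContinuousAt.eventually_lt
        · fun_prop
        · exact ((continuous_infDist_pt F).comp continuous_subtype_val).continuousAt.div_const 4
        · simpa using hpos
      filter_upwards [h] with y hy
      exact subset_convexHull ℝ _ ⟨x, ⟨hx, hy⟩, rfl⟩)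
  refine ⟨fun x => if h : x ∈ Fᶜ then g ⟨x, h⟩ else 0, ?_, ?_⟩
  · rw [continuousOn_iff_continuous_domRestrict]
    convert g.continuous using 1
    ext ⟨x, hx⟩
    simp only [Set.domRestrict_apply, dif_pos hx]
  · intro x hx
    have := hg ⟨x, hx⟩
    simpa only [dif_pos (show x ∈ Fᶜ from hx)] using this

/-- `StageOK g F y p n` says that `g n` may be used at the point `y` with base point `p ∈ F`:
`n` is not too large compared with `infDist y F`, and `g n` is nearly constant on the points of
`F` at distance at most `n * infDist y F` from `p`. -/
def StageOK {X : Type*} [MetricSpace X] {Z : Type*} [NormedAddCommGroup Z]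
    (g : ℕ → X → Z) (F : Set X) (y p : X) (n : ℕ) : Prop :=
  (n : ℝ) ^ 2 * infDist y F ≤ 1 ∧
    ∀ b ∈ F, dist b p ≤ n * infDist y F → ‖g n b - g n p‖ ≤ 1 / ((n : ℝ) + 1)

/-- The choice of the base point `p`, the stage `n` and the point `b` for a given `y ∉ F`. -/
lemma exists_choice {X : Type*} [MetricSpace X] {Z : Type*} [NormedAddCommGroup Z]
    {F : Set X} (hF : IsClosed F) (hne : F.Nonempty) (L : X → Z) (g : ℕ → X → Z)
    (y : X) (hy : y ∉ F) :
    ∃ (p : X) (n : ℕ) (b : X), p ∈ F ∧ dist y p < 2 * infDist y F ∧ StageOK g F y p n ∧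
      (∀ m, StageOK g F y p m → m ≤ n) ∧ b ∈ F ∧ dist b p ≤ n * infDist y F ∧
      ∀ b' ∈ F, dist b' p ≤ n * infDist y F →
        ‖L b - g n p‖ ≤ ‖L b' - g n p‖ + 1 / ((n : ℝ) + 1) := by
  classical
  have hpos : 0 < infDist y F := (hF.notMem_iff_infDist_pos hne).1 hy
  obtain ⟨p, hp, hyp⟩ := (infDist_lt_iff (r := 2 * infDist y F) hne).1 (by linarith)
  have h0 : StageOK g F y p 0 := by
    refine ⟨by simp, fun b _ hb => ?_⟩
    have : b = p := by simpa using hb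
    simp [this]
  have hbd : ∀ m, StageOK g F y p m → m ≤ ⌊1 / infDist y F⌋₊ := by
    intro m hm
    apply Nat.le_floor
    rw [le_div_iff₀ hpos]
    have h1 : (m : ℝ) ≤ (m : ℝ) ^ 2 := by exact_mod_cast Nat.le_self_pow two_ne_zero m
    exact (mul_le_mul_of_nonneg_right h1 hpos.le).trans hm.1
  obtain ⟨n, hn, hmax⟩ : ∃ n, StageOK g F y p n ∧ ∀ m, StageOK g F y p m → m ≤ n :=
    ⟨Nat.findGreatest (StageOK g F y p) ⌊1 / infDist y F⌋₊,
      Nat.findGreatest_spec (Nat.zero_le _) h0, fun m hm => Nat.le_findGreatest (hbd m hm) hm⟩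
  have hS : ((fun b => ‖L b - g n p‖) '' {b | b ∈ F ∧ dist b p ≤ n * infDist y F}).Nonempty :=
    ⟨_, p, ⟨hp, by simp; positivity⟩, rfl⟩
  obtain ⟨_, ⟨b, ⟨hbF, hbp⟩, rfl⟩, hb⟩ := Real.lt_sInf_add_pos hS
    (show (0 : ℝ) < 1 / ((n : ℝ) + 1) by positivity)
  refine ⟨p, n, b, hp, hyp, hn, hmax, hbF, hbp, fun b' hb' hb'p => hb.le.trans ?_⟩
  gcongr
  exact csInf_le ⟨0, by rintro _ ⟨_, _, rfl⟩; exact norm_nonneg _⟩ ⟨b', ⟨hb', hb'p⟩, rfl⟩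

/-- The discontinuous function `c` which is to be averaged; its properties are versions of
(NT), (C) and (B). -/
lemma exists_discontinuous_extension {X : Type*} [MetricSpace X] {Z : Type*}
    [NormedAddCommGroup Z] {F : Set X} (hF : IsClosed F) (hne : F.Nonempty) (L : X → Z)
    (hL : BaireOneOn L F) :
    ∃ c : X → Z,
      (∀ a ∈ F, ∀ ε > 0, ∃ η > 0, ∀ y ∉ F, dist y a < η →
        ‖c y - L a‖ * infDist y F ≤ ε * dist y a) ∧
      (∀ a ∈ F, ContinuousWithinAt L F a → ∀ ε > 0, ∃ η > 0, ∀ y ∉ F, dist y a < η →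
        ‖c y - L a‖ ≤ ε) ∧
      (∀ M, (∀ x ∈ F, ‖L x‖ ≤ M) → ∀ y ∉ F, ‖c y‖ ≤ M) ∧
      (∀ a ∈ F, ∀ r > 0, ∀ M, (∀ x ∈ F, dist x a < 12 * r → ‖L x‖ ≤ M) →
        ∃ M', ∀ y ∉ F, dist y a < 2 * r → ‖c y‖ ≤ M') := by
  classical
  obtain ⟨g, hgc, hgL⟩ := hL
  choose! p n b hpF hyp hOK hmax hbF hbp hbest using exists_choice hF hne L g
  have hpos : ∀ y ∉ F, 0 < infDist y F := fun y hy => (hF.notMem_iff_infDist_pos hne).1 hy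
  have hinf : ∀ a ∈ F, ∀ y, infDist y F ≤ dist y a := fun a ha y => infDist_le_dist_of_mem ha
  -- Every fixed stage `N` is admissible close to `a`, because `g N` is continuous at `a`.
  have hn : ∀ a ∈ F, ∀ N : ℕ, ∃ η > 0, ∀ y ∉ F, dist y a < η → N ≤ n y := by
    intro a ha N
    obtain ⟨η, hη, hg⟩ := Metric.continuousWithinAt_iff.1 (hgc N a ha)
      (1 / (2 * ((N : ℝ) + 1))) (by positivity)
    refine ⟨min (η / (N + 3)) (1 / (N ^ 2 + 1)), by positivity, fun y hy hya => ?_⟩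
    have h1 := (lt_div_iff₀ (by positivity)).1 (lt_min_iff.1 hya).1
    have h2 := (lt_div_iff₀ (by positivity)).1 (lt_min_iff.1 hya).2
    have hδ := hinf a ha y
    have hδ0 := hpos y hy
    have hpy := hyp y hy
    have hN : (N : ℝ) * infDist y F ≤ N * dist y a := by gcongr
    have hN0 : 0 ≤ (N : ℝ) * dist y a := by positivity
    have hpa : dist (p y) a ≤ 3 * dist y a := by
      have := dist_triangle_left (p y) a y
      linarith
    have key : ∀ q ∈ F, dist q a < η → ‖g N q - g N a‖ < 1 / (2 * ((N : ℝ) + 1)) := by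
      intro q hq hqa
      simpa [dist_eq_norm] using hg hq hqa
    have hhalf : 1 / (2 * ((N : ℝ) + 1)) + 1 / (2 * ((N : ℝ) + 1)) = 1 / ((N : ℝ) + 1) := by
      field_simp; norm_num
    refine hmax y hy N ⟨?_, fun q hq hqp => ?_⟩
    · have : (N : ℝ) ^ 2 * infDist y F ≤ N ^ 2 * dist y a := by gcongr
      nlinarith [dist_nonneg (x := y) (y := a)]
    · have k1 := key q hq (by have := dist_triangle q (p y) a; linarith)
      have k2 := key (p y) (hpF y hy) (by linarith)
      have := norm_sub_le_norm_sub_add_norm_sub (g N q) (g N a) (g N (p y))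
      rw [norm_sub_rev (g N a)] at this
      linarith
  let c : X → Z := fun y => if ‖L (b y)‖ ^ 2 ≤ n y then L (b y) else 0
  have hc1 : ∀ y, ‖c y‖ ^ 2 ≤ n y := by
    intro y
    by_cases h : ‖L (b y)‖ ^ 2 ≤ n y
    · simp only [c, if_pos h]; exact h
    · simp [c, if_neg h]
  have hc2 : ∀ y, ‖c y‖ ≤ ‖L (b y)‖ := by
    intro y
    by_cases h : ‖L (b y)‖ ^ 2 ≤ n y
    · simp only [c, if_pos h]; exact le_rfl
    · simp [c, if_neg h]
  have hc3 : ∀ y a, ∀ ε > 0, ‖L (b y) - L a‖ ≤ ε → (‖L a‖ + ε) ^ 2 ≤ n y → c y = L (b y) := by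
    intro y a ε hε h1 h2
    have h3 : ‖L (b y)‖ ≤ ‖L a‖ + ε := by
      have := norm_le_norm_add_norm_sub' (L (b y)) (L a)
      linarith
    exact if_pos ((pow_le_pow_left₀ (norm_nonneg _) h3 2).trans h2)
  refine ⟨c, ?_, ?_, ?_, ?_⟩
  · intro a ha ε hε
    obtain ⟨N, hN⟩ : ∃ N : ℕ, ∀ m ≥ N, ‖L a - g m a‖ < ε / 4 ∧ 1 / ((m : ℝ) + 1) < ε / 6 ∧
        (‖L a‖ + ε) ^ 2 ≤ m ∧ ‖L a‖ + 2 * ε + 1 / ε ≤ ε * m / 2 := by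
      have e1 : ∀ᶠ m in atTop, ‖L a - g m a‖ < ε / 4 := by
        have := (hgL a ha).eventually (Metric.ball_mem_nhds (L a) (show 0 < ε / 4 by positivity))
        filter_upwards [this] with m hm
        rwa [← dist_eq_norm, dist_comm]
      have e2 : ∀ᶠ m : ℕ in atTop, 1 / ((m : ℝ) + 1) < ε / 6 :=
        tendsto_one_div_add_atTop_nhds_zero_nat.eventually_lt_const (by positivity)
      have e3 : ∀ᶠ m : ℕ in atTop, (‖L a‖ + ε) ^ 2 ≤ (m : ℝ) :=
        tendsto_natCast_atTop_atTop.eventually_ge_atTop _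
      have e4 : ∀ᶠ m : ℕ in atTop, (‖L a‖ + 2 * ε + 1 / ε) / (ε / 2) ≤ (m : ℝ) :=
        tendsto_natCast_atTop_atTop.eventually_ge_atTop _
      obtain ⟨N, hN⟩ := eventually_atTop.1 (e1.and (e2.and (e3.and e4)))
      refine ⟨N, fun m hm => ⟨(hN m hm).1, (hN m hm).2.1, (hN m hm).2.2.1, ?_⟩⟩
      have := (div_le_iff₀ (by positivity)).1 (hN m hm).2.2.2
      linarith
    obtain ⟨η, hη, hηn⟩ := hn a ha N
    refine ⟨η, hη, fun y hy hya => ?_⟩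
    obtain ⟨h1, h2, h3, h4⟩ := hN (n y) (hηn y hy hya)
    have hδ := hinf a ha y
    have hδ0 := hpos y hy
    by_cases hap : dist a (p y) ≤ n y * infDist y F
    · have k1 := (hOK y hy).2 a ha hap
      have k2 := hbest y hy a ha hap
      have k3 := norm_sub_le_norm_sub_add_norm_sub (L a) (g (n y) a) (g (n y) (p y))
      have k4 := norm_sub_le_norm_sub_add_norm_sub (L (b y)) (g (n y) (p y)) (L a)
      rw [norm_sub_rev (g (n y) (p y)) (L a)] at k4
      have k5 : ‖L (b y) - L a‖ ≤ ε := by linarith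
      rw [hc3 y a ε hε k5 h3]
      gcongr
    · -- Here `y` approaches `a` tangentially: `dist y a > (n - 2) * infDist y F`.
      push Not at hap
      have k1 := dist_triangle_left a (p y) y
      have k2 : (n y - 2) * infDist y F ≤ dist y a := by
        have := hyp y hy
        linarith
      -- `√n ≤ ε n / 2 + 1 / (2 ε)`
      have k3 : ‖c y‖ ≤ ε * n y / 2 + 1 / ε := by
        have := hc1 y
        have e : ‖c y‖ ≤ ε * ‖c y‖ ^ 2 / 2 + 1 / ε := by
          have : 0 ≤ (ε * ‖c y‖ - 1) ^ 2 / (2 * ε) + 1 / (2 * ε) := by positivity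
          have e2 : (ε * ‖c y‖ - 1) ^ 2 / (2 * ε) + 1 / (2 * ε)
            = ε * ‖c y‖ ^ 2 / 2 + 1 / ε - ‖c y‖ := by field_simp; ring
          linarith
        have : ε * ‖c y‖ ^ 2 / 2 ≤ ε * n y / 2 := by gcongr
        linarith
      have k4 : ‖c y - L a‖ ≤ ε * (n y - 2) := by
        have := norm_sub_le (c y) (L a)
        linarith
      calc ‖c y - L a‖ * infDist y F ≤ ε * (n y - 2) * infDist y F := by gcongr
        _ = ε * ((n y - 2) * infDist y F) := by ring
        _ ≤ ε * dist y a := by gcongr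
  · intro a ha hcont ε hε
    obtain ⟨η₁, hη₁, hL1⟩ := Metric.continuousWithinAt_iff.1 hcont ε hε
    obtain ⟨N, hN⟩ := exists_nat_ge ((‖L a‖ + ε) ^ 2)
    obtain ⟨η₂, hη₂, hn2⟩ := hn a ha N
    refine ⟨min η₂ (min (η₁ / 6) ((η₁ / 2) ^ 2)), by positivity, fun y hy hya => ?_⟩
    obtain ⟨h1, h2, h3⟩ : dist y a < η₂ ∧ dist y a < η₁ / 6 ∧ dist y a < (η₁ / 2) ^ 2 := by
      simpa using hya
    have hδ := hinf a ha y
    have hδ0 := hpos y hy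
    -- `n² δ ≤ 1` gives `n δ ≤ √δ`.
    have k1 : n y * infDist y F < η₁ / 2 := by
      apply lt_of_pow_lt_pow_left₀ 2 (by positivity)
      have := mul_le_mul_of_nonneg_right (hOK y hy).1 hδ0.le
      nlinarith
    have k2 : dist (b y) a < η₁ := by
      have e1 := dist_triangle (b y) (p y) a
      have e2 := dist_triangle_left (p y) a y
      have e3 := hbp y hy
      have e4 := hyp y hy
      linarith
    have k3 : ‖L (b y) - L a‖ ≤ ε := by
      rw [← dist_eq_norm]; exact (hL1 (hbF y hy) k2).le
    rw [hc3 y a ε hε k3 (hN.trans (by exact_mod_cast hn2 y hy h1))]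
    exact k3
  · intro M hM y hy
    exact (hc2 y).trans (hM _ (hbF y hy))
  · intro a ha r hr M hM
    refine ⟨max M (1 + 1 / (6 * r)), fun y hy hya => ?_⟩
    have hδ := hinf a ha y
    have hδ0 := hpos y hy
    by_cases h : n y * infDist y F ≤ 6 * r
    · refine le_max_of_le_left ((hc2 y).trans (hM _ (hbF y hy) ?_))
      have e1 := dist_triangle (b y) (p y) a
      have e2 := dist_triangle_left (p y) a y
      have e3 := hbp y hy
      have e4 := hyp y hy
      linarith
    · refine le_max_of_le_right ?_
      push Not at h
      have k1 : (n y : ℝ) ≤ 1 / (6 * r) := by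
        rw [le_div_iff₀ (by positivity)]
        have e1 : (n y : ℝ) * (6 * r) ≤ n y * (n y * infDist y F) := by gcongr
        have := (hOK y hy).1
        nlinarith
      have := hc1 y
      nlinarith [sq_nonneg (‖c y‖ - 1), norm_nonneg (c y)]

/-- Extension theorem for vector-valued Baire one functions:
given a metric space `X`, a closed set `F ⊆ X`, a normed linear space `Z` and a Baire one
function `L : F → Z`, there is a continuous function `A : X \ F → Z` satisfying the
non-tangential condition (NT), the continuity condition (C) and the boundedness condition (B). -/
theorem baire_one_extension
    {X : Type*} [MetricSpace X] {Z : Type*} [NormedAddCommGroup Z] [NormedSpace ℝ Z]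
    (F : Set X) (hF : IsClosed F) (L : X → Z) (hL : BaireOneOn L F) :
    ∃ A : X → Z, ContinuousOn A Fᶜ ∧
      -- (NT)
      (∀ a ∈ frontier F,
        Tendsto (fun x => ‖A x - L a‖ * (Metric.infDist x F / dist x a))
          (𝓝[Fᶜ] a) (𝓝 0)) ∧
      -- (C)
      (∀ a ∈ frontier F, ContinuousWithinAt L F a →
        Tendsto A (𝓝[Fᶜ] a) (𝓝 (L a))) ∧
      -- (B)
      (∀ a ∈ F, ∀ r : ℝ≥0∞, 0 < r →
        (∃ M : ℝ, ∀ x ∈ EMetric.ball a (12 * r) ∩ F, ‖L x‖ ≤ M) →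
        (∃ M : ℝ, ∀ x ∈ EMetric.ball a r \ F, ‖A x‖ ≤ M)) := by
  rcases F.eq_empty_or_nonempty with rfl | hne
  · exact ⟨0, continuousOn_const, by simp, by simp, by simp⟩
  obtain ⟨c, hNT, hC, hBtop, hB⟩ := exists_discontinuous_extension hF hne L hL
  obtain ⟨A, hAc, hA⟩ := exists_continuousOn_average hF hne c
  have hpos : ∀ y ∉ F, 0 < infDist y F := fun y hy => (hF.notMem_iff_infDist_pos hne).1 hy
  -- Closed balls are convex, so estimates for `c` near `x` pass to `A x`.
  have hconv : ∀ x ∉ F, ∀ (z : Z) (R : ℝ),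
      (∀ y ∉ F, dist y x < infDist x F / 4 → ‖c y - z‖ ≤ R) → ‖A x - z‖ ≤ R := by
    intro x hx z R h
    have hsub : convexHull ℝ (c '' {y | y ∉ F ∧ dist y x < infDist x F / 4}) ⊆
        closedBall z R := by
      apply convexHull_min _ (convex_closedBall z R)
      rintro _ ⟨y, ⟨hy, hyx⟩, rfl⟩
      rw [mem_closedBall, dist_eq_norm]
      exact h y hy hyx
    have := hsub (hA x hx)
    rwa [mem_closedBall, dist_eq_norm] at this
  have hdist : ∀ a ∈ F, ∀ x y, dist y x < infDist x F / 4 → dist y a ≤ 5 / 4 * dist x a := by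
    intro a ha x y hyx
    have h1 : infDist x F ≤ dist x a := infDist_le_dist_of_mem ha
    have h2 := dist_triangle y x a
    linarith
  refine ⟨A, hAc, ?_, ?_, ?_⟩
  · intro a ha
    have haF : a ∈ F := hF.frontier_subset ha
    rw [Metric.tendsto_nhdsWithin_nhds]
    intro ε hε
    obtain ⟨η, hη, h⟩ := hNT a haF (ε / 2) (by positivity)
    refine ⟨η / 2, by positivity, fun x hx hxa => ?_⟩
    have hδ := hpos x hx
    have hxa0 : 0 < dist x a := hδ.trans_le (infDist_le_dist_of_mem haF)
    have hAx : ‖A x - L a‖ ≤ 5 / 6 * ε * (dist x a / infDist x F) := by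
      refine hconv x hx _ _ fun y hy hyx => ?_
      have h1 := hdist a haF x y hyx
      have h2 := h y hy (by linarith)
      have h3 : 3 / 4 * infDist x F ≤ infDist y F := by
        have := infDist_le_infDist_add_dist (s := F) (x := x) (y := y)
        rw [dist_comm] at this
        linarith
      have h4 : ‖c y - L a‖ * (3 / 4 * infDist x F) ≤ ε / 2 * (5 / 4 * dist x a) :=
        (mul_le_mul_of_nonneg_left h3 (norm_nonneg _)).trans (h2.trans (by gcongr))
      rw [← mul_div_assoc, le_div_iff₀ hδ]
      linarith
    rw [Real.dist_eq, sub_zero, abs_of_nonneg (by positivity)]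
    calc ‖A x - L a‖ * (infDist x F / dist x a)
        ≤ 5 / 6 * ε * (dist x a / infDist x F) * (infDist x F / dist x a) := by gcongr
      _ = 5 / 6 * ε := by field_simp
      _ < ε := by linarith
  · intro a ha hcont
    have haF : a ∈ F := hF.frontier_subset ha
    rw [Metric.tendsto_nhdsWithin_nhds]
    intro ε hε
    obtain ⟨η, hη, h⟩ := hC a haF hcont (ε / 2) (by positivity)
    refine ⟨η / 2, by positivity, fun x hx hxa => ?_⟩
    have hAx : ‖A x - L a‖ ≤ ε / 2 := hconv x hx _ _ fun y hy hyx =>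
      h y hy (by have := hdist a haF x y hyx; linarith)
    rw [dist_eq_norm]
    linarith
  · rintro a ha r hr ⟨M, hM⟩
    rcases eq_or_ne r ⊤ with rfl | hrt
    · refine ⟨M, fun x hx => ?_⟩
      have hM' : ∀ x ∈ F, ‖L x‖ ≤ M := fun x hx =>
        hM x ⟨show edist x a < 12 * ⊤ by simp [ENNReal.mul_top, edist_lt_top], hx⟩
      simpa using hconv x hx.2 0 M fun y hy _ => by simpa using hBtop M hM' y hy
    · lift r to NNReal using hrt
      have hr0 : 0 < (r : ℝ) := by exact_mod_cast hr
      obtain ⟨M', hM'⟩ := hB a ha r hr0 M fun x hx hxa => hM x ⟨by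
        change edist x a < 12 * r
        rw [edist_nndist, ← ENNReal.coe_ofNat, ← ENNReal.coe_mul,
          ENNReal.coe_lt_coe, ← NNReal.coe_lt_coe]
        simpa using hxa, hx⟩
      refine ⟨M', fun x hx => ?_⟩
      have hxa : dist x a < r := by
        have : edist x a < r := hx.1
        rw [edist_nndist, ENNReal.coe_lt_coe, ← NNReal.coe_lt_coe] at this
        simpa using this
      simpa using hconv x hx.2 0 M' fun y hy hyx => by
        simpa using hM' y hy (by have := hdist a ha x y hyx; linarith)
end

section
/- Let X and Y be normed linear spaces, F ⊆ X a closed set, f : F → Y an arbitrary function and L : F → L(X,Y) a Baire one function. Then there exists a function f̄ : X → Y such that: (i) f̄ = f on F; (ii) if a ∈ F and f is continuous at a with respect to F, then f̄ is continuous at a; (iii) if a ∈ F, α ∈ (0,1] and f is α-Hölder continuous at a with respect to F, then f̄ is α-Hölder continuous at a with respect to X (in particular, if f is Lipschitz at a with respect to F, then f̄ is Lipschitz at a); (iv) if a ∈ F and L(a) is a relative Fréchet derivative of f at a with respect to F, then f̄ is Fréchet differentiable at a with derivative L(a); (v) f̄ is continuous on X \ F. -/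
/-!
Off `F` the extension is a continuous selection of convex combinations of the affine maps
`x ↦ f (p y) + A y (x - p y)`, for `y ∉ F` close to `x` relative to `infDist y F`. Here `p y ∈ F` is
an almost nearest point to `y`, and `A y` is an operator replacing the derivative near `y`.
For `a ∈ F` and an operator `q`,
`f (p y) + A y (x - p y) - f a - q (x - a) = (f (p y) - f a - q (p y - a)) + (A y - q) (x - p y)`,
where `‖p y - a‖` is `O(‖x - a‖)` and `‖x - p y‖` is `O(infDist y F)`. Taking `q = L a` gives
differentiability, and `q = 0` gives continuity and Hölder continuity, provided that
`‖A y - L a‖ * infDist y F = o(‖y - a‖)` as `y → a`, for every `a ∈ F`.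

Such an `A` exists because `L` is the limit of continuous `g n` (`exists_baire_approx`): put
`A y = g n (p y)` with `n ≤ 1 / infDist y F` the largest index for which `g n` oscillates by at most
`1 / (n + 1)`, and has norm at most `√n`, on the points of `F` within `(n + 2) * infDist y F` of `y`.
This index tends to infinity as `y → a`, since that ball lies in the ball around `a` of radius
`(n + 3) * ‖y - a‖`. If `a` belongs to the ball around `y`, then `A y` is close to `g n a`, hence to
`L a`; otherwise `infDist y F < ‖y - a‖ / (n + 2)`, which outweighs the bound `√n` on `‖A y‖`.
-/

open Filter Metric Set Topology

/-- `f` is `α`-Hölder continuous at `a` with respect to `A`: either `a` is isolated in `A`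
or the corresponding `limsup` is finite; equivalently, there are `K` and `δ > 0` bounding
the increments of `f` on `A` near `a`. -/
def HolderAtWithin {X : Type*} [NormedAddCommGroup X] {Y : Type*} [NormedAddCommGroup Y]
    (f : X → Y) (A : Set X) (α : ℝ) (a : X) : Prop :=
  ∃ K : ℝ, ∃ δ : ℝ, 0 < δ ∧ ∀ x ∈ A, ‖x - a‖ < δ → ‖f x - f a‖ ≤ K * ‖x - a‖ ^ α

/-- Off `F` there is a function `A` such that `‖A x - L a‖` is negligible against
`dist x a / infDist x F` as `x → a`, for every `a ∈ F`. Its values are of the form `g n (p x)`. -/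
lemma exists_baire_approx {X Z : Type*} [PseudoMetricSpace X] [NormedAddCommGroup Z]
    (F : Set X) (L : X → Z) (hL : BaireOneOn L F) (p : X → X)
    (hp : ∀ x ∉ F, p x ∈ F ∧ dist (p x) x ≤ 2 * infDist x F)
    (hpos : ∀ x ∉ F, 0 < infDist x F) :
    ∃ A : X → Z, ∀ a ∈ F, ∀ ε > 0, ∃ δ > 0, ∀ x ∉ F, dist x a < δ →
      ‖A x - L a‖ * infDist x F ≤ ε * dist x a := by
  classical
  obtain ⟨g₀, hc₀, hl₀⟩ := hL
  -- Replacing `g₀ 0` by `0` makes the index `0` always admissible.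
  obtain ⟨g, hg0, hc, hl⟩ : ∃ g : ℕ → X → Z, g 0 = 0 ∧ (∀ n, ContinuousOn (g n) F) ∧
      ∀ x ∈ F, Tendsto (fun n => g n x) atTop (𝓝 (L x)) := by
    refine ⟨fun n => if n = 0 then 0 else g₀ n, by simp, fun n => ?_, fun x hx => ?_⟩
    · by_cases h : n = 0
      · simp only [h, if_true]
        exact (continuousOn_const : ContinuousOn (fun _ : X => (0 : Z)) F)
      · simpa [h] using hc₀ n
    · refine (hl₀ x hx).congr' ?_
      filter_upwards [eventually_ne_atTop 0] with n hn
      simp [hn]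
  let P : X → ℕ → Prop := fun x n => ∀ z ∈ F, dist z x ≤ (n + 2) * infDist x F →
    ‖g n z‖ ≤ √n ∧ ∀ w ∈ F, dist w x ≤ (n + 2) * infDist x F → ‖g n z - g n w‖ ≤ 1 / (n + 1)
  have hP0 : ∀ x, P x 0 := by
    intro x z _ _
    simp [hg0]
  let N : X → ℕ := fun x => Nat.findGreatest (P x) ⌊1 / infDist x F⌋₊
  have hPN : ∀ x, P x (N x) := fun x =>
    Nat.findGreatest_spec (P := P x) (Nat.zero_le _) (hP0 x)
  refine ⟨fun x => g (N x) (p x), fun a ha ε hε => ?_⟩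
  have hsqrt : Tendsto (fun n : ℕ => √(n : ℝ)) atTop atTop :=
    Real.tendsto_sqrt_atTop.comp tendsto_natCast_atTop_atTop
  have e1 : ∀ᶠ n : ℕ in atTop, ‖g n a - L a‖ < ε / 2 := by
    have := (tendsto_iff_norm_sub_tendsto_zero.1 (hl a ha))
    exact this.eventually_lt_const (by positivity)
  have e2 : ∀ᶠ n : ℕ in atTop, 1 / ((n : ℝ) + 1) < ε / 2 :=
    tendsto_one_div_add_atTop_nhds_zero_nat.eventually_lt_const (by positivity)
  have e3 : ∀ᶠ n : ℕ in atTop, √(n : ℝ) + ‖L a‖ ≤ ε * (n + 2) := by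
    filter_upwards [hsqrt.eventually_ge_atTop 1,
      hsqrt.eventually_ge_atTop ((1 + ‖L a‖) / ε)] with n h1 h2
    rw [div_le_iff₀ hε] at h2
    have h3 : √(n : ℝ) * √(n : ℝ) = n := Real.mul_self_sqrt (Nat.cast_nonneg n)
    have h4 := mul_le_mul_of_nonneg_right h2 (Real.sqrt_nonneg (n : ℝ))
    have h5 := mul_le_mul_of_nonneg_left h1 (norm_nonneg (L a))
    nlinarith
  obtain ⟨m₀, hm₀⟩ := eventually_atTop.1 (e1.and (e2.and e3))
  have e4 : ∀ᶠ n : ℕ in atTop, ‖g n a‖ + 1 < √(n : ℝ) := by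
    have h := (hl a ha).norm.eventually_lt_const (lt_add_one ‖L a‖)
    filter_upwards [h, hsqrt.eventually_gt_atTop (‖L a‖ + 2)] with n h1 h2
    linarith
  obtain ⟨m, hm4, hm⟩ := (e4.and (eventually_ge_atTop m₀)).exists
  have hm1 : (0 : ℝ) < 1 / (m + 1) := by positivity
  have hm1' : 1 / ((m : ℝ) + 1) ≤ 1 := by
    rw [div_le_one (by positivity)]; linarith [(Nat.cast_nonneg m : (0 : ℝ) ≤ m)]
  obtain ⟨r, hr, hrg⟩ := Metric.continuousWithinAt_iff.1 (hc m a ha) _ (half_pos hm1)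
  refine ⟨min (r / (m + 3)) (1 / (m + 1)), by positivity, fun x hx hxa => ?_⟩
  have hd := hpos x hx
  have hda : infDist x F ≤ dist x a := infDist_le_dist_of_mem ha
  have hx1 : dist x a * (m + 3) < r := by
    rw [← lt_div_iff₀ (by positivity)]; exact hxa.trans_le (min_le_left _ _)
  have hx2 : dist x a < 1 / (m + 1) := hxa.trans_le (min_le_right _ _)
  have hnear : ∀ z ∈ F, dist z x ≤ (m + 2) * infDist x F →
      ‖g m z - g m a‖ < 1 / (m + 1) / 2 := by
    intro z hz hzx
    rw [← dist_eq_norm]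
    refine hrg hz ?_
    have h1 := dist_triangle z x a
    have h2 : ((m : ℝ) + 2) * infDist x F ≤ (m + 2) * dist x a := by gcongr
    linarith
  have hPm : P x m := by
    intro z hz hzx
    have h1 := hnear z hz hzx
    refine ⟨?_, fun w hw hwx => ?_⟩
    · have := norm_le_norm_add_norm_sub' (g m z) (g m a)
      linarith
    · have h2 := hnear w hw hwx
      have h3 := norm_sub_le_norm_sub_add_norm_sub (g m z) (g m a) (g m w)
      rw [norm_sub_rev (g m a)] at h3
      linarith
  have hmN : m ≤ N x := by
    refine Nat.le_findGreatest (Nat.le_floor ?_) hPm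
    rw [le_div_iff₀ hd]
    have h1 : infDist x F < 1 / (m + 1) := hda.trans_lt hx2
    rw [lt_div_iff₀ (by positivity)] at h1
    linarith
  obtain ⟨k1, k2, k3⟩ := hm₀ (N x) (hm.trans hmN)
  set n := N x with hn
  have hpx : dist (p x) x ≤ (n + 2) * infDist x F := by
    refine (hp x hx).2.trans ?_
    gcongr
    linarith [(Nat.cast_nonneg n : (0 : ℝ) ≤ n)]
  obtain ⟨q1, q2⟩ := hPN x (p x) (hp x hx).1 hpx
  rw [← hn] at q1 q2
  change ‖g n (p x) - L a‖ * infDist x F ≤ ε * dist x a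
  by_cases hcase : dist a x ≤ (n + 2) * infDist x F
  · have h1 := q2 a ha hcase
    have h2 := norm_sub_le_norm_sub_add_norm_sub (g n (p x)) (g n a) (L a)
    have h3 : ‖g n (p x) - L a‖ ≤ ε := by linarith
    gcongr
  · rw [not_le, dist_comm] at hcase
    have h1 : ‖g n (p x) - L a‖ ≤ ε * (n + 2) := (norm_sub_le _ _).trans (by linarith)
    calc ‖g n (p x) - L a‖ * infDist x F ≤ ε * (n + 2) * infDist x F := by gcongr
      _ = ε * ((n + 2) * infDist x F) := by ring
      _ ≤ ε * dist x a := by gcongr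

/-- The extension, with the one estimate from which all its properties at points of `F` follow: the
error at `x` of the affine approximation with linear part `q` is controlled by its errors on `F`
within `7 * ‖x - a‖` of `a`. -/
lemma exists_extension_estimate {X : Type*} [NormedAddCommGroup X] [NormedSpace ℝ X]
    {Y : Type*} [NormedAddCommGroup Y] [NormedSpace ℝ Y]
    (F : Set X) (hF : IsClosed F) (hne : F.Nonempty) (f : X → Y) (L : X → X →L[ℝ] Y)
    (hL : BaireOneOn L F) :
    ∃ fbar : X → Y, (∀ x ∈ F, fbar x = f x) ∧ ContinuousOn fbar Fᶜ ∧
      ∀ a ∈ F, ∀ ε > 0, ∃ δ > 0, ∀ x, ‖x - a‖ < δ → ∀ (q : X →L[ℝ] Y) (r : ℝ),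
        (∀ z ∈ F, ‖z - a‖ ≤ 7 * ‖x - a‖ → ‖f z - f a - q (z - a)‖ ≤ r) →
        ‖fbar x - f a - q (x - a)‖ ≤ r + 6 * (ε + ‖L a - q‖) * ‖x - a‖ := by
  classical
  have hpos : ∀ x ∉ F, 0 < infDist x F := fun x hx => (hF.notMem_iff_infDist_pos hne).1 hx
  have hex : ∀ x, ∃ y, x ∉ F → y ∈ F ∧ dist y x ≤ 2 * infDist x F := by
    intro x
    by_cases hx : x ∈ F
    · exact ⟨x, fun h => absurd hx h⟩
    · have h2 : infDist x F < 2 * infDist x F := by linarith [hpos x hx]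
      obtain ⟨y, hy, hxy⟩ := (infDist_lt_iff hne).1 h2
      exact ⟨y, fun _ => ⟨hy, by rw [dist_comm]; exact hxy.le⟩⟩
  choose p hp using hex
  obtain ⟨A, hA⟩ := exists_baire_approx F L hL p hp hpos
  let G : X → X → Y := fun y x => f (p y) + A y (x - p y)
  let t : ↥Fᶜ → Set Y := fun x =>
    convexHull ℝ {v | ∃ y, y ∉ F ∧ dist (x : X) y < infDist y F / 4 ∧ v = G y x}
  obtain ⟨s, hs⟩ : ∃ s : C(↥Fᶜ, Y), ∀ x, s x ∈ t x := by
    refine exists_continuous_forall_mem_convex_of_local (fun x => convex_convexHull ℝ _) ?_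
    intro x
    have hx := hpos x x.2
    refine ⟨{z | dist (z : X) x < infDist (x : X) F / 4}, ?_, fun z => G x z, ?_, ?_⟩
    · refine IsOpen.mem_nhds (isOpen_lt (by fun_prop) continuous_const) ?_
      simpa using hx
    · exact Continuous.continuousOn (by fun_prop)
    · intro z hz
      exact subset_convexHull ℝ _ ⟨x, x.2, hz, rfl⟩
  refine ⟨fun x => if h : x ∈ F then f x else s ⟨x, h⟩, fun x hx => by simp [hx], ?_, ?_⟩
  · rw [continuousOn_iff_continuous_domRestrict]
    convert s.continuous using 1
    ext x
    have : (x : X) ∉ F := x.2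
    simp [this]
  intro a ha ε hε
  obtain ⟨δ, hδ, hAδ⟩ := hA a ha ε hε
  refine ⟨δ / 2, by positivity, fun x hxa q r hr => ?_⟩
  have hna := norm_nonneg (x - a)
  by_cases hx : x ∈ F
  · have h1 := hr x hx (by linarith)
    have h2 : 0 ≤ 6 * (ε + ‖L a - q‖) * ‖x - a‖ := by positivity
    simp only [hx, dite_true]
    linarith
  simp only [hx, dite_false]
  have hsub : t ⟨x, hx⟩ ⊆
      closedBall (f a + q (x - a)) (r + 6 * (ε + ‖L a - q‖) * ‖x - a‖) := by
    refine convexHull_min ?_ (convex_closedBall _ _)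
    rintro v ⟨y, hy, hxy, rfl⟩
    change dist x y < infDist y F / 4 at hxy
    change G y x ∈ _
    obtain ⟨hpF, hpd⟩ := hp y hy
    have hdy := hpos y hy
    have hyd : infDist y F ≤ infDist x F + dist y x := infDist_le_infDist_add_dist
    have hxd : infDist x F ≤ dist x a := infDist_le_dist_of_mem ha
    have hxa' : dist x a = ‖x - a‖ := dist_eq_norm x a
    have hyx : dist y x = dist x y := dist_comm y x
    have hya : dist y a ≤ 2 * ‖x - a‖ := by
      have := dist_triangle y x a
      linarith
    have hpx : ‖x - p y‖ ≤ 3 * infDist y F := by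
      rw [← dist_eq_norm]
      have := dist_triangle x y (p y)
      rw [dist_comm y (p y)] at this
      linarith
    have hpa : ‖p y - a‖ ≤ 7 * ‖x - a‖ := by
      have := norm_sub_le_norm_sub_add_norm_sub (p y) x a
      rw [norm_sub_rev (p y) x] at this
      linarith
    have h1 := hr (p y) hpF hpa
    have h2 := hAδ y hy (by linarith)
    have h3 : ‖(A y - q) (x - p y)‖ ≤ 6 * (ε + ‖L a - q‖) * ‖x - a‖ := by
      have h4 : ‖A y - q‖ ≤ ‖A y - L a‖ + ‖L a - q‖ :=
        norm_sub_le_norm_sub_add_norm_sub _ _ _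
      calc ‖(A y - q) (x - p y)‖ ≤ ‖A y - q‖ * ‖x - p y‖ := (A y - q).le_opNorm _
        _ ≤ (‖A y - L a‖ + ‖L a - q‖) * (3 * infDist y F) := by gcongr
        _ = 3 * (‖A y - L a‖ * infDist y F) + 3 * (‖L a - q‖ * infDist y F) := by ring
        _ ≤ 3 * (ε * (2 * ‖x - a‖)) + 3 * (‖L a - q‖ * (2 * ‖x - a‖)) := by
          have h6 : infDist y F ≤ 2 * ‖x - a‖ := by linarith
          have h7 : ‖A y - L a‖ * infDist y F ≤ ε * (2 * ‖x - a‖) := h2.trans (by gcongr)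
          exact add_le_add (mul_le_mul_of_nonneg_left h7 (by norm_num)) (by gcongr)
        _ = _ := by ring
    have h5 : G y x - (f a + q (x - a)) =
        (f (p y) - f a - q (p y - a)) + (A y - q) (x - p y) := by
      simp only [G, sub_apply, map_sub]
      abel
    rw [mem_closedBall, dist_eq_norm, h5]
    exact (norm_add_le _ _).trans (add_le_add h1 h3)
  have := hsub (hs ⟨x, hx⟩)
  rwa [mem_closedBall, dist_eq_norm, ← sub_sub] at this

/-- Extension theorem for vector-valued functions on a closed subset of a normed linear space,
with preservation of points of continuity, Hölder/Lipschitz points and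
pre-assigned relative Fréchet derivatives. -/
theorem extension_preserving_derivatives_infinite_dim
    {X : Type*} [NormedAddCommGroup X] [NormedSpace ℝ X]
    {Y : Type*} [NormedAddCommGroup Y] [NormedSpace ℝ Y]
    (F : Set X) (hF : IsClosed F) (f : X → Y) (L : X → X →L[ℝ] Y)
    (hL : BaireOneOn L F) :
    ∃ fbar : X → Y,
      -- (i)
      (∀ x ∈ F, fbar x = f x) ∧
      -- (ii)
      (∀ a ∈ F, ContinuousWithinAt f F a → ContinuousAt fbar a) ∧
      -- (iii)
      (∀ a ∈ F, ∀ α : ℝ, α ∈ Set.Ioc (0 : ℝ) 1 →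
        HolderAtWithin f F α a → HolderAtWithin fbar Set.univ α a) ∧
      -- (iv)
      (∀ a ∈ F, HasFDerivWithinAt f (L a) F a → HasFDerivAt fbar (L a) a) ∧
      -- (v)
      ContinuousOn fbar Fᶜ := by
  rcases F.eq_empty_or_nonempty with rfl | hne
  · exact ⟨fun _ => 0, by simp, by simp, by simp, by simp, continuousOn_const⟩
  obtain ⟨fbar, hfF, hcont, hest⟩ := exists_extension_estimate F hF hne f L hL
  refine ⟨fbar, hfF, ?_, ?_, ?_, hcont⟩
  · intro a ha hca
    rw [Metric.continuousAt_iff]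
    intro η hη
    obtain ⟨δ, hδ, hδe⟩ := hest a ha 1 one_pos
    obtain ⟨ρ, hρ, hρf⟩ := Metric.continuousWithinAt_iff.1 hca (η / 2) (by positivity)
    have hC : 0 < 6 * (1 + ‖L a‖) := by positivity
    refine ⟨min δ (min (ρ / 7) (η / 2 / (6 * (1 + ‖L a‖)))), by positivity, fun x hx => ?_⟩
    rw [dist_eq_norm, lt_min_iff, lt_min_iff, lt_div_iff₀ hC] at hx
    obtain ⟨hx1, hx2, hx3⟩ := hx
    have h := hδe x hx1 0 (η / 2) fun z hz hza => by
      have := hρf hz (by rw [dist_eq_norm]; linarith)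
      rw [dist_eq_norm] at this
      simpa using this.le
    simp only [zero_apply, sub_zero] at h
    rw [dist_eq_norm, hfF a ha]
    linarith
  · rintro a ha α ⟨hα0, hα1⟩ ⟨K, ρ, hρ, hK⟩
    obtain ⟨δ, hδ, hδe⟩ := hest a ha 1 one_pos
    refine ⟨|K| * 7 ^ α + 6 * (1 + ‖L a‖), min δ (min (ρ / 7) 1), by positivity,
      fun x _ hx => ?_⟩
    rw [lt_min_iff, lt_min_iff] at hx
    obtain ⟨hx1, hx2, hx3⟩ := hx
    have h := hδe x hx1 0 (|K| * (7 * ‖x - a‖) ^ α) fun z hz hza => by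
      have := hK z hz (by linarith)
      simp only [zero_apply, sub_zero]
      refine this.trans ?_
      gcongr
      exact le_abs_self K
    simp only [zero_apply, sub_zero] at h
    rw [hfF a ha]
    have h1 : ‖x - a‖ ≤ ‖x - a‖ ^ α :=
      Real.self_le_rpow_of_le_one (norm_nonneg _) hx3.le hα1
    rw [Real.mul_rpow (by norm_num) (norm_nonneg _)] at h
    have h2 : 6 * (1 + ‖L a‖) * ‖x - a‖ ≤ 6 * (1 + ‖L a‖) * ‖x - a‖ ^ α := by gcongr
    linarith
  · intro a ha hda
    rw [hasFDerivAt_iff_isLittleO, Asymptotics.isLittleO_iff]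
    intro c hc
    rw [hasFDerivWithinAt_iff_isLittleO, Asymptotics.isLittleO_iff] at hda
    obtain ⟨ρ, hρ, hρf⟩ := Metric.eventually_nhds_iff.1
      (eventually_nhdsWithin_iff.1 (hda (show 0 < c / 14 by positivity)))
    obtain ⟨δ, hδ, hδe⟩ := hest a ha (c / 12) (by positivity)
    rw [Metric.eventually_nhds_iff]
    refine ⟨min δ (ρ / 7), by positivity, fun x hx => ?_⟩
    rw [dist_eq_norm, lt_min_iff] at hx
    obtain ⟨hx1, hx2⟩ := hx
    have h := hδe x hx1 (L a) (c / 14 * (7 * ‖x - a‖)) fun z hz hza => by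
      have := hρf (show dist z a < ρ by rw [dist_eq_norm]; linarith) hz
      refine this.trans ?_
      gcongr
    rw [sub_self, norm_zero] at h
    rw [hfF a ha]
    linarith
end

section
/- Let X and Y be normed linear spaces, F ⊆ X a closed set, f : F → Y an arbitrary function, L : F → L(X,Y) a Baire one function, and p ∈ ℕ ∪ {∞}. Suppose X admits C^p-smooth partition of unity. Then there exists a function f̄ : X → Y such that: (i) f̄ = f on F; (ii) if a ∈ F and f is continuous at a with respect to F, then f̄ is continuous at a; (iii) if a ∈ F, α ∈ (0,1] and f is α-Hölder continuous at a with respect to F, then f̄ is α-Hölder continuous at a with respect to X; (iv) if a ∈ F and L(a) is a relative Fréchet derivative of f at a with respect to F, then f̄ is Fréchet differentiable at a with derivative L(a); and (v) f̄ restricted to the open set X \ F is p-times continuously (Fréchet) differentiable. -/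
/-!
The extension is of Whitney type. Off `F`, with `d = infDist · F`, take a locally finite
nonnegative `C^p` partition of unity `φ i` whose members live in balls `B(c i, d (c i) / 2)`
(`exists_whitney_partition`), let `π z ∈ F` be a point with `‖z - π z‖ ≤ 2 d z`, and set
`fbar x = ∑ φ i x • (f (π (c i)) + A (c i) (x - π (c i)))`.

The operators `A z` come from the Baire one field `L` and satisfy
`‖A z - L a‖ * d z = o(‖z - a‖)` as `z → a`, for every `a ∈ F` (`exists_operator_field_off`).
When `φ i x ≠ 0`, the points `c i` and `π (c i)` are within a constant times `‖x - a‖` of `a`, and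
`‖x - π (c i)‖` is at most a constant times `d (c i)`. So each affine piece differs from `f a` by an
increment of `f` on `F` plus `O(‖x - a‖)`, which gives continuity and Hölder continuity; and it
differs from `f a + L a (x - a)` by
`(f (π (c i)) - f a - L a (π (c i) - a)) + (A (c i) - L a) (x - π (c i))`, which is `o(‖x - a‖)`
where `L a` is a relative derivative. Convexity of balls carries these bounds over to `fbar`.
-/

open Filter Metric Set Topology

/-- `{ψ γ}` is a locally finite partition of unity in the set `U`. -/
def IsLocFinPartitionOfUnityIn {X : Type*} [TopologicalSpace X] {Γ : Type*}
    (ψ : Γ → X → ℝ) (U : Set X) : Prop :=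
  (∀ x ∈ U, ∑ᶠ γ, ψ γ x = 1) ∧
  ∀ y ∈ U, ∃ V ∈ 𝓝 y, {γ | ∃ x ∈ V, ψ γ x ≠ 0}.Finite

/-- `{ψ γ}` is subordinated to the open cover `𝒰`. -/
def IsSubordinateTo {X : Type*} [TopologicalSpace X] {Γ : Type*}
    (ψ : Γ → X → ℝ) (𝒰 : Set (Set X)) : Prop :=
  ∀ γ, ∃ V ∈ 𝒰, tsupport (ψ γ) ⊆ V

/-- `X` admits `C^p`-smooth partition of unity: every open cover of `X` has a subordinated
locally finite partition of unity consisting of `C^p`-smooth functions. -/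
def AdmitsCpPartitionOfUnity (p : ℕ∞) (X : Type*)
    [NormedAddCommGroup X] [NormedSpace ℝ X] : Prop :=
  ∀ 𝒰 : Set (Set X), (∀ V ∈ 𝒰, IsOpen V) → ⋃₀ 𝒰 = Set.univ →
    ∃ (Γ : Type) (ψ : Γ → X → ℝ),
      (∀ γ, ContDiff ℝ p (ψ γ)) ∧
      IsLocFinPartitionOfUnityIn ψ Set.univ ∧
      IsSubordinateTo ψ 𝒰

/-- A Baire one operator field `L` on `F` is the boundary value of an operator field `A` off `F`,
in the sense that `‖A z - L a‖ * dist(z, F) = o(‖z - a‖)` as `z → a` for every `a ∈ F`. If `L` is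
the limit of `g n`, one takes `A z = g n (π z)` with `π z` an almost nearest point of `F` and `n` the
largest index up to `1 / dist(z, F)` such that `g n` oscillates by at most `1 / n` on a ball around
`π z` which is large compared with `dist(z, F)` and `‖g n (π z)‖`. -/
lemma exists_operator_field_off
    {X : Type*} [NormedAddCommGroup X] [NormedSpace ℝ X]
    {Y : Type*} [NormedAddCommGroup Y] [NormedSpace ℝ Y]
    (F : Set X) (L : X → X →L[ℝ] Y) (hL : BaireOneOn L F) (π : X → X)
    (hπF : ∀ z, π z ∈ F) (hd : ∀ z ∉ F, 0 < infDist z F)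
    (hπ : ∀ z ∉ F, ‖z - π z‖ ≤ 2 * infDist z F) :
    ∃ A : X → X →L[ℝ] Y, ∀ a ∈ F, ∀ ε > 0, ∃ δ > 0, ∀ z ∉ F, ‖z - a‖ < δ →
      ‖A z - L a‖ * infDist z F ≤ ε * ‖z - a‖ := by
  classical
  obtain ⟨g, hgc, hgl⟩ := hL
  let P : X → ℕ → Prop := fun z n => ∀ y ∈ F,
    ‖y - π z‖ ≤ n * infDist z F * (1 + ‖g n (π z)‖) → ‖g n y - g n (π z)‖ * n ≤ 1
  let N : X → ℕ := fun z => Nat.findGreatest (P z) ⌊1 / infDist z F⌋₊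
  have hda : ∀ a ∈ F, ∀ z, infDist z F ≤ ‖z - a‖ := fun a ha z => by
    rw [← dist_eq_norm]; exact infDist_le_dist_of_mem ha
  have hπa : ∀ a ∈ F, ∀ z ∉ F, ‖π z - a‖ ≤ 3 * ‖z - a‖ := fun a ha z hz => by
    have h1 := hπ z hz
    have h2 := hda a ha z
    have h3 : ‖π z - a‖ ≤ ‖z - a‖ + ‖z - π z‖ := by
      rw [show π z - a = (z - a) - (z - π z) by abel]; exact norm_sub_le _ _
    linarith
  -- The chosen index tends to infinity as `z` approaches a point of `F`.
  have hN : ∀ a ∈ F, ∀ M : ℕ, 1 ≤ M → ∃ δ > 0, ∀ z ∉ F, ‖z - a‖ < δ → M ≤ N z := by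
    intro a ha M hM
    have hM' : (1 : ℝ) ≤ M := by exact_mod_cast hM
    obtain ⟨δ, hδ, hδg⟩ := Metric.continuousOn_iff.1 (hgc M) a ha (1 / (2 * M)) (by positivity)
    have hC : 0 ≤ ‖g M a‖ := norm_nonneg _
    have hD : 0 < (M : ℝ) * (2 + ‖g M a‖) + 3 := by positivity
    refine ⟨min (δ / (M * (2 + ‖g M a‖) + 3)) (1 / M), by positivity, fun z hz hza => ?_⟩
    have hz1 : ‖z - a‖ * (M * (2 + ‖g M a‖) + 3) < δ :=
      (lt_div_iff₀ hD).1 (hza.trans_le (min_le_left _ _))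
    have hz2 : ‖z - a‖ < 1 / M := hza.trans_le (min_le_right _ _)
    have hdz := hd z hz
    have hdza := hda a ha z
    have hpz := hπa a ha z hz
    have hcl : ∀ y ∈ F, ‖y - a‖ < δ → ‖g M y - g M a‖ < 1 / (2 * M) := fun y hy hya => by
      have := hδg y hy (by rwa [dist_eq_norm])
      rwa [dist_eq_norm] at this
    have hprod : 0 ≤ ‖z - a‖ * (M * (2 + ‖g M a‖)) := by positivity
    have hp := hcl (π z) (hπF z) (by linarith)
    have hhalf : (1 : ℝ) / (2 * M) ≤ 1 := by
      rw [div_le_one (by positivity)]; linarith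
    have hgp : ‖g M (π z)‖ ≤ ‖g M a‖ + 1 := by
      have := norm_le_norm_add_norm_sub' (g M (π z)) (g M a)
      linarith
    refine Nat.le_findGreatest ?_ ?_
    · apply Nat.le_floor
      rw [le_div_iff₀ hdz]
      have : (M : ℝ) * ‖z - a‖ < 1 := by
        rw [lt_div_iff₀ (by positivity)] at hz2; linarith
      nlinarith
    · intro y hy hyπ
      have h1 : (M : ℝ) * infDist z F * (1 + ‖g M (π z)‖) ≤ ‖z - a‖ * (M * (2 + ‖g M a‖)) := by
        calc (M : ℝ) * infDist z F * (1 + ‖g M (π z)‖)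
            ≤ M * ‖z - a‖ * (2 + ‖g M a‖) :=
              mul_le_mul (by gcongr) (by linarith) (by positivity) (by positivity)
          _ = _ := by ring
      have h2 : ‖y - a‖ ≤ ‖y - π z‖ + ‖π z - a‖ := norm_sub_le_norm_sub_add_norm_sub _ _ _
      have h3 := hcl y hy (by linarith)
      have h4 : ‖g M y - g M (π z)‖ ≤ ‖g M y - g M a‖ + ‖g M (π z) - g M a‖ := by
        rw [norm_sub_rev (g M (π z))]; exact norm_sub_le_norm_sub_add_norm_sub _ _ _
      have h5 : ‖g M y - g M (π z)‖ ≤ 1 / M := by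
        have : (1 : ℝ) / (2 * M) + 1 / (2 * M) = 1 / M := by field_simp; norm_num
        linarith
      rwa [le_div_iff₀ (by positivity)] at h5
  refine ⟨fun z => g (N z) (π z), fun a ha ε hε => ?_⟩
  obtain ⟨M₁, hM₁⟩ := Metric.tendsto_atTop.1 (hgl a ha) (ε / 2) (by positivity)
  obtain ⟨M₂, hM₂⟩ := exists_nat_ge ((3 * (1 + ‖L a‖)) / ε)
  obtain ⟨M₃, hM₃⟩ := exists_nat_ge (2 / ε)
  obtain ⟨δ, hδ, hδN⟩ := hN a ha (M₁ + M₂ + M₃ + 1) (by omega)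
  refine ⟨δ, hδ, fun z hz hza => ?_⟩
  have hn := hδN z hz hza
  have hPn : P z (N z) := Nat.findGreatest_of_ne_zero (m := N z) rfl (by omega)
  show ‖g (N z) (π z) - L a‖ * infDist z F ≤ ε * ‖z - a‖
  generalize N z = n at hn hPn
  have hdz := hd z hz
  have hdza := hda a ha z
  have hn0 : (0 : ℝ) < n := by exact_mod_cast (by omega : 0 < n)
  have hn2 : 3 * (1 + ‖L a‖) ≤ n * ε := by
    rw [← div_le_iff₀ hε]; exact hM₂.trans (by exact_mod_cast (by omega : M₂ ≤ n))
  have hn3 : 2 ≤ n * ε := by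
    rw [← div_le_iff₀ hε]; exact hM₃.trans (by exact_mod_cast (by omega : M₃ ≤ n))
  by_cases hc : ‖a - π z‖ ≤ n * infDist z F * (1 + ‖g n (π z)‖)
  · have h1 := hPn a ha hc
    have h2 : ‖g n a - g n (π z)‖ ≤ ε / 2 := by
      refine le_of_mul_le_mul_right ?_ hn0
      linarith
    have h3 := hM₁ n (by omega)
    rw [dist_eq_norm] at h3
    have h4 : ‖g n (π z) - L a‖ ≤ ‖g n a - g n (π z)‖ + ‖g n a - L a‖ := by
      rw [norm_sub_rev (g n a)]; exact norm_sub_le_norm_sub_add_norm_sub _ _ _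
    exact mul_le_mul (by linarith) hdza hdz.le hε.le
  · -- Here `a` is far from `π z`, so `dist(z, F)` is small compared with `‖z - a‖`.
    push Not at hc
    have h1 : n * (infDist z F * (1 + ‖g n (π z)‖)) ≤ 3 * ‖z - a‖ := by
      have := hπa a ha z hz
      rw [norm_sub_rev] at this
      linarith
    have h2 : ‖g n (π z) - L a‖ ≤ (1 + ‖g n (π z)‖) * (1 + ‖L a‖) := by
      have := norm_sub_le (g n (π z)) (L a)
      nlinarith [norm_nonneg (g n (π z)), norm_nonneg (L a)]
    refine le_of_mul_le_mul_left ?_ hn0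
    calc n * (‖g n (π z) - L a‖ * infDist z F)
        ≤ n * ((1 + ‖g n (π z)‖) * (1 + ‖L a‖) * infDist z F) := by gcongr
      _ = n * (infDist z F * (1 + ‖g n (π z)‖)) * (1 + ‖L a‖) := by ring
      _ ≤ 3 * ‖z - a‖ * (1 + ‖L a‖) := by gcongr
      _ = 3 * (1 + ‖L a‖) * ‖z - a‖ := by ring
      _ ≤ n * ε * ‖z - a‖ := by gcongr
      _ = n * (ε * ‖z - a‖) := by ring

/-- Near each point of `U` the sum reduces to a fixed finite one, which is where local finiteness
enters. -/
lemma contDiffOn_finsum_of_locFin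
    {X : Type*} [NormedAddCommGroup X] [NormedSpace ℝ X]
    {Y : Type*} [NormedAddCommGroup Y] [NormedSpace ℝ Y] {I : Type*} {p : ℕ∞}
    {U : Set X} (hU : IsOpen U) (η : I → X → Y) (hη : ∀ i, ContDiffOn ℝ p (η i) U)
    (hfin : ∀ y ∈ U, ∃ V ∈ 𝓝 y, {i | ∃ x ∈ V, η i x ≠ 0}.Finite) :
    ContDiffOn ℝ p (fun x => ∑ᶠ i, η i x) U := by
  intro y hy
  obtain ⟨V, hV, hT⟩ := hfin y hy
  have hsum : ContDiffAt ℝ p (fun x => ∑ i ∈ hT.toFinset, η i x) y :=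
    ContDiffAt.sum fun i _ => (hη i).contDiffAt (hU.mem_nhds hy)
  refine (hsum.congr_of_eventuallyEq ?_).contDiffWithinAt
  filter_upwards [hV] with x hx
  refine finsum_eq_sum_of_support_subset _ fun i hi => ?_
  simpa using ⟨x, hx, hi⟩

/-- Off a closed set `F`, a space with `C^p`-smooth partitions of unity has a nonnegative one of
Whitney type: every `φ i` vanishes outside the closed ball of radius `dist(c i, F) / 2` around
`c i ∉ F`. For each `n`, a partition of unity on `X` is taken whose members meeting the shell
`n ≤ 1 / dist(x, F) ≤ n + 1` are supported in such balls and in a slightly larger shell; those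
members, for all `n`, are collected, squared (for nonnegativity) and normalised. -/
lemma exists_whitney_partition
    {X : Type*} [NormedAddCommGroup X] [NormedSpace ℝ X]
    (p : ℕ∞) (hX : AdmitsCpPartitionOfUnity p X) (F : Set X) (hF : IsClosed F)
    (hd : ∀ z ∉ F, 0 < infDist z F) :
    ∃ (I : Type) (φ : I → X → ℝ) (c : I → X), (∀ i, ContDiffOn ℝ p (φ i) Fᶜ) ∧
      (∀ i x, 0 ≤ φ i x) ∧ (∀ x ∉ F, ∑ᶠ i, φ i x = 1) ∧
      (∀ y ∈ Fᶜ, ∃ V ∈ 𝓝 y, {i | ∃ x ∈ V, φ i x ≠ 0}.Finite) ∧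
      (∀ i, c i ∉ F) ∧ ∀ i x, φ i x ≠ 0 → ‖x - c i‖ ≤ infDist (c i) F / 2 := by
  classical
  have hdc : Continuous fun x : X => infDist x F := continuous_infDist_pt F
  let S : ℕ → Set X := fun n => {x | n * infDist x F ≤ 1 ∧ 1 ≤ (n + 1) * infDist x F}
  let B : ℕ → Set X := fun n => {x | ((n : ℝ) - 1) * infDist x F < 1 ∧ 1 < (n + 2) * infDist x F}
  let C : ℕ → X → Set X := fun n z => ball z (infDist z F / 2) ∩ B n
  have hS : ∀ n, IsClosed (S n) := fun n =>
    (isClosed_le (hdc.const_mul _) continuous_const).inter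
      (isClosed_le continuous_const (hdc.const_mul _))
  have hB : ∀ n, IsOpen (B n) := fun n =>
    (isOpen_lt (hdc.const_mul _) continuous_const).inter
      (isOpen_lt continuous_const (hdc.const_mul _))
  have hdpos : ∀ (n : ℕ) (x : X), 1 ≤ ((n : ℝ) + 1) * infDist x F → 0 < infDist x F := by
    intro n x h
    by_contra h0
    have : infDist x F = 0 := le_antisymm (not_lt.1 h0) infDist_nonneg
    rw [this] at h; norm_num at h
  have hmemF : ∀ x, 0 < infDist x F → x ∉ F := fun x hx hxF => by
    rw [infDist_zero_of_mem hxF] at hx; exact lt_irrefl _ hx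
  have hpu : ∀ n : ℕ, ∃ (Γ : Type) (ψ : Γ → X → ℝ), (∀ γ, ContDiff ℝ p (ψ γ)) ∧
      IsLocFinPartitionOfUnityIn ψ Set.univ ∧
      IsSubordinateTo ψ (insert (S n)ᶜ (C n '' Fᶜ)) := by
    intro n
    refine hX _ ?_ ?_
    · rintro V (rfl | ⟨z, -, rfl⟩)
      · exact (hS n).isOpen_compl
      · exact isOpen_ball.inter (hB n)
    · refine Set.eq_univ_of_forall fun x => ?_
      by_cases hx : x ∈ S n
      · have hx0 := hdpos n x hx.2
        refine ⟨C n x, Or.inr ⟨x, hmemF x hx0, rfl⟩, mem_ball_self (by positivity), ?_, ?_⟩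
        · have := hx.1; linarith
        · have := hx.2; linarith
      · exact ⟨_, Or.inl rfl, hx⟩
  choose Γ ψ hψc hψ hψs using hpu
  let I : Type := Σ n, {γ : Γ n // ∃ z ∈ Fᶜ, tsupport (ψ n γ) ⊆ C n z}
  let η : I → X → ℝ := fun i x => ψ i.1 i.2.1 x ^ 2
  have hηC : ∀ i x, η i x ≠ 0 → x ∈ C i.1 i.2.2.choose := fun i x hx =>
    i.2.2.choose_spec.2 (subset_tsupport _ fun h => hx (by simp [η, h]))
  have hη0 : ∀ i x, 0 ≤ η i x := fun i x => sq_nonneg _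
  have hηc : ∀ i, ContDiffOn ℝ p (η i) Fᶜ := fun i => ((hψc i.1 i.2.1).pow 2).contDiffOn
  have hfin : ∀ y ∈ Fᶜ, ∃ V ∈ 𝓝 y, {i | ∃ x ∈ V, η i x ≠ 0}.Finite := by
    intro y hy
    have hy0 := hd y hy
    choose V hV hVf using fun n => (hψ n).2 y (mem_univ y)
    obtain ⟨K, hK⟩ := exists_nat_ge (1 + 2 / infDist y F)
    refine ⟨{x | infDist y F / 2 < infDist x F} ∩ ⋂ n ∈ Finset.range K, V n, ?_, ?_⟩
    · refine inter_mem ((isOpen_lt (by fun_prop) (by fun_prop)).mem_nhds ?_) ?_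
      · exact half_lt_self hy0
      · exact (Filter.biInter_finset_mem _).2 fun n _ => hV n
    · have hf : (⋃ n ∈ Finset.range K, (Sigma.mk n : _ → I) ''
          {γ | γ.1 ∈ {γ | ∃ x ∈ V n, ψ n γ x ≠ 0}}).Finite := by
        refine Set.Finite.biUnion (Finset.finite_toSet _) fun n _ => Set.Finite.image _ ?_
        exact (hVf n).preimage Subtype.val_injective.injOn
      refine hf.subset ?_
      rintro ⟨n, γ⟩ ⟨x, ⟨hx1, hx2⟩, hx3⟩
      have hxB : ((n : ℝ) - 1) * infDist x F < 1 := (hηC _ x hx3).2.1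
      have hx1' : infDist y F / 2 < infDist x F := hx1
      -- On this neighborhood `1 / dist(x, F)` is bounded, so it meets only the first `K` shells.
      have hnK : n < K := by
        by_contra hge
        have h1 : (K : ℝ) ≤ n := by exact_mod_cast not_lt.1 hge
        have h2 : 2 / infDist y F ≤ n - 1 := by linarith
        rw [div_le_iff₀ hy0] at h2
        have h3 : 0 < (n : ℝ) - 1 := by
          by_contra h; nlinarith
        nlinarith
      simp only [mem_iUnion, mem_image]
      refine ⟨n, Finset.mem_range.2 hnK, γ, ⟨x, ?_, fun h => hx3 (by simp [η, h])⟩, rfl⟩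
      exact mem_iInter₂.1 hx2 n (Finset.mem_range.2 hnK)
  have hsuppfin : ∀ x ∈ Fᶜ, (Function.support fun i => η i x).Finite := fun x hx => by
    obtain ⟨V, hV, hVf⟩ := hfin x hx
    exact hVf.subset fun i hi => ⟨x, mem_of_mem_nhds hV, hi⟩
  have hpos : ∀ x ∈ Fᶜ, 0 < ∑ᶠ i, η i x := by
    intro x hx
    have hx0 := hd x hx
    have hxS : x ∈ S ⌊1 / infDist x F⌋₊ := by
      constructor
      · rw [← le_div_iff₀ hx0]; exact Nat.floor_le (by positivity)
      · rw [← div_le_iff₀ hx0]; exact (Nat.lt_floor_add_one _).le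
    generalize ⌊1 / infDist x F⌋₊ = n at hxS
    obtain ⟨γ, hγ⟩ : ∃ γ, ψ n γ x ≠ 0 := by
      by_contra! h
      have := (hψ n).1 x (mem_univ x)
      simp [h] at this
    have hsub : ∃ z ∈ Fᶜ, tsupport (ψ n γ) ⊆ C n z := by
      obtain ⟨V, (rfl | ⟨z, hz, rfl⟩), hVs⟩ := hψs n γ
      · exact absurd hxS (hVs (subset_tsupport _ hγ))
      · exact ⟨z, hz, hVs⟩
    exact finsum_pos (hη0 · x) ⟨⟨n, γ, hsub⟩, by simp only [η]; positivity⟩ (hsuppfin x hx)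
  have hSc : ContDiffOn ℝ p (fun x => ∑ᶠ i, η i x) Fᶜ :=
    contDiffOn_finsum_of_locFin hF.isOpen_compl η hηc hfin
  refine ⟨I, fun i x => η i x / ∑ᶠ j, η j x, fun i => i.2.2.choose, fun i => ?_, fun i x => ?_,
    fun x hx => ?_, fun y hy => ?_, fun i => i.2.2.choose_spec.1, fun i x hx => ?_⟩
  · exact (hηc i).div hSc fun x hx => (hpos x hx).ne'
  · exact div_nonneg (hη0 i x) (finsum_nonneg (hη0 · x))
  · simp only [div_eq_mul_inv]
    rw [← finsum_mul' _ _ (hsuppfin x hx)]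
    exact mul_inv_cancel₀ (hpos x hx).ne'
  · obtain ⟨V, hV, hVf⟩ := hfin y hy
    exact ⟨V, hV, hVf.subset fun i ⟨x, hx, h⟩ => ⟨x, hx, fun h0 => h (by simp [h0])⟩⟩
  · have := (hηC i x fun h0 => hx (by simp [h0])).1
    rw [mem_ball, dist_eq_norm] at this
    exact this.le

/-- Extension theorem with preservation of derivatives, with a `C^p`-smooth extension
outside the closed set, provided `X` admits `C^p`-smooth partition of unity. -/
theorem extension_preserving_derivatives_smooth_outside
    {X : Type*} [NormedAddCommGroup X] [NormedSpace ℝ X]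
    {Y : Type*} [NormedAddCommGroup Y] [NormedSpace ℝ Y]
    (p : ℕ∞) (hX : AdmitsCpPartitionOfUnity p X)
    (F : Set X) (hF : IsClosed F) (f : X → Y) (L : X → X →L[ℝ] Y)
    (hL : BaireOneOn L F) :
    ∃ fbar : X → Y,
      -- (i)
      (∀ x ∈ F, fbar x = f x) ∧
      -- (ii)
      (∀ a ∈ F, ContinuousWithinAt f F a → ContinuousAt fbar a) ∧
      -- (iii)
      (∀ a ∈ F, ∀ α : ℝ, α ∈ Set.Ioc (0 : ℝ) 1 →
        HolderAtWithin f F α a → HolderAtWithin fbar Set.univ α a) ∧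
      -- (iv)
      (∀ a ∈ F, HasFDerivWithinAt f (L a) F a → HasFDerivAt fbar (L a) a) ∧
      -- (v)
      ContDiffOn ℝ p fbar Fᶜ := by
  classical
  rcases F.eq_empty_or_nonempty with rfl | hFne
  · exact ⟨fun _ => 0, by simp, by simp, by simp, by simp, contDiffOn_const⟩
  have hd : ∀ z ∉ F, 0 < infDist z F := fun z hz => (hF.notMem_iff_infDist_pos hFne).1 hz
  have hπ : ∀ z, ∃ y ∈ F, z ∉ F → ‖z - y‖ ≤ 2 * infDist z F := by
    intro z
    by_cases hz : z ∈ F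
    · exact ⟨z, hz, fun h => absurd hz h⟩
    · have hlt : infDist z F < 2 * infDist z F := by linarith [hd z hz]
      obtain ⟨y, hy, hyz⟩ := (infDist_lt_iff hFne).1 hlt
      exact ⟨y, hy, fun _ => by rw [← dist_eq_norm]; exact hyz.le⟩
  choose π hπF hπ using hπ
  obtain ⟨A, hA⟩ := exists_operator_field_off F L hL π hπF hd hπ
  obtain ⟨I, φ, c, hφc, hφ0, hφ1, hφfin, hcF, hφs⟩ := exists_whitney_partition p hX F hF hd
  let g : I → X → Y := fun i x => f (π (c i)) + A (c i) (x - π (c i))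
  let fbar : X → Y := fun x => if x ∈ F then f x else ∑ᶠ i, φ i x • g i x
  have hfF : ∀ x ∈ F, fbar x = f x := fun x hx => if_pos hx
  have hfnF : ∀ x ∉ F, fbar x = ∑ᶠ i, φ i x • g i x := fun x hx => if_neg hx
  -- Off `F`, the value of `fbar` is a convex combination of the active `g i x`.
  have hconv : ∀ x ∉ F, ∀ (v : Y) (r : ℝ), (∀ i, φ i x ≠ 0 → ‖g i x - v‖ ≤ r) →
      ‖fbar x - v‖ ≤ r := by
    intro x hx v r h
    rw [hfnF x hx, ← dist_eq_norm, ← mem_closedBall]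
    exact (convex_closedBall v r).finsum_mem (hφ0 · x) (hφ1 x hx) fun i hi => by
      rw [mem_closedBall, dist_eq_norm]; exact h i hi
  have hgeom : ∀ a ∈ F, ∀ x ∉ F, ∀ i, φ i x ≠ 0 →
      ‖c i - a‖ ≤ 2 * ‖x - a‖ ∧ ‖x - π (c i)‖ ≤ 5 / 2 * infDist (c i) F ∧
      infDist (c i) F ≤ 2 * ‖x - a‖ ∧ ‖π (c i) - a‖ ≤ 6 * ‖x - a‖ := by
    intro a ha x hx i hi
    have h1 := hφs i x hi
    have h2 := hπ (c i) (hcF i)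
    have h3 : infDist (c i) F ≤ infDist x F + ‖x - c i‖ := by
      rw [← dist_eq_norm, dist_comm]; exact infDist_le_infDist_add_dist
    have h4 : infDist x F ≤ ‖x - a‖ := by
      rw [← dist_eq_norm]; exact infDist_le_dist_of_mem ha
    have h5 : ‖c i - a‖ ≤ ‖x - c i‖ + ‖x - a‖ := by
      rw [norm_sub_rev x (c i)]; exact norm_sub_le_norm_sub_add_norm_sub _ _ _
    have h6 : ‖x - π (c i)‖ ≤ ‖x - c i‖ + ‖c i - π (c i)‖ :=
      norm_sub_le_norm_sub_add_norm_sub _ _ _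
    have h7 : ‖π (c i) - a‖ ≤ ‖x - π (c i)‖ + ‖x - a‖ := by
      rw [norm_sub_rev x (π (c i))]; exact norm_sub_le_norm_sub_add_norm_sub _ _ _
    refine ⟨?_, ?_, ?_, ?_⟩ <;> linarith
  -- The affine pieces deviate from `f a` by the increment of `f` on `F` plus a Lipschitz term.
  have hlip : ∀ a ∈ F, ∃ δ > 0, ∃ K ≥ 0, ∀ x ∉ F, ‖x - a‖ < δ → ∀ i, φ i x ≠ 0 →
      ‖g i x - f a‖ ≤ ‖f (π (c i)) - f a‖ + K * ‖x - a‖ := by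
    intro a ha
    obtain ⟨δ, hδ, hAδ⟩ := hA a ha 1 one_pos
    refine ⟨δ / 2, by positivity, 5 + 5 * ‖L a‖, by positivity, fun x hx hxa i hi => ?_⟩
    obtain ⟨h1, h2, h3, -⟩ := hgeom a ha x hx i hi
    have h4 := hAδ (c i) (hcF i) (by linarith)
    have h5 : ‖A (c i)‖ ≤ ‖A (c i) - L a‖ + ‖L a‖ := by
      simpa using norm_add_le (A (c i) - L a) (L a)
    have h6 : ‖A (c i) (x - π (c i))‖ ≤ (‖A (c i) - L a‖ + ‖L a‖) * (5 / 2 * infDist (c i) F) :=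
      ((A (c i)).le_opNorm _).trans (by gcongr)
    have h7 : ‖L a‖ * infDist (c i) F ≤ ‖L a‖ * (2 * ‖x - a‖) := by gcongr
    have h8 : ‖g i x - f a‖ ≤ ‖f (π (c i)) - f a‖ + ‖A (c i) (x - π (c i))‖ := by
      simp only [g]
      rw [add_sub_right_comm]; exact norm_add_le _ _
    linarith
  refine ⟨fbar, hfF, fun a ha hfa => ?_, fun a ha α hα hfa => ?_, fun a ha hfa => ?_, ?_⟩
  · obtain ⟨δ, hδ, K, hK, hg⟩ := hlip a ha
    rw [Metric.continuousWithinAt_iff] at hfa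
    rw [Metric.continuousAt_iff]
    intro ε hε
    obtain ⟨δ', hδ', hf'⟩ := hfa (ε / 2) (by positivity)
    refine ⟨min δ (min (δ' / 6) (ε / (2 * (K + 1)))), by positivity, fun x hxa => ?_⟩
    rw [dist_eq_norm, lt_min_iff, lt_min_iff] at hxa
    obtain ⟨hx1, hx2, hx3⟩ := hxa
    rw [lt_div_iff₀ (by positivity)] at hx3
    rw [hfF a ha]
    by_cases hx : x ∈ F
    · rw [hfF x hx]
      refine (hf' hx ?_).trans (by linarith)
      rw [dist_eq_norm]; linarith
    · rw [dist_eq_norm]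
      refine (hconv x hx (f a) (ε / 2 + K * ‖x - a‖) fun i hi => ?_).trans_lt ?_
      · obtain ⟨-, -, -, h4⟩ := hgeom a ha x hx i hi
        have h5 := hf' (hπF (c i)) (by rw [dist_eq_norm]; linarith)
        rw [dist_eq_norm] at h5
        linarith [hg x hx hx1 i hi]
      · have hxa0 : x ≠ a := fun h => hx (h ▸ ha)
        have := norm_sub_pos_iff.2 hxa0
        linarith
  · obtain ⟨hα0, hα1⟩ := hα
    obtain ⟨δ, hδ, K, hK, hg⟩ := hlip a ha
    obtain ⟨K', δ', hδ', hf'⟩ := hfa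
    refine ⟨|K'| * 6 ^ α + K, min δ (min (δ' / 6) 1), by positivity, fun x _ hxa => ?_⟩
    rw [lt_min_iff, lt_min_iff] at hxa
    obtain ⟨hx1, hx2, hx3⟩ := hxa
    have hn : 0 ≤ ‖x - a‖ := norm_nonneg _
    rw [hfF a ha]
    by_cases hx : x ∈ F
    · rw [hfF x hx]
      refine (hf' x hx (by linarith)).trans ?_
      have h6 : (1 : ℝ) ≤ 6 ^ α := Real.one_le_rpow (by norm_num) hα0.le
      gcongr
      nlinarith [le_abs_self K', abs_nonneg K']
    · refine hconv x hx (f a) _ fun i hi => ?_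
      obtain ⟨-, -, -, h4⟩ := hgeom a ha x hx i hi
      have h5 := hf' (π (c i)) (hπF (c i)) (by linarith)
      have h6 : K' * ‖π (c i) - a‖ ^ α ≤ |K'| * (6 ^ α * ‖x - a‖ ^ α) := by
        rw [← Real.mul_rpow (by norm_num) hn]
        gcongr
        exact le_abs_self K'
      have h7 : ‖x - a‖ ≤ ‖x - a‖ ^ α := by
        conv_lhs => rw [← Real.rpow_one ‖x - a‖]
        exact Real.rpow_le_rpow_of_exponent_ge' hn hx3.le hα0.le hα1
      have h8 := hg x hx hx1 i hi
      have h9 := mul_le_mul_of_nonneg_left h7 hK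
      linarith
  · rw [hasFDerivWithinAt_iff_isLittleO, Asymptotics.isLittleO_iff] at hfa
    rw [hasFDerivAt_iff_isLittleO, Asymptotics.isLittleO_iff]
    intro ε hε
    have h0 := hfa (c := ε / 12) (by positivity)
    rw [eventually_nhdsWithin_iff, Metric.eventually_nhds_iff] at h0
    obtain ⟨δ', hδ', hf'⟩ := h0
    obtain ⟨δ, hδ, hAδ⟩ := hA a ha (ε / 10) (by positivity)
    rw [Metric.eventually_nhds_iff]
    refine ⟨min (δ / 2) (δ' / 6), by positivity, fun x hxa => ?_⟩
    rw [dist_eq_norm, lt_min_iff] at hxa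
    obtain ⟨hx1, hx2⟩ := hxa
    have hn : 0 ≤ ‖x - a‖ := norm_nonneg _
    rw [hfF a ha]
    by_cases hx : x ∈ F
    · rw [hfF x hx]
      have := hf' (y := x) (by rw [dist_eq_norm]; linarith) hx
      nlinarith
    · rw [sub_sub]
      refine hconv x hx _ _ fun i hi => ?_
      obtain ⟨h1, h2, h3, h4⟩ := hgeom a ha x hx i hi
      have h5 := hf' (y := π (c i)) (by rw [dist_eq_norm]; linarith) (hπF (c i))
      have h6 := hAδ (c i) (hcF i) (by linarith)
      have h7 : ‖(A (c i) - L a) (x - π (c i))‖ ≤ ‖A (c i) - L a‖ * (5 / 2 * infDist (c i) F) :=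
        ((A (c i) - L a).le_opNorm _).trans (by gcongr)
      have h8 : g i x - (f a + L a (x - a)) =
          (f (π (c i)) - f a - L a (π (c i) - a)) + (A (c i) - L a) (x - π (c i)) := by
        simp only [g, sub_apply, map_sub]
        abel
      rw [h8]
      refine (norm_add_le _ _).trans ?_
      nlinarith
  · have hsm : ContDiffOn ℝ p (fun x => ∑ᶠ i, φ i x • g i x) Fᶜ := by
      refine contDiffOn_finsum_of_locFin hF.isOpen_compl _ (fun i => (hφc i).smul ?_) fun y hy => ?_
      · exact (contDiff_const.add ((A (c i)).contDiff.comp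
          (contDiff_id.sub contDiff_const))).contDiffOn
      · obtain ⟨V, hV, hVf⟩ := hφfin y hy
        exact ⟨V, hV, hVf.subset fun i ⟨x, hx, h⟩ => ⟨x, hx, fun h0 => h (by simp [h0])⟩⟩
    exact hsm.congr fun x hx => hfnF x hx
end

section
/- Let X be a normed linear space with the property that for every open cover of X there is a locally finite partition of unity consisting of everywhere Fréchet differentiable functions subordinated to the cover. Let F ⊆ X be a nonempty closed set, Y a normed linear space, f : F → Y an arbitrary function and L : F → L(X,Y) a relative Fréchet derivative of f on F (with respect to F). Then L is Baire one on F if and only if there exists a function f̄ : X → Y such that f̄ extends f, f̄ is Fréchet differentiable at every point of X, and f̄′(a) = L(a) for every a ∈ F. -/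
/-!
If `fbar` is differentiable, the sets where `fbar` is uniformly almost affine at a given scale are
closed and exhaust `X`, and on each of them `fderiv ℝ fbar` oscillates locally by a small amount
(`norm_fderiv_sub_le_of_mem_nearlyAffine`). A partition of unity argument shows that any
map with this property is Baire one (`baireOneOn_of_closed_cover`); restricting to `F` gives one implication.

Conversely, let `L` be Baire one on `F`. Then there is a map `A` off `F` with
`d(p, F) * ‖A p - L a‖ = o(‖p - a‖)` as `p` tends to any `a ∈ F` (`BaireOneOn.exists_approx`). For
`p ∉ F` and an almost nearest point `b` of `F`, the affine map `x ↦ f b + A p (x - b)` then agrees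
near `p` with `f a + L a (x - a)` up to `o(‖x - a‖)`. Gluing these affine maps off `F` with a
differentiable partition of unity keeps the estimate, since balls are convex, and the estimate alone
says that the glued map together with `f` on `F` has derivative `L a` at `a`. No bound on the
derivatives of the partition of unity is needed. The gluing is phrased as a selection from convex
sets: first on all of `X`, where the hypothesis on `X` applies, then on the open set `Fᶜ`
(`AdmitsDifferentiablePartitionOfUnity.exists_selection_compl`).
-/

open Filter Metric Set Topology

/-- `X` admits partition of unity formed by everywhere Fréchet differentiable functions. -/
def AdmitsDifferentiablePartitionOfUnity (X : Type*)
    [NormedAddCommGroup X] [NormedSpace ℝ X] : Prop :=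
  ∀ 𝒰 : Set (Set X), (∀ V ∈ 𝒰, IsOpen V) → ⋃₀ 𝒰 = Set.univ →
    ∃ (Γ : Type) (ψ : Γ → X → ℝ),
      (∀ γ, Differentiable ℝ (ψ γ)) ∧
      IsLocFinPartitionOfUnityIn ψ Set.univ ∧
      IsSubordinateTo ψ 𝒰

/-! ### Derivatives are Baire one -/

/-- A function is Baire one as soon as, at every scale `1 / (m + 1)`, the space is an increasing
union of closed sets on each of which the function oscillates locally by at most that scale.
The approximants come from a partition of unity: the constraints imposed on the `n`-th one are
convex, and near each point they are satisfied by the constant value of `g` at that point. -/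
lemma baireOneOn_of_closed_cover {X : Type*} [MetricSpace X] {Z : Type*} [NormedAddCommGroup Z]
    [NormedSpace ℝ Z] (g : X → Z) (F : Set X) (C : ℕ → ℕ → Set X)
    (hclosed : ∀ m k, IsClosed (C m k))
    (hcover : ∀ m x, ∀ᶠ k in atTop, x ∈ C m k)
    (hosc : ∀ m k, ∀ p ∈ C m k, ∀ᶠ y in 𝓝 p, y ∈ C m k → ‖g p - g y‖ ≤ 1 / ((m : ℝ) + 1)) :
    BaireOneOn g F := by
  have key : ∀ n : ℕ, ∃ G : C(X, Z), ∀ x,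
      G x ∈ {z | ∀ m ≤ n, x ∈ C m n → z ∈ closedBall (g x) (1 / ((m : ℝ) + 1))} := by
    intro n
    refine exists_continuous_forall_mem_convex_of_local_const ?_ ?_
    · intro x
      have : {z | ∀ m ≤ n, x ∈ C m n → z ∈ closedBall (g x) (1 / ((m : ℝ) + 1))} =
          ⋂ m, ⋂ (_ : m ≤ n), ⋂ (_ : x ∈ C m n), closedBall (g x) (1 / ((m : ℝ) + 1)) := by
        ext z; simp
      rw [this]
      exact convex_iInter fun m => convex_iInter fun _ => convex_iInter fun _ =>
        convex_closedBall _ _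
    · intro p
      refine ⟨g p, ?_⟩
      have : ∀ᶠ y in 𝓝 p, ∀ m ∈ Set.Iic n, y ∈ C m n → ‖g p - g y‖ ≤ 1 / ((m : ℝ) + 1) := by
        rw [eventually_all_finite (Set.finite_Iic n)]
        intro m _
        by_cases hp : p ∈ C m n
        · exact hosc m n p hp
        · filter_upwards [(hclosed m n).isOpen_compl.mem_nhds hp] with y hy hy'
          exact absurd hy' hy
      filter_upwards [this] with y hy m hm hym
      rw [mem_closedBall, dist_eq_norm]
      exact hy m hm hym
  choose G hG using key
  refine ⟨fun n x => G n x, fun n => (G n).continuous.continuousOn, fun x _ => ?_⟩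
  rw [Metric.tendsto_atTop']
  intro ε hε
  obtain ⟨m, hm⟩ := exists_nat_one_div_lt hε
  obtain ⟨N, hN⟩ := eventually_atTop.1 (hcover m x)
  refine ⟨max N m, fun n hn => lt_of_le_of_lt ?_ hm⟩
  have h1 : N ≤ n := (le_max_left _ _).trans hn.le
  have h2 : m ≤ n := (le_max_right _ _).trans hn.le
  exact hG n x m h2 (hN n h1)

section
variable {X : Type*} [NormedAddCommGroup X] [NormedSpace ℝ X]
  {Y : Type*} [NormedAddCommGroup Y] [NormedSpace ℝ Y]

/-- The points from which `f` is affine along segments of length less than `δ`, up to an error of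
at most `ε` times the distance to the starting point. The condition does not mention the
derivative, so that the set is closed when `f` is continuous. -/
def nearlyAffine (f : X → Y) (ε δ : ℝ) : Set X :=
  {x | ∀ h : X, ‖h‖ < δ → ∀ s : ℝ, 0 < s → s ≤ 1 →
    ‖f (x + s • h) - f x - s • (f (x + h) - f x)‖ ≤ ε * (s * ‖h‖)}

lemma isClosed_nearlyAffine {f : X → Y} (hf : Continuous f) (ε δ : ℝ) :
    IsClosed (nearlyAffine f ε δ) := by
  simp only [nearlyAffine, ofPred_forall]
  refine isClosed_iInter fun h => isClosed_iInter fun _ => isClosed_iInter fun s =>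
    isClosed_iInter fun _ => isClosed_iInter fun _ => isClosed_le ?_ continuous_const
  fun_prop

/-- On `nearlyAffine f ε δ` the derivative approximates `f` uniformly: let the position along the
segment tend to its starting point. -/
lemma norm_sub_le_of_mem_nearlyAffine {f : X → Y} {ε δ : ℝ} {x h : X} {T : X →L[ℝ] Y}
    (hx : x ∈ nearlyAffine f ε δ) (hT : HasFDerivAt f T x) (hh : ‖h‖ < δ) :
    ‖f (x + h) - f x - T h‖ ≤ ε * ‖h‖ := by
  have h1 := (hT.hasLineDerivAt h).tendsto_slope_zero_right
  have h2 := ((tendsto_const_nhds (x := f (x + h) - f x)).sub h1).norm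
  refine le_of_tendsto h2 ?_
  filter_upwards [Ioc_mem_nhdsGT (zero_lt_one (α := ℝ))] with s hs
  have h3 := hx h hh s hs.1 hs.2
  have h4 : f (x + h) - f x - s⁻¹ • (f (x + s • h) - f x) =
      -(s⁻¹ • (f (x + s • h) - f x - s • (f (x + h) - f x))) := by
    rw [smul_sub s⁻¹ (f (x + s • h) - f x), smul_smul, inv_mul_cancel₀ hs.1.ne', one_smul]
    abel
  rw [h4, norm_neg, norm_smul, norm_inv, Real.norm_of_nonneg hs.1.le, inv_mul_le_iff₀ hs.1]
  linarith

lemma mem_nearlyAffine {f : X → Y} {ε δ : ℝ} {x : X} {T : X →L[ℝ] Y}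
    (hT : ∀ h, ‖h‖ < δ → ‖f (x + h) - f x - T h‖ ≤ ε / 2 * ‖h‖) : x ∈ nearlyAffine f ε δ := by
  intro h hh s hs hs1
  have h1 : ‖s • h‖ = s * ‖h‖ := by rw [norm_smul, Real.norm_of_nonneg hs.le]
  have h2 := hT (s • h) (by rw [h1]; nlinarith [norm_nonneg h])
  have h3 := hT h hh
  have h4 : f (x + s • h) - f x - s • (f (x + h) - f x) =
      (f (x + s • h) - f x - T (s • h)) - s • (f (x + h) - f x - T h) := by
    rw [map_smul, smul_sub s (f (x + h) - f x)]; abel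
  rw [h4]
  refine (norm_sub_le _ _).trans ?_
  rw [norm_smul, Real.norm_of_nonneg hs.le]
  rw [h1] at h2
  nlinarith [mul_le_mul_of_nonneg_left h3 hs.le]

/-- Compare the two derivatives on increments of length `‖y - x‖`, using that such increments at
`y` are differences of two short increments at `x`. -/
lemma norm_fderiv_sub_le_of_mem_nearlyAffine {f : X → Y} {ε δ : ℝ} (hε : 0 ≤ ε) {x y : X}
    {S T : X →L[ℝ] Y} (hx : x ∈ nearlyAffine f ε δ) (hy : y ∈ nearlyAffine f ε δ)
    (hS : HasFDerivAt f S x) (hT : HasFDerivAt f T y) (hxy : 2 * ‖y - x‖ < δ) :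
    ‖S - T‖ ≤ 4 * ε := by
  rcases eq_or_ne x y with rfl | hne
  · rw [hS.unique hT, sub_self, norm_zero]; positivity
  have hr : 0 < ‖y - x‖ := norm_pos_iff.2 (sub_ne_zero.2 hne.symm)
  refine ContinuousLinearMap.opNorm_le_of_unit_norm (by positivity) fun u hu => ?_
  set r := ‖y - x‖ with hrdef
  set h := r • u with hh
  have hhr : ‖h‖ = r := by rw [hh, norm_smul, hu, mul_one, Real.norm_of_nonneg hr.le]
  have h2r : ‖(y - x) + h‖ ≤ 2 * r := (norm_add_le _ _).trans (by linarith)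
  have e1 := norm_sub_le_of_mem_nearlyAffine hy hT (h := h) (by linarith)
  have e2 := norm_sub_le_of_mem_nearlyAffine hx hS (h := (y - x) + h) (by linarith)
  have e3 := norm_sub_le_of_mem_nearlyAffine hx hS (h := y - x) (by linarith)
  have a1 : x + ((y - x) + h) = y + h := by abel
  have a2 : x + (y - x) = y := by abel
  rw [a1, map_add] at e2
  rw [a2] at e3
  have e4 : (S - T) h = (f (y + h) - f y - T h) - (f (y + h) - f x - (S (y - x) + S h)) +
      (f y - f x - S (y - x)) := by
    rw [_root_.sub_apply]; abel
  have e5 : ‖(S - T) h‖ ≤ 4 * ε * r := by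
    rw [e4]
    refine (norm_add_le _ _).trans ((add_le_add_left (norm_sub_le _ _) _).trans ?_)
    rw [hhr] at e1
    nlinarith
  rw [hh, map_smul, norm_smul, Real.norm_of_nonneg hr.le] at e5
  exact le_of_mul_le_mul_left (by linarith) hr

lemma baireOneOn_fderiv {f : X → Y} (hf : Differentiable ℝ f) (F : Set X) :
    BaireOneOn (fderiv ℝ f) F := by
  refine baireOneOn_of_closed_cover _ F
    (fun m k => nearlyAffine f (1 / ((m : ℝ) + 1) / 4) (1 / ((k : ℝ) + 1)))
    (fun m k => isClosed_nearlyAffine hf.continuous _ _) ?_ ?_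
  · intro m x
    have h1 := (hf x).hasFDerivAt.isLittleO
    have h2 := h1.def (c := 1 / ((m : ℝ) + 1) / 4 / 2) (by positivity)
    obtain ⟨δ, hδ, h3⟩ := Metric.eventually_nhds_iff.1 h2
    filter_upwards [tendsto_one_div_add_atTop_nhds_zero_nat.eventually (gt_mem_nhds hδ)]
      with k hk
    refine mem_nearlyAffine (T := fderiv ℝ f x) fun h hh => ?_
    have := h3 (y := x + h) (by rw [dist_eq_norm, add_sub_cancel_left]; exact hh.trans hk)
    simpa using this
  · intro m k p hp
    have hpos : 0 < 1 / ((k : ℝ) + 1) / 2 := by positivity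
    filter_upwards [Metric.ball_mem_nhds p hpos] with y hy hy'
    rw [mem_ball, dist_eq_norm] at hy
    have := norm_fderiv_sub_le_of_mem_nearlyAffine (by positivity) hp hy'
      (hf p).hasFDerivAt (hf y).hasFDerivAt (by linarith)
    linarith

/-! ### Approximating a Baire one function near a closed set -/

/-- A Baire one function `L` on `F` extends off `F` to a map `A` which tends to `L a` as `p` tends
to `a` non-tangentially, with a growth bound on tangential approach: `d(p, F) * ‖A p - L a‖` is
negligible with respect to `‖p - a‖`. The value `A p` is `g n b`, where `b ∈ F` is close to `p` and
`n` is the largest index up to `1 / d(p, F)` for which `g n` is nearly constant on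
`F ∩ closedBall p √d(p, F)` and `g n b` is not too large. -/
lemma BaireOneOn.exists_approx {X : Type*} [NormedAddCommGroup X] {Z : Type*}
    [NormedAddCommGroup Z] {F : Set X} (hF : IsClosed F) (hFne : F.Nonempty)
    {L : X → Z} (hL : BaireOneOn L F) :
    ∃ A : X → Z, ∀ a ∈ F, ∀ ε > 0, ∀ᶠ p in 𝓝[Fᶜ] a,
      infDist p F * ‖A p - L a‖ ≤ ε * ‖p - a‖ := by
  classical
  obtain ⟨g, hg, hgL⟩ := hL
  have hpos : ∀ p, p ∉ F → 0 < infDist p F := fun p hp => (hF.notMem_iff_infDist_pos hFne).1 hp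
  have hb : ∀ p, ∃ b, p ∉ F → b ∈ F ∧ dist p b < 2 * infDist p F := by
    intro p
    by_cases hp : p ∈ F
    · exact ⟨p, fun h => absurd hp h⟩
    · obtain ⟨b, hb, hb'⟩ := (infDist_lt_iff (r := 2 * infDist p F) hFne).1
        (by linarith [hpos p hp])
      exact ⟨b, fun _ => ⟨hb, hb'⟩⟩
  choose b hb using hb
  set d : X → ℝ := fun p => √(infDist p F) with hd
  let Good : X → ℕ → Prop := fun p n =>
    (∀ z ∈ F, ‖p - z‖ ≤ d p → ‖g n (b p) - g n z‖ ≤ 1 / ((n : ℝ) + 1)) ∧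
      d p * ‖g n (b p)‖ ≤ 1 / ((n : ℝ) + 1)
  let ν : X → ℕ := fun p => Nat.findGreatest (Good p) ⌊1 / infDist p F⌋₊
  refine ⟨fun p => g (ν p) (b p), fun a ha ε hε => ?_⟩
  have hid : Tendsto (fun p => infDist p F) (𝓝[Fᶜ] a) (𝓝 0) := by
    have : Tendsto (fun p => infDist p F) (𝓝 a) (𝓝 (infDist a F)) :=
      (continuous_infDist_pt F).tendsto a
    rw [infDist_zero_of_mem ha] at this
    exact this.mono_left nhdsWithin_le_nhds
  have hd0 : Tendsto d (𝓝[Fᶜ] a) (𝓝 0) := by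
    have := (Real.continuous_sqrt.tendsto 0).comp hid
    rwa [Real.sqrt_zero] at this
  have hp0 : Tendsto (fun p => ‖p - a‖) (𝓝[Fᶜ] a) (𝓝 0) := by
    have : Tendsto (fun p => ‖p - a‖) (𝓝 a) (𝓝 ‖a - a‖) :=
      Continuous.tendsto (by fun_prop) a
    rw [sub_self, norm_zero] at this
    exact this.mono_left nhdsWithin_le_nhds
  have hmem : ∀ᶠ p in 𝓝[Fᶜ] a, p ∉ F := eventually_mem_nhdsWithin
  have hble : ∀ p, p ∉ F → ‖b p - a‖ ≤ 3 * ‖p - a‖ := by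
    intro p hp
    have h1 := (hb p hp).2
    have h2 : infDist p F ≤ ‖p - a‖ := by rw [← dist_eq_norm]; exact infDist_le_dist_of_mem ha
    rw [dist_eq_norm] at h1
    have h3 : b p - a = (p - a) - (p - b p) := by abel
    rw [h3]
    refine (norm_sub_le _ _).trans (by linarith)
  -- each fixed index is eventually admissible, by continuity of `g N` at `a`
  have hgood : ∀ N : ℕ, ∀ᶠ p in 𝓝[Fᶜ] a, Good p N := by
    intro N
    have hη : 0 < 1 / ((N : ℝ) + 1) / 2 := by positivity
    obtain ⟨δ, hδ, hcont⟩ := Metric.continuousWithinAt_iff.1 (hg N a ha) _ hη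
    have hsmall : Tendsto (fun p => d p * (‖g N a‖ + 1 / ((N : ℝ) + 1))) (𝓝[Fᶜ] a) (𝓝 0) := by
      simpa using hd0.mul_const (‖g N a‖ + 1 / ((N : ℝ) + 1))
    filter_upwards [hmem, hd0.eventually (gt_mem_nhds (half_pos hδ)),
      hp0.eventually (gt_mem_nhds (show 0 < δ / 3 by linarith)),
      hsmall.eventually (gt_mem_nhds (show 0 < 1 / ((N : ℝ) + 1) by positivity))]
      with p hpF hdp hpa hs
    have hbp : ‖g N (b p) - g N a‖ < 1 / ((N : ℝ) + 1) / 2 := by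
      rw [← dist_eq_norm]
      refine hcont (hb p hpF).1 ?_
      rw [dist_eq_norm]
      linarith [hble p hpF]
    refine ⟨fun z hz hzp => ?_, ?_⟩
    · have : ‖g N z - g N a‖ < 1 / ((N : ℝ) + 1) / 2 := by
        rw [← dist_eq_norm]
        refine hcont hz ?_
        rw [dist_eq_norm]
        have h3 : z - a = (p - a) - (p - z) := by abel
        rw [h3]
        refine (norm_sub_le _ _).trans_lt (by linarith)
      have h3 : g N (b p) - g N z = (g N (b p) - g N a) - (g N z - g N a) := by abel
      rw [h3]
      refine (norm_sub_le _ _).trans (by linarith)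
    · refine le_trans (mul_le_mul_of_nonneg_left ?_ (Real.sqrt_nonneg _)) hs.le
      have h3 : g N (b p) = (g N (b p) - g N a) + g N a := by abel
      rw [h3]
      refine (norm_add_le _ _).trans (by linarith)
  have hν : ∀ N : ℕ, ∀ᶠ p in 𝓝[Fᶜ] a, N ≤ ν p ∧ Good p (ν p) := by
    intro N
    filter_upwards [hmem, hgood N,
      hid.eventually (gt_mem_nhds (show 0 < 1 / ((N : ℝ) + 1) by positivity))] with p hpF hG hi
    have hN : N ≤ ⌊1 / infDist p F⌋₊ := by
      refine Nat.le_floor ?_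
      rw [le_div_iff₀ (hpos p hpF)]
      rw [lt_div_iff₀ (by positivity)] at hi
      nlinarith [hpos p hpF]
    exact ⟨Nat.le_findGreatest hN hG, Nat.findGreatest_spec hN hG⟩
  obtain ⟨N₁, hN₁⟩ := exists_nat_one_div_lt (half_pos hε)
  obtain ⟨N₂, hN₂⟩ := Metric.tendsto_atTop.1 (hgL a ha) _ (half_pos hε)
  have hsmall : Tendsto (fun p => ‖p - a‖ * ‖L a‖) (𝓝[Fᶜ] a) (𝓝 0) := by
    simpa using hp0.mul_const ‖L a‖
  filter_upwards [hmem, hν (max N₁ N₂), hsmall.eventually (gt_mem_nhds (half_pos hε))]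
    with p hpF ⟨hle, hG⟩ hs
  have hk : 1 / ((ν p : ℝ) + 1) ≤ ε / 2 := by
    refine le_trans (one_div_le_one_div_of_le (by positivity) ?_) hN₁.le
    have : (N₁ : ℝ) ≤ ν p := by exact_mod_cast (le_max_left _ _).trans hle
    linarith
  have hdd : d p * d p = infDist p F := Real.mul_self_sqrt infDist_nonneg
  have hd' : 0 ≤ d p := Real.sqrt_nonneg _
  have hpa : 0 ≤ ‖p - a‖ := norm_nonneg _
  have hia : infDist p F ≤ ‖p - a‖ := by rw [← dist_eq_norm]; exact infDist_le_dist_of_mem ha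
  rcases le_or_gt ‖p - a‖ (d p) with hcase | hcase
  · have h1 := hG.1 a ha hcase
    have h2 := hN₂ (ν p) ((le_max_right _ _).trans hle)
    rw [dist_eq_norm] at h2
    have h3 : g (ν p) (b p) - L a = (g (ν p) (b p) - g (ν p) a) + (g (ν p) a - L a) := by abel
    have h4 : ‖g (ν p) (b p) - L a‖ ≤ ε := by
      rw [h3]
      refine (norm_add_le _ _).trans (by linarith)
    calc infDist p F * ‖g (ν p) (b p) - L a‖ ≤ ‖p - a‖ * ε :=
          mul_le_mul hia h4 (norm_nonneg _) hpa
      _ = _ := mul_comm _ _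
  · have h1 : infDist p F * ‖g (ν p) (b p)‖ ≤ ε / 2 * ‖p - a‖ := by
      rw [← hdd, mul_assoc]
      calc d p * (d p * ‖g (ν p) (b p)‖) ≤ ‖p - a‖ * (ε / 2) :=
            mul_le_mul hcase.le (hG.2.trans hk) (by positivity) hpa
        _ = _ := mul_comm _ _
    have h2 : infDist p F * ‖L a‖ ≤ ε / 2 * ‖p - a‖ := by
      rw [← hdd]
      calc d p * d p * ‖L a‖ ≤ ‖p - a‖ * ‖p - a‖ * ‖L a‖ := by gcongr
        _ = (‖p - a‖ * ‖L a‖) * ‖p - a‖ := by ring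
        _ ≤ _ := mul_le_mul_of_nonneg_right hs.le hpa
    calc infDist p F * ‖g (ν p) (b p) - L a‖
        ≤ infDist p F * (‖g (ν p) (b p)‖ + ‖L a‖) :=
          mul_le_mul_of_nonneg_left (norm_sub_le _ _) infDist_nonneg
      _ ≤ _ := by linarith

/-! ### Differentiable selections from convex sets -/

/-- If convex constraints can locally be satisfied by differentiable functions, then they can
globally be satisfied by a differentiable function. The functions of the given partition of unity
may change sign, so they are squared and renormalized before taking convex combinations. -/
lemma AdmitsDifferentiablePartitionOfUnity.exists_selection
    (hX : AdmitsDifferentiablePartitionOfUnity X) {t : X → Set Y} (ht : ∀ x, Convex ℝ (t x))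
    (hloc : ∀ p, ∃ P : X → Y, Differentiable ℝ P ∧ ∀ᶠ x in 𝓝 p, P x ∈ t x) :
    ∃ w : X → Y, Differentiable ℝ w ∧ ∀ x, w x ∈ t x := by
  choose P hPd hP using hloc
  have hV : ∀ p, ∃ V : Set X, (∀ x ∈ V, P p x ∈ t x) ∧ IsOpen V ∧ p ∈ V := fun p =>
    eventually_nhds_iff.1 (hP p)
  choose V hVt hVo hpV using hV
  obtain ⟨Γ, ψ, hψd, ⟨hsum, hfin⟩, hsub⟩ := hX (range V) (by rintro _ ⟨p, rfl⟩; exact hVo p)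
    (eq_univ_of_forall fun x => mem_sUnion.2 ⟨V x, mem_range_self x, hpV x⟩)
  have hsub' : ∀ γ, ∃ p, tsupport (ψ γ) ⊆ V p := by
    intro γ
    obtain ⟨_, ⟨p, rfl⟩, h⟩ := hsub γ
    exact ⟨p, h⟩
  choose c hc using hsub'
  -- near every point, the two locally finite sums are finite sums over a fixed finite set
  have hlocfin : ∀ y, ∃ s : Finset Γ, ∀ᶠ x in 𝓝 y, ∀ γ, ψ γ x ≠ 0 → γ ∈ s := by
    intro y
    obtain ⟨W, hW, hWf⟩ := hfin y (mem_univ y)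
    refine ⟨hWf.toFinset, ?_⟩
    filter_upwards [hW] with x hx γ hγ
    exact hWf.mem_toFinset.2 ⟨x, hx, hγ⟩
  let S : X → ℝ := fun x => ∑ᶠ γ, ψ γ x ^ 2
  let u : X → Y := fun x => ∑ᶠ γ, ψ γ x ^ 2 • P (c γ) x
  have hS : ∀ (s : Finset Γ) x, (∀ γ, ψ γ x ≠ 0 → γ ∈ s) → S x = ∑ γ ∈ s, ψ γ x ^ 2 := by
    intro s x h
    refine finsum_eq_sum_of_support_subset _ fun γ hγ => h γ fun h0 => hγ ?_
    simp [h0]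
  have hu : ∀ (s : Finset Γ) x, (∀ γ, ψ γ x ≠ 0 → γ ∈ s) →
      u x = ∑ γ ∈ s, ψ γ x ^ 2 • P (c γ) x := by
    intro s x h
    refine finsum_eq_sum_of_support_subset _ fun γ hγ => h γ fun h0 => hγ ?_
    simp [h0]
  have hex : ∀ x, ∃ γ, ψ γ x ≠ 0 := by
    intro x
    by_contra! h
    have := hsum x (mem_univ x)
    simp [h] at this
  have hSpos : ∀ x, 0 < S x := by
    intro x
    obtain ⟨s, hs⟩ := hlocfin x
    rw [hS s x hs.self_of_nhds]
    obtain ⟨γ, hγ⟩ := hex x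
    exact Finset.sum_pos' (fun _ _ => sq_nonneg _) ⟨γ, hs.self_of_nhds γ hγ, by positivity⟩
  refine ⟨fun x => (S x)⁻¹ • u x, fun y => ?_, fun x => ?_⟩
  · obtain ⟨s, hs⟩ := hlocfin y
    have hSd : DifferentiableAt ℝ S y := by
      have : DifferentiableAt ℝ (fun x => ∑ γ ∈ s, ψ γ x ^ 2) y :=
        DifferentiableAt.fun_sum fun γ _ => (hψd γ y).pow 2
      exact this.congr_of_eventuallyEq (hs.mono fun x hx => hS s x hx)
    have hud : DifferentiableAt ℝ u y := by
      have : DifferentiableAt ℝ (fun x => ∑ γ ∈ s, ψ γ x ^ 2 • P (c γ) x) y :=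
        DifferentiableAt.fun_sum fun γ _ => ((hψd γ y).pow 2).smul (hPd (c γ) y)
      exact this.congr_of_eventuallyEq (hs.mono fun x hx => hu s x hx)
    exact (hSd.inv (hSpos y).ne').smul hud
  · classical
    obtain ⟨s, hs⟩ := hlocfin x
    have hs' : ∀ γ, ψ γ x ≠ 0 → γ ∈ s.filter (fun γ => ψ γ x ≠ 0) := fun γ hγ =>
      Finset.mem_filter.2 ⟨hs.self_of_nhds γ hγ, hγ⟩
    have hpos := hSpos x
    change (S x)⁻¹ • u x ∈ t x
    rw [hS _ x hs'] at hpos ⊢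
    rw [hu _ x hs']
    refine (ht x).centerMass_mem (fun γ _ => sq_nonneg (ψ γ x)) hpos (z := fun γ => P (c γ) x) ?_
    intro γ hγ
    exact hVt (c γ) x (hc γ (subset_tsupport _ (Finset.mem_filter.1 hγ).2))

/-- Weighted values: pairs `(y, s)` with `y` equal to `s` times an element of `t`, where `s ≥ 0`. -/
def weightedCone (t : Set Y) : Set (Y × ℝ) :=
  {q | 0 ≤ q.2 ∧ ∃ z ∈ t, q.1 = q.2 • z}

lemma weightedCone.add_smul {t : Set Y} (ht : Convex ℝ t) {q r : Y × ℝ}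
    (hq : q ∈ weightedCone t) (hr : r ∈ weightedCone t) {c : ℝ} (hc : 0 ≤ c) :
    q + c • r ∈ weightedCone t := by
  obtain ⟨hq0, z, hz, hqz⟩ := hq
  obtain ⟨hr0, z', hz', hrz⟩ := hr
  have hcr : 0 ≤ c * r.2 := mul_nonneg hc hr0
  refine ⟨by simpa using add_nonneg hq0 hcr, ?_⟩
  rcases (add_nonneg hq0 hcr).eq_or_lt with h0 | hpos
  · have h1 : q.2 = 0 := by linarith
    have h2 : c * r.2 = 0 := by linarith
    refine ⟨z, hz, ?_⟩
    simp [hqz, hrz, h1, h2, smul_smul]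
  · refine ⟨(q.2 / (q.2 + c * r.2)) • z + (c * r.2 / (q.2 + c * r.2)) • z',
      ht hz hz' (by positivity) (by positivity) (by field_simp), ?_⟩
    simp only [Prod.fst_add, Prod.snd_add, Prod.smul_fst, Prod.smul_snd, hqz, hrz, smul_eq_mul,
      smul_add, smul_smul, mul_div_cancel₀ _ hpos.ne']

lemma weightedCone.convex {t : Set Y} (ht : Convex ℝ t) : Convex ℝ (weightedCone t) := by
  intro q hq r hr a b ha hb _
  refine weightedCone.add_smul ht ?_ hr hb
  obtain ⟨hq0, z, hz, hqz⟩ := hq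
  exact ⟨mul_nonneg ha hq0, z, hz, by simp [hqz, smul_smul]⟩

/-- The selection lemma on the open set `Fᶜ`. At each scale `1 / (n + 1)` the selection lemma on the
whole space gives weighted values whose weight is `1` at distance at least `1 / (n + 1)` from `F`
and which may vanish closer to `F`. Filling up the missing weight `1 - q.2` scale after scale
produces a sequence that is stationary locally in `Fᶜ`. -/
lemma AdmitsDifferentiablePartitionOfUnity.exists_selection_compl
    (hX : AdmitsDifferentiablePartitionOfUnity X) {F : Set X} (hF : IsClosed F)
    (hFne : F.Nonempty) {t : X → Set Y} (ht : ∀ x, Convex ℝ (t x)) (htne : ∀ x, (t x).Nonempty)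
    (hloc : ∀ p ∉ F, ∃ P : X → Y, Differentiable ℝ P ∧ ∀ᶠ x in 𝓝 p, P x ∈ t x) :
    ∃ w : X → Y, (∀ x ∉ F, DifferentiableAt ℝ w x) ∧ ∀ x ∉ F, w x ∈ t x := by
  have hdc : Continuous fun x => infDist x F := continuous_infDist_pt F
  have hpos : ∀ p, p ∉ F → 0 < infDist p F := fun p hp => (hF.notMem_iff_infDist_pos hFne).1 hp
  have step : ∀ n : ℕ, ∃ v : X → Y × ℝ, Differentiable ℝ v ∧ ∀ x, v x ∈ weightedCone (t x) ∩
      {q | q.2 ≤ 1 ∧ (1 / ((n : ℝ) + 1) ≤ infDist x F → 1 ≤ q.2)} := by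
    intro n
    refine hX.exists_selection (fun x => (weightedCone.convex (ht x)).inter ?_) fun p => ?_
    · intro q hq r hr a b ha hb hab
      simp only [mem_ofPred_eq, Prod.snd_add, Prod.smul_snd, smul_eq_mul] at hq hr ⊢
      refine ⟨by nlinarith [hq.1, hr.1], fun h => ?_⟩
      nlinarith [hq.2 h, hr.2 h]
    · by_cases hp : p ∈ F
      · refine ⟨fun _ => 0, differentiable_const _, ?_⟩
        have h0 : infDist p F < 1 / ((n : ℝ) + 1) := by
          rw [infDist_zero_of_mem hp]; positivity
        filter_upwards [hdc.continuousAt.eventually_lt_const h0] with x hx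
        obtain ⟨z, hz⟩ := htne x
        exact ⟨⟨le_rfl, z, hz, by simp⟩, by simp, fun h => absurd h hx.not_ge⟩
      · obtain ⟨P, hPd, hP⟩ := hloc p hp
        refine ⟨fun x => (P x, 1), hPd.prodMk (differentiable_const _), ?_⟩
        filter_upwards [hP] with x hx
        exact ⟨⟨zero_le_one, P x, hx, by simp⟩, le_rfl, fun _ => le_rfl⟩
  choose v hvd hv using step
  let q : ℕ → X → Y × ℝ := fun n => Nat.rec (fun _ => 0) (fun k r x => r x + (1 - (r x).2) • v k x) n
  have hq0 : ∀ x, q 0 x = 0 := fun _ => rfl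
  have hqs : ∀ n x, q (n + 1) x = q n x + (1 - (q n x).2) • v n x := fun _ _ => rfl
  have hqd : ∀ n, Differentiable ℝ (q n) := by
    intro n
    induction n with
    | zero => exact differentiable_const _
    | succ n ih =>
      exact ih.add (((differentiable_const (1 : ℝ)).sub ih.snd).smul (hvd n))
  have hq1 : ∀ n x, q n x ∈ weightedCone (t x) ∧ (q n x).2 ≤ 1 := by
    intro n x
    induction n with
    | zero =>
      obtain ⟨z, hz⟩ := htne x
      rw [hq0]
      exact ⟨⟨le_rfl, z, hz, by simp⟩, by simp⟩
    | succ n ih =>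
      rw [hqs]
      refine ⟨weightedCone.add_smul (ht x) ih.1 (hv n x).1 (by linarith [ih.2]), ?_⟩
      have := (hv n x).2.1
      simp only [Prod.snd_add, Prod.smul_snd, smul_eq_mul]
      nlinarith [ih.2]
  have hqfull : ∀ (n : ℕ) x, 1 / ((n : ℝ) + 1) ≤ infDist x F → (q (n + 1) x).2 = 1 := by
    intro n x h
    have : (v n x).2 = 1 := le_antisymm (hv n x).2.1 ((hv n x).2.2 h)
    rw [hqs]
    simp [this]
  have hstat : ∀ (n m : ℕ) x, 1 / ((n : ℝ) + 1) ≤ infDist x F → n + 1 ≤ m → q m x = q (n + 1) x := by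
    intro n m x h hm
    induction m, hm using Nat.le_induction with
    | base => rfl
    | succ m hm ih => rw [hqs, ih, hqfull n x h]; simp
  have hN : ∀ x, ∃ n : ℕ, x ∉ F → 1 / ((n : ℝ) + 1) < infDist x F := by
    intro x
    by_cases hx : x ∈ F
    · exact ⟨0, fun h => absurd hx h⟩
    · obtain ⟨n, hn⟩ := exists_nat_one_div_lt (hpos x hx)
      exact ⟨n, fun _ => hn⟩
  choose N hN using hN
  have hw : ∀ (n : ℕ) x, x ∉ F → 1 / ((n : ℝ) + 1) ≤ infDist x F → q (N x + 1) x = q (n + 1) x := by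
    intro n x hx h
    rw [← hstat n (max (n + 1) (N x + 1)) x h (le_max_left _ _),
      ← hstat (N x) (max (n + 1) (N x + 1)) x (hN x hx).le (le_max_right _ _)]
  refine ⟨fun x => (q (N x + 1) x).1, fun y hy => ?_, fun x hx => ?_⟩
  · have : DifferentiableAt ℝ (fun x => (q (N y + 1) x).1) y := ((hqd (N y + 1)) y).fst
    refine this.congr_of_eventuallyEq ?_
    filter_upwards [hdc.continuousAt.eventually_const_lt (hN y hy),
      hF.isOpen_compl.mem_nhds hy] with x hx hxF
    rw [hw (N y) x hxF hx.le]
  · obtain ⟨⟨-, z, hz, h⟩, -⟩ := hq1 (N x + 1) x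
    rw [hqfull (N x) x (hN x hx).le, one_smul] at h
    change (q (N x + 1) x).1 ∈ t x
    rwa [h]

/-! ### The extension -/

/-- Off `F` the extension is a convex combination of affine maps `x ↦ f b + A p (x - b)`, with
`p ∉ F`, `‖x - p‖ < d(p, F) / 2` and `b ∈ F` an almost nearest point to `p`. Each of them agrees
with the first order expansion of `f` at `a ∈ F` up to `o(‖x - a‖)`, hence so do their convex
combinations; no control on the derivatives of the partition of unity is involved. -/
lemma BaireOneOn.exists_extension (hX : AdmitsDifferentiablePartitionOfUnity X) {F : Set X}
    (hF : IsClosed F) (hFne : F.Nonempty) {f : X → Y} {L : X → X →L[ℝ] Y}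
    (hL : ∀ a ∈ F, HasFDerivWithinAt f (L a) F a) (hB : BaireOneOn L F) :
    ∃ fbar : X → Y, (∀ x ∈ F, fbar x = f x) ∧ Differentiable ℝ fbar ∧
      ∀ a ∈ F, fderiv ℝ fbar a = L a := by
  classical
  obtain ⟨A, hA⟩ := hB.exists_approx hF hFne
  have hpos : ∀ p, p ∉ F → 0 < infDist p F := fun p hp => (hF.notMem_iff_infDist_pos hFne).1 hp
  have hb : ∀ p, ∃ b, p ∉ F → b ∈ F ∧ dist p b < 2 * infDist p F := by
    intro p
    by_cases hp : p ∈ F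
    · exact ⟨p, fun h => absurd hp h⟩
    · obtain ⟨b, hb, hb'⟩ := (infDist_lt_iff (r := 2 * infDist p F) hFne).1
        (by linarith [hpos p hp])
      exact ⟨b, fun _ => ⟨hb, hb'⟩⟩
  choose b hb using hb
  let P : X → X → Y := fun p x => f (b p) + A p (x - b p)
  let t : X → Set Y := fun x =>
    if x ∈ F then univ else convexHull ℝ {y | ∃ p ∉ F, ‖x - p‖ < infDist p F / 2 ∧ y = P p x}
  have htc : ∀ x, Convex ℝ (t x) := by
    intro x
    by_cases hx : x ∈ F
    · simp only [t, if_pos hx]; exact convex_univ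
    · simp only [t, if_neg hx]; exact convex_convexHull ℝ _
  have hmemt : ∀ p ∉ F, ∀ x, ‖x - p‖ < infDist p F / 2 → P p x ∈ t x := by
    intro p hp x hx
    by_cases hxF : x ∈ F
    · simp only [t, if_pos hxF]; trivial
    · simp only [t, if_neg hxF]; exact subset_convexHull ℝ _ ⟨p, hp, hx, rfl⟩
  have htne : ∀ x, (t x).Nonempty := by
    intro x
    by_cases hx : x ∈ F
    · simp only [t, if_pos hx]; exact ⟨0, trivial⟩
    · exact ⟨P x x, hmemt x hx x (by simpa using hpos x hx)⟩
  obtain ⟨w, hwd, hwt⟩ := hX.exists_selection_compl hF hFne htc htne (by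
    intro p hp
    refine ⟨P p, ?_, ?_⟩
    · exact (differentiable_const _).add
        ((A p).differentiable.comp (differentiable_id.sub (differentiable_const _)))
    · filter_upwards [Metric.ball_mem_nhds p (half_pos (hpos p hp))] with x hx
      rw [mem_ball, dist_eq_norm] at hx
      exact hmemt p hp x hx)
  have hwF : ∀ a ∈ F, HasFDerivAt (fun x => if x ∈ F then f x else w x) (L a) a := by
    intro a ha
    rw [hasFDerivAt_iff_isLittleO, Asymptotics.isLittleO_iff]
    intro ε hε
    -- an affine piece at `x` involves points of `F` and of `Fᶜ` within `6 ‖x - a‖` of `a`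
    have h1 := (hasFDerivWithinAt_iff_isLittleO.1 (hL a ha)).def
      (c := ε / 12) (by positivity)
    have h2 := hA a ha (ε / 12) (by positivity)
    rw [eventually_nhdsWithin_iff] at h1 h2
    obtain ⟨δ₁, hδ₁, h1⟩ := Metric.eventually_nhds_iff.1 h1
    obtain ⟨δ₂, hδ₂, h2⟩ := Metric.eventually_nhds_iff.1 h2
    have hδ : 0 < min (δ₁ / 6) (δ₂ / 6) := by positivity
    filter_upwards [Metric.ball_mem_nhds a hδ] with x hx
    rw [mem_ball, dist_eq_norm, lt_min_iff] at hx
    have hxa : 0 ≤ ‖x - a‖ := norm_nonneg _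
    simp only [if_pos ha]
    by_cases hxF : x ∈ F
    · simp only [if_pos hxF]
      refine (h1 (y := x) (by rw [dist_eq_norm]; linarith) hxF).trans ?_
      nlinarith
    simp only [if_neg hxF]
    have hball : t x ⊆ closedBall (f a + L a (x - a)) (ε * ‖x - a‖) := by
      simp only [t, if_neg hxF]
      refine convexHull_min ?_ (convex_closedBall _ _)
      rintro _ ⟨p, hp, hxp, rfl⟩
      obtain ⟨hbF, hpb⟩ := hb p hp
      rw [dist_eq_norm] at hpb
      have d0 := hpos p hp
      have d1 : infDist p F ≤ ‖p - a‖ := by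
        rw [← dist_eq_norm]; exact infDist_le_dist_of_mem ha
      have d2 : ‖p - a‖ ≤ ‖x - p‖ + ‖x - a‖ := by
        rw [show p - a = (x - a) - (x - p) by abel]
        linarith [norm_sub_le (x - a) (x - p)]
      have d3 : ‖x - b p‖ ≤ ‖x - p‖ + ‖p - b p‖ := by
        rw [show x - b p = (x - p) + (p - b p) by abel]
        exact norm_add_le _ _
      have d4 : ‖b p - a‖ ≤ ‖x - a‖ + ‖x - b p‖ := by
        rw [show b p - a = (x - a) - (x - b p) by abel]
        exact norm_sub_le _ _
      have e1 := h1 (y := b p) (by rw [dist_eq_norm]; linarith) hbF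
      have e2 := h2 (y := p) (by rw [dist_eq_norm]; linarith) hp
      have e3 : ‖(A p - L a) (x - b p)‖ ≤ 3 * (ε / 12 * ‖p - a‖) := by
        refine ((A p - L a).le_opNorm _).trans ?_
        have : ‖A p - L a‖ * ‖x - b p‖ ≤ ‖A p - L a‖ * (3 * infDist p F) :=
          mul_le_mul_of_nonneg_left (by linarith) (norm_nonneg _)
        linarith
      rw [mem_closedBall, dist_eq_norm]
      have e4 : P p x - (f a + L a (x - a)) =
          (f (b p) - f a - L a (b p - a)) + (A p - L a) (x - b p) := by
        simp only [P, _root_.sub_apply, map_sub]; abel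
      rw [e4]
      refine (norm_add_le _ _).trans ?_
      nlinarith
    have := hball (hwt x hxF)
    rwa [mem_closedBall, dist_eq_norm, ← sub_sub] at this
  refine ⟨fun x => if x ∈ F then f x else w x, fun x hx => if_pos hx, fun x => ?_,
    fun a ha => (hwF a ha).fderiv⟩
  by_cases hx : x ∈ F
  · exact (hwF x hx).differentiableAt
  · refine (hwd x hx).congr_of_eventuallyEq ?_
    filter_upwards [hF.isOpen_compl.mem_nhds hx] with y hy
    exact if_neg hy

end

/-- Characterization of extendibility to an everywhere Fréchet differentiable function with
pre-assigned derivative `L` on `F`: such an extension exists if and only if `L` is Baire one. -/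
theorem differentiable_extension_iff_baire_one
    {X : Type*} [NormedAddCommGroup X] [NormedSpace ℝ X]
    {Y : Type*} [NormedAddCommGroup Y] [NormedSpace ℝ Y]
    (hX : AdmitsDifferentiablePartitionOfUnity X)
    (F : Set X) (hF : IsClosed F) (hFne : F.Nonempty)
    (f : X → Y) (L : X → X →L[ℝ] Y)
    (hL : ∀ a ∈ F, HasFDerivWithinAt f (L a) F a) :
    BaireOneOn L F ↔
      ∃ fbar : X → Y, (∀ x ∈ F, fbar x = f x) ∧
        Differentiable ℝ fbar ∧
        ∀ a ∈ F, fderiv ℝ fbar a = L a := by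
  constructor
  · exact fun hB => hB.exists_extension hX hF hFne hL
  · rintro ⟨fbar, -, hd, hfd⟩
    obtain ⟨g, hg, hgL⟩ := baireOneOn_fderiv hd F
    exact ⟨g, hg, fun a ha => hfd a ha ▸ hgL a ha⟩
end

section
/- Let n ∈ ℕ, F ⊆ ℝⁿ a closed set, Y a normed linear space, f : F → Y an arbitrary function and L : F → L(ℝⁿ,Y) a function that is Baire one on F. Then there exists a function f̄ : ℝⁿ → Y such that: (i) f̄ = f on F; (ii) if a ∈ F and f is continuous at a with respect to F, then f̄ is continuous at a; (iii) if a ∈ F, α ∈ (0,1] and f is α-Hölder continuous at a with respect to F, then f̄ is α-Hölder continuous at a with respect to ℝⁿ (in particular, if f is Lipschitz at a with respect to F, then f̄ is Lipschitz at a); (iv) if a ∈ F and L(a) is a relative Fréchet derivative of f at a with respect to F, then f̄ is Fréchet differentiable at a with derivative L(a); (v) f̄ restricted to ℝⁿ \ F is C^∞; (vi) if a ∈ F, L is continuous at a with respect to F and L(a) is a relative strict derivative of f at a with respect to F, then the Fréchet derivative f̄′ is continuous at a with respect to the set (ℝⁿ \ F) ∪ {a}, and L(a) is a strict derivative of f̄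 at a with respect to ℝⁿ; (vii) if a ∈ F, R > 0, L is bounded on B(a,R) ∩ F and f is Lipschitz continuous on B(a,R) ∩ F, then f̄ is Lipschitz continuous on B(a,r) for every r < R; and if L is bounded on F and f is Lipschitz continuous on F, then f̄ is Lipschitz continuous on ℝⁿ. -/
/-!
The extension is a Whitney-type sum: off `F`,
`f̄ x = ∑ c, φ c x • (f (p c) + A c (x - p c))`, where `φ` is a smooth partition of unity on `Fᶜ`
subordinate to balls `B(c, dist(c, F) / 4)`, `p c` is a point of `F` nearest to `c`, and `A c` is
an operator which approximates `L` near `p c` at the scale `dist(c, F)`.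

*Choice of `A c`* (`exists_scale_selection`).  Let `g n → L` pointwise on `F`, with `g n`
continuous.  For `q ∈ F` and a scale `d > 0` take the largest `n` (at most about `1 / d`) with
`n ^ 3 * d ≤ 1` such that `g n` deviates from `g n q` by at most `1 / (n + 1)` on
`F ∩ B(q, n ^ 2 * d)`.  Then `n → ∞` as `(q, d) → (a, 0)`.  The operator is a value `L u` with
`u ∈ F ∩ B(q, n ^ 2 * d)` and `‖L u‖ ≤ n` which is almost as close to `g n q` as possible (and `0`
if there is no such `u`).  If `a ∈ F ∩ B(q, n ^ 2 * d)`, then `a` competes with `u`, so `L u` is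
close to `L a`; otherwise `d` is so small compared with `‖q - a‖` that the bound `‖L u‖ ≤ n` is
enough.  In both cases `‖A - L a‖ * d = o(‖q - a‖ + d)`, which gives the pointwise assertions about
continuity, Hölder continuity and Fréchet differentiability.  Since `A` is a value of `L` at a
nearby point, or `0`, boundedness of `L` is inherited by `A`; if `L` is continuous at `a`, then `q`
itself is admissible as `u`, which rules out `0`, and `A → L a`.

*Strict derivatives and Lipschitz continuity* both follow from `extend_lipschitz_estimate`: if
`f - T` is `ε`-Lipschitz on `F` near `a` and `‖A c - T‖ ≤ ε` near `a`, then `f̄ - T` is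
`C ε`-Lipschitz near `a`, with `C` depending only on the partition.  This uses the bound
`∑ c, |φ c y - φ c x| ≤ C ‖y - x‖ / dist(x, F)`, where the finite dimension enters through a bound
on the number of overlapping balls.  With `T = L a` and `ε → 0` it gives the strict derivative, and
hence continuity of the Fréchet derivative; with `T = 0` it gives the Lipschitz statements.
-/

open Filter Metric Set Topology

/-- `T` is a relative strict derivative of `f` at `a` with respect to `A`. -/
def RelStrictDerivAt {X : Type*} [NormedAddCommGroup X] [NormedSpace ℝ X]
    {Y : Type*} [NormedAddCommGroup Y] [NormedSpace ℝ Y]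
    (f : X → Y) (A : Set X) (T : X →L[ℝ] Y) (a : X) : Prop :=
  ∀ ε : ℝ, 0 < ε → ∃ δ : ℝ, 0 < δ ∧ ∀ x ∈ A, ∀ y ∈ A,
    ‖x - a‖ < δ → ‖y - a‖ < δ → ‖f y - f x - T (y - x)‖ ≤ ε * ‖y - x‖

/-- `f` is Lipschitz continuous on the set `S`. -/
def LipschitzOnSet {X : Type*} [NormedAddCommGroup X] {Y : Type*} [NormedAddCommGroup Y]
    (f : X → Y) (S : Set X) : Prop :=
  ∃ K : ℝ, ∀ x ∈ S, ∀ y ∈ S, ‖f y - f x‖ ≤ K * ‖y - x‖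

/-! ### Approximating a Baire one function at a given scale -/

/-- Selection of an operator `A q d` approximating `L` near `q ∈ F` at the scale `d`, for `L` Baire
one on `F`.  Each `A q d` is `0` or a value of `L` on `F`, taken close to `a` when `(q, d)` is close
to `(a, 0)`; the distance from `A q d` to `L a` is `o(‖q - a‖ + d) / d`, and it tends to `0` if `L`
is continuous at `a`. -/
lemma exists_scale_selection {X Z : Type*} [NormedAddCommGroup X] [NormedAddCommGroup Z]
    {F : Set X} {L : X → Z} (hL : BaireOneOn L F) :
    ∃ A : X → ℝ → Z,
      (∀ p d, A p d = 0 ∨ ∃ u ∈ F, A p d = L u) ∧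
      (∀ a ∈ F, ∀ r : ℝ, 0 < r → ∃ δ : ℝ, 0 < δ ∧ ∀ p ∈ F, ∀ d : ℝ, 0 < d → d < δ →
        ‖p - a‖ < δ → A p d = 0 ∨ ∃ u ∈ F, ‖u - a‖ < r ∧ A p d = L u) ∧
      (∀ a ∈ F, ∀ ε : ℝ, 0 < ε → ∃ δ : ℝ, 0 < δ ∧ ∀ p ∈ F, ∀ d : ℝ, 0 < d → d < δ →
        ‖p - a‖ < δ → ‖A p d - L a‖ * d ≤ ε * (‖p - a‖ + d)) ∧
      (∀ a ∈ F, ContinuousWithinAt L F a → ∀ ε : ℝ, 0 < ε → ∃ δ : ℝ, 0 < δ ∧ ∀ p ∈ F,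
        ∀ d : ℝ, 0 < d → d < δ → ‖p - a‖ < δ → ‖A p d - L a‖ ≤ ε) := by
  classical
  obtain ⟨g, hg, hgL⟩ := hL
  -- `Good q d n`: at the scale `d`, the oscillation of `g n` around `q` is under control
  let Good : X → ℝ → ℕ → Prop := fun p d n =>
    (n : ℝ) ^ 3 * d ≤ 1 ∧ ∀ u ∈ F, ‖u - p‖ ≤ (n : ℝ) ^ 2 * d → ‖g n u - g n p‖ ≤ 1 / (n + 1)
  let N : X → ℝ → ℕ := fun p d => Nat.findGreatest (Good p d) ⌈1 / d⌉₊
  have hN : ∀ p d, Good p d (N p d) := by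
    intro p d
    refine Nat.findGreatest_spec (P := Good p d) (Nat.zero_le _) ⟨by simp, fun u _ hup => ?_⟩
    have : u = p := by
      rw [← sub_eq_zero, ← norm_le_zero_iff]; simpa using hup
    simp [this]
  -- the selected index tends to infinity as `(p, d)` tends to `(a, 0)`
  have hNinf : ∀ a ∈ F, ∀ m : ℕ, ∃ δ : ℝ, 0 < δ ∧ ∀ p ∈ F, ∀ d : ℝ, 0 < d → d < δ →
      ‖p - a‖ < δ → m ≤ N p d := by
    intro a ha m
    have h1 := Metric.continuousWithinAt_iff.1 (hg m a ha) (1 / (2 * ((m : ℝ) + 1))) (by positivity)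
    obtain ⟨η, hη, h1⟩ := h1
    refine ⟨min (η / 2) (min (1 / ((m : ℝ) ^ 3 + 1)) (η / (2 * ((m : ℝ) ^ 2 + 1)))),
      by positivity, fun p hp d hd hdδ hpa => ?_⟩
    obtain ⟨hd1, hd2, hd3⟩ : d < η / 2 ∧ d < 1 / ((m : ℝ) ^ 3 + 1) ∧
      d < η / (2 * ((m : ℝ) ^ 2 + 1)) := by simpa [lt_min_iff] using hdδ
    have hpa1 : ‖p - a‖ < η / 2 := hpa.trans_le (min_le_left _ _)
    rw [lt_div_iff₀ (by positivity)] at hd2 hd3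
    have hgood : Good p d m := by
      refine ⟨by nlinarith, fun u hu hup => ?_⟩
      have hua : dist u a < η := by
        rw [dist_eq_norm]
        calc ‖u - a‖ = ‖(u - p) + (p - a)‖ := by congr 1; abel
          _ ≤ ‖u - p‖ + ‖p - a‖ := norm_add_le _ _
          _ < η := by nlinarith
      have e1 := h1 hu hua
      have e2 := h1 hp (x := p) (by rw [dist_eq_norm]; linarith)
      have e3 := dist_triangle_right (g m u) (g m p) (g m a)
      have e4 : 1 / (2 * ((m : ℝ) + 1)) + 1 / (2 * ((m : ℝ) + 1)) = 1 / (m + 1) := by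
        field_simp; norm_num
      rw [← dist_eq_norm]; linarith
    refine Nat.le_findGreatest ?_ hgood
    have hm : (m : ℝ) ≤ (m : ℝ) ^ 3 := by
      exact_mod_cast Nat.le_self_pow (by norm_num) m
    have : (m : ℝ) ≤ 1 / d := by
      rw [le_div_iff₀ hd]; nlinarith [hgood.1]
    exact_mod_cast this.trans (Nat.le_ceil _)
  let S : X → ℝ → Set X := fun p d =>
    {u | u ∈ F ∧ ‖u - p‖ ≤ (N p d : ℝ) ^ 2 * d ∧ ‖L u‖ ≤ N p d}
  -- an almost best approximation of `g n p` by values of `L` on `S p d`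
  have hsel : ∀ p d, ∃ z : Z, (S p d = ∅ ∧ z = 0) ∨
      ∃ u ∈ S p d, z = L u ∧ ∀ v ∈ S p d,
        ‖L u - g (N p d) p‖ ≤ ‖L v - g (N p d) p‖ + 1 / ((N p d : ℝ) + 1) := by
    intro p d
    rcases (S p d).eq_empty_or_nonempty with h | h
    · exact ⟨0, Or.inl ⟨h, rfl⟩⟩
    · have hpos : (0 : ℝ) < 1 / ((N p d : ℝ) + 1) := by positivity
      obtain ⟨_, ⟨u, hu, rfl⟩, hlt⟩ := Real.lt_sInf_add_pos
        (s := (fun u => ‖L u - g (N p d) p‖) '' S p d) (h.image _) hpos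
      refine ⟨L u, Or.inr ⟨u, hu, rfl, fun v hv => ?_⟩⟩
      have : sInf ((fun u => ‖L u - g (N p d) p‖) '' S p d) ≤ ‖L v - g (N p d) p‖ :=
        csInf_le ⟨0, by rintro _ ⟨w, _, rfl⟩; exact norm_nonneg _⟩ ⟨v, hv, rfl⟩
      linarith
  choose A hA using hsel
  have hrad : ∀ p d, 0 < N p d → (N p d : ℝ) ^ 2 * d ≤ 1 / N p d := by
    intro p d h
    have h' : (0 : ℝ) < N p d := by exact_mod_cast h
    rw [le_div_iff₀ h']
    nlinarith [(hN p d).1]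
  have hnear : ∀ a ∈ F, ∀ r : ℝ, 0 < r → ∃ δ : ℝ, 0 < δ ∧ ∀ p ∈ F, ∀ d : ℝ, 0 < d → d < δ →
        ‖p - a‖ < δ → ∀ u ∈ S p d, ‖u - a‖ < r := by
    intro a ha r hr
    obtain ⟨m, hm⟩ := exists_nat_gt (2 / r)
    obtain ⟨δ, hδ, h⟩ := hNinf a ha m
    refine ⟨min δ (r / 2), by positivity, fun p hp d hd hdδ hpa u hu => ?_⟩
    have hmN := h p hp d hd (hdδ.trans_le (min_le_left _ _)) (hpa.trans_le (min_le_left _ _))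
    have hmN' : (m : ℝ) ≤ N p d := by exact_mod_cast hmN
    have hm0 : 0 < 2 / r := by positivity
    have hN0 : (0 : ℝ) < N p d := by linarith
    have h1 := hrad p d (by exact_mod_cast hN0)
    have h2 : 1 / (N p d : ℝ) < r / 2 := by
      rw [div_lt_iff₀ hN0]
      have : 2 / r < N p d := by linarith
      rw [div_lt_iff₀ hr] at this
      linarith
    have h3 := hpa.trans_le (min_le_right _ _)
    calc ‖u - a‖ = ‖(u - p) + (p - a)‖ := by congr 1; abel
          _ ≤ ‖u - p‖ + ‖p - a‖ := norm_add_le _ _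
          _ < r := by linarith [hu.2.1]
  refine ⟨A, ?_, ?_, ?_, ?_⟩
  · intro p d
    rcases hA p d with h | ⟨u, hu, h, -⟩
    · exact Or.inl h.2
    · exact Or.inr ⟨u, hu.1, h⟩
  · intro a ha r hr
    obtain ⟨δ, hδ, h⟩ := hnear a ha r hr
    refine ⟨δ, hδ, fun p hp d hd hdδ hpa => ?_⟩
    rcases hA p d with h' | ⟨u, hu, h', -⟩
    · exact Or.inl h'.2
    · exact Or.inr ⟨u, hu.1, h p hp d hd hdδ hpa u hu, h'⟩
  · intro a ha ε hε
    obtain ⟨m₁, hm₁⟩ := exists_nat_gt ‖L a‖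
    obtain ⟨m₂, hm₂⟩ := exists_nat_gt (6 / ε)
    obtain ⟨m₃, hm₃⟩ := Metric.tendsto_atTop.1 (hgL a ha) (ε / 4) (by positivity)
    obtain ⟨δ, hδ, h⟩ := hNinf a ha (max m₁ (max m₂ m₃))
    refine ⟨δ, hδ, fun p hp d hd hdδ hpa => ?_⟩
    have hmN := h p hp d hd hdδ hpa
    simp only [max_le_iff] at hmN
    obtain ⟨n₁, n₂, n₃⟩ := hmN
    have n₁' : (m₁ : ℝ) ≤ N p d := by exact_mod_cast n₁
    have n₂' : (m₂ : ℝ) ≤ N p d := by exact_mod_cast n₂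
    have h60 : 0 < 6 / ε := by positivity
    have hN0 : (0 : ℝ) < N p d := by linarith
    have hN6 : 6 < N p d * ε := by
      rw [← div_lt_iff₀ hε]; linarith
    -- either `a` competes in the choice of `A p d`, or `d` is negligible against `‖p - a‖ / n`
    by_cases hclose : ‖a - p‖ ≤ (N p d : ℝ) ^ 2 * d
    · have haS : a ∈ S p d := ⟨ha, hclose, by linarith⟩
      rcases hA p d with h' | ⟨u, hu, h', hmin⟩
      · rw [h'.1] at haS; exact haS.elim
      · have e1 := hmin a haS
        have e2 := (hN p d).2 a ha hclose
        have e3 := hm₃ _ n₃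
        rw [dist_eq_norm] at e3
        have e4 : 1 / ((N p d : ℝ) + 1) ≤ ε / 6 := by
          rw [div_le_iff₀ (by positivity)]; nlinarith
        have e5 : ‖L a - g (N p d) p‖ ≤ ‖g (N p d) a - L a‖ + ‖g (N p d) a - g (N p d) p‖ := by
          rw [norm_sub_rev (g (N p d) a) (L a)]
          exact norm_sub_le_norm_sub_add_norm_sub _ _ _
        have e6 : ‖L u - L a‖ ≤ ‖L u - g (N p d) p‖ + ‖L a - g (N p d) p‖ := by
          rw [norm_sub_rev (L a)]
          exact norm_sub_le_norm_sub_add_norm_sub _ _ _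
        have e7 : ‖A p d - L a‖ ≤ ε := by rw [h']; linarith
        nlinarith [norm_nonneg (p - a)]
    · have hAn : ‖A p d‖ ≤ N p d := by
        rcases hA p d with h' | ⟨u, hu, h', -⟩
        · rw [h'.2, norm_zero]; exact hN0.le
        · rw [h']; exact hu.2.2
      have e1 : ‖A p d - L a‖ ≤ 2 * N p d := by
        have := norm_sub_le (A p d) (L a); linarith
      rw [norm_sub_rev, not_le] at hclose
      have e2 : ‖A p d - L a‖ * d ≤ 2 * N p d * d := by gcongr
      have e3 : 2 * N p d * d ≤ ε * (N p d) ^ 2 * d := by nlinarith [mul_pos hN0 hd]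
      nlinarith
  · intro a ha hc ε hε
    obtain ⟨r, hr, hrL⟩ := Metric.continuousWithinAt_iff.1 hc (min ε 1) (by positivity)
    obtain ⟨δ₁, hδ₁, h1⟩ := hnear a ha r hr
    obtain ⟨m, hm⟩ := exists_nat_gt (‖L a‖ + 1)
    obtain ⟨δ₂, hδ₂, h2⟩ := hNinf a ha m
    refine ⟨min r (min δ₁ δ₂), by positivity, fun p hp d hd hdδ hpa => ?_⟩
    simp only [lt_min_iff] at hdδ hpa
    have hmN := h2 p hp d hd hdδ.2.2 hpa.2.2
    have hmN' : (m : ℝ) ≤ N p d := by exact_mod_cast hmN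
    have hpS : p ∈ S p d := by
      refine ⟨hp, by rw [sub_self, norm_zero]; positivity, ?_⟩
      have e := hrL hp (x := p) (by rw [dist_eq_norm]; exact hpa.1)
      rw [dist_eq_norm] at e
      have := norm_sub_norm_le (L p) (L a)
      have := min_le_right ε 1
      linarith
    rcases hA p d with h' | ⟨u, hu, h', -⟩
    · rw [h'.1] at hpS; exact hpS.elim
    · have e := hrL hu.1 (by rw [dist_eq_norm]; exact h1 p hp d hd hdδ.2.1 hpa.2.1 u hu)
      rw [dist_eq_norm] at e
      rw [h']
      exact e.le.trans (min_le_left _ _)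

/-! ### Whitney partitions of unity -/

/-- A smooth partition of unity on the complement of `F`, with the size of its pieces governed by
the distance to `F`.  The pieces are indexed by their centers `c : E`, and `φ c = 0` for all points
`c` which are not used as centers.  Around `x ∉ F` only the finitely many pieces with index in
`nhd x` are active, and `C` is the constant in the estimate for the variation of the pieces. -/
structure WhitneyPartition {E : Type*} [NormedAddCommGroup E] [NormedSpace ℝ E]
    (F : Set E) where
  φ : E → E → ℝ
  nhd : E → Finset E
  C : ℝ
  nonneg : ∀ c x, 0 ≤ φ c x
  near : ∀ c x, φ c x ≠ 0 → c ∉ F ∧ ‖x - c‖ ≤ infDist c F / 4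
  eq_zero : ∀ x ∉ F, ∀ y, ‖y - x‖ < infDist x F / 8 → ∀ c ∉ nhd x, φ c y = 0
  sum_eq_one : ∀ x ∉ F, ∀ y, ‖y - x‖ < infDist x F / 8 → ∑ c ∈ nhd x, φ c y = 1
  smooth : ∀ c, ContDiffOn ℝ (⊤ : ℕ∞) (φ c) Fᶜ
  lip : ∀ x ∉ F, ∀ y, ‖y - x‖ < infDist x F / 8 →
    ∑ c ∈ nhd x, |φ c y - φ c x| ≤ C * ‖y - x‖ / infDist x F

/-- In a ball of radius `r / 2`, the number of points at mutual distance at least `r / 32` is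
bounded independently of `r` and of the center, by compactness of the unit ball. -/
lemma exists_packing_bound (E : Type*) [NormedAddCommGroup E] [NormedSpace ℝ E]
    [FiniteDimensional ℝ E] :
    ∃ N : ℕ, ∀ (x : E) (r : ℝ), 0 < r → ∀ s : Set E, (∀ c ∈ s, ‖c - x‖ ≤ r / 2) →
      (∀ c ∈ s, ∀ d ∈ s, c ≠ d → r / 32 ≤ ‖c - d‖) → s.Finite ∧ s.ncard ≤ N := by
  have : ProperSpace E := FiniteDimensional.proper ℝ E
  obtain ⟨t, -, htf, ht⟩ := Metric.finite_approx_of_totallyBounded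
    (isCompact_closedBall (0 : E) (1 / 2)).totallyBounded (1 / 64) (by norm_num)
  refine ⟨t.ncard, fun x r hr s hs hsep => ?_⟩
  have hex : ∀ c ∈ s, ∃ z ∈ t, dist (r⁻¹ • (c - x)) z < 1 / 64 := by
    intro c hc
    have : r⁻¹ • (c - x) ∈ closedBall (0 : E) (1 / 2) := by
      rw [mem_closedBall_zero_iff, norm_smul, norm_inv, Real.norm_of_nonneg hr.le,
        inv_mul_le_iff₀ hr]
      linarith [hs c hc]
    simpa using ht this
  choose! z hzt hz using hex
  have hinj : InjOn z s := by
    intro c hc d hd hcd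
    by_contra hne
    have h1 := hsep c hc d hd hne
    have h2 : dist (r⁻¹ • (c - x)) (r⁻¹ • (d - x)) < 1 / 32 := by
      have e1 := hz c hc
      have e2 := hz d hd
      rw [← hcd] at e2
      have := dist_triangle_right (r⁻¹ • (c - x)) (r⁻¹ • (d - x)) (z c)
      linarith
    rw [dist_eq_norm, ← smul_sub, sub_sub_sub_cancel_right, norm_smul, norm_inv,
      Real.norm_of_nonneg hr.le, inv_mul_lt_iff₀ hr] at h2
    linarith
  exact ⟨Set.Finite.of_injOn hzt hinj htf, Set.ncard_le_ncard_of_injOn z hzt hinj htf⟩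

/-- A maximal family of points off `F` whose mutual distances are at least `1 / 16` of their
distances to `F`; by maximality the balls `B(c, dist(c, F) / 8)` cover the complement of `F`. -/
lemma exists_whitney_net {E : Type*} [NormedAddCommGroup E] (F : Set E) :
    ∃ S ⊆ Fᶜ, (∀ c ∈ S, ∀ d ∈ S, c ≠ d → infDist c F / 16 ≤ ‖c - d‖) ∧
      ∀ x ∉ F, 0 < infDist x F → ∃ c ∈ S, ‖x - c‖ ≤ infDist c F / 8 := by
  let R : E → E → Prop := fun c d => infDist c F / 16 ≤ ‖c - d‖ ∧ infDist d F / 16 ≤ ‖c - d‖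
  obtain ⟨S, hS⟩ := zorn_subset {s : Set E | s ⊆ Fᶜ ∧ s.Pairwise R} (by
    intro c hc hchain
    refine ⟨⋃₀ c, ⟨sUnion_subset fun s hs => (hc hs).1, ?_⟩, fun s hs => subset_sUnion_of_mem hs⟩
    exact (Set.pairwise_sUnion hchain.directedOn).2 fun s hs => (hc hs).2)
  refine ⟨S, hS.prop.1, fun c hc d hd hcd => (hS.prop.2 hc hd hcd).1, fun x hx hxpos => ?_⟩
  by_contra! hcon
  have hxS : x ∉ S := fun h => by
    have := hcon x h
    rw [sub_self, norm_zero] at this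
    linarith
  have hins : insert x S ∈ {s : Set E | s ⊆ Fᶜ ∧ s.Pairwise R} := by
    refine ⟨insert_subset hx hS.prop.1, ?_⟩
    have hsymm : Std.Symm R := ⟨fun c d h => by
      change _ ≤ ‖d - c‖ ∧ _ ≤ ‖d - c‖
      rw [norm_sub_rev]
      exact ⟨h.2, h.1⟩⟩
    refine (Set.pairwise_insert_of_symm_of_notMem hxS).2 ⟨hS.prop.2, fun c hc => ?_⟩
    · have h1 := hcon c hc
      have h2 : infDist x F ≤ infDist c F + ‖x - c‖ := by
        rw [← dist_eq_norm]; exact infDist_le_infDist_add_dist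
      have h3 : 0 ≤ infDist c F := infDist_nonneg
      exact ⟨by linarith, by linarith⟩
  exact hxS (hS.le_of_ge hins (subset_insert x S) (mem_insert x S))

/-- Whitney partitions exist in finite dimension: normalize bump functions supported in the balls
`B(c, dist(c, F) / 4)`, where `c` runs over a net whose mesh is proportional to the distance to
`F`. -/
lemma exists_whitneyPartition {E : Type*} [NormedAddCommGroup E] [NormedSpace ℝ E]
    [FiniteDimensional ℝ E] {F : Set E} (hF : IsClosed F) (hne : F.Nonempty) :
    Nonempty (WhitneyPartition F) := by
  classical
  obtain ⟨N, hN⟩ := exists_packing_bound E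
  obtain ⟨S, hSF, hsep, hcov⟩ := exists_whitney_net F
  let d : E → ℝ := fun x => infDist x F
  have hd0 : ∀ x, 0 ≤ d x := fun x => infDist_nonneg
  have hdpos : ∀ x ∉ F, 0 < d x := fun x hx => (hF.notMem_iff_infDist_pos hne).1 hx
  have hdl : ∀ x y, d x ≤ d y + ‖x - y‖ := fun x y => by
    rw [← dist_eq_norm]; exact infDist_le_infDist_add_dist
  let Θ : ContDiffBump (0 : E) := ⟨1 / 8, 1 / 4, by norm_num, by norm_num⟩
  obtain ⟨K, hK⟩ := (Θ.contDiff (n := 1)).lipschitzWith_of_hasCompactSupport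
    Θ.hasCompactSupport one_ne_zero
  let ψ : E → E → ℝ := fun c x => if c ∈ S then Θ ((d c)⁻¹ • (x - c)) else 0
  have hψ0 : ∀ c x, 0 ≤ ψ c x := fun c x => by
    by_cases hc : c ∈ S
    · simpa only [ψ, if_pos hc] using Θ.nonneg
    · simp only [ψ, if_neg hc, le_refl]
  have hψsupp : ∀ c x, ψ c x ≠ 0 → c ∈ S ∧ ‖x - c‖ < d c / 4 := by
    intro c x h
    by_cases hc : c ∈ S
    · simp only [ψ, if_pos hc] at h
      have h' : (d c)⁻¹ • (x - c) ∈ Function.support Θ := h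
      rw [Θ.support_eq, mem_ball_zero_iff, norm_smul, norm_inv, Real.norm_of_nonneg (hd0 c),
        inv_mul_lt_iff₀ (hdpos c (hSF hc))] at h'
      exact ⟨hc, by simp only [Θ] at h'; linarith⟩
    · simp only [ψ, if_neg hc, ne_eq, not_true_eq_false] at h
  have hψone : ∀ c ∈ S, ∀ x, ‖x - c‖ ≤ d c / 8 → ψ c x = 1 := by
    intro c hc x h
    simp only [ψ, if_pos hc]
    apply Θ.one_of_mem_closedBall
    rw [mem_closedBall_zero_iff, norm_smul, norm_inv, Real.norm_of_nonneg (hd0 c),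
        inv_mul_le_iff₀ (hdpos c (hSF hc))]
    simp only [Θ]; linarith
  have hψsm : ∀ c, ContDiff ℝ (⊤ : ℕ∞) (ψ c) := by
    intro c
    by_cases hc : c ∈ S
    · simp only [ψ, if_pos hc]
      exact Θ.contDiff.comp ((contDiff_id.sub contDiff_const).const_smul _)
    · simp only [ψ, if_neg hc]; exact contDiff_const
  have hψlip : ∀ c ∈ S, ∀ x y, |ψ c y - ψ c x| ≤ K * ((d c)⁻¹ * ‖y - x‖) := by
    intro c hc x y
    simp only [ψ, if_pos hc]
    have := hK.dist_le_mul ((d c)⁻¹ • (y - c)) ((d c)⁻¹ • (x - c))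
    rwa [dist_eq_norm, Real.norm_eq_abs, dist_eq_norm, ← smul_sub, sub_sub_sub_cancel_right,
      norm_smul, norm_inv, Real.norm_of_nonneg (hd0 c)] at this
  have hTfin : ∀ x ∉ F, {c | c ∈ S ∧ ‖c - x‖ ≤ d x / 2}.Finite ∧
      {c | c ∈ S ∧ ‖c - x‖ ≤ d x / 2}.ncard ≤ N := by
    intro x hx
    refine hN x (d x) (hdpos x hx) _ (fun c hc => hc.2) fun c hc e he hce => ?_
    have h1 : d c / 16 ≤ ‖c - e‖ := hsep c hc.1 e he.1 hce
    have h2 := hdl x c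
    rw [norm_sub_rev] at h2
    linarith [hc.2]
  let T : E → Finset E := fun x => if hx : x ∉ F then (hTfin x hx).1.toFinset else ∅
  have hT : ∀ x ∉ F, ∀ c, c ∈ T x ↔ c ∈ S ∧ ‖c - x‖ ≤ d x / 2 := by
    intro x hx c
    simp [T, hx]
  have hTcard : ∀ x ∉ F, ((T x).card : ℝ) ≤ N := by
    intro x hx
    have := (hTfin x hx).2
    rw [Set.ncard_eq_toFinset_card _ (hTfin x hx).1] at this
    simp only [T, dif_pos hx]
    exact_mod_cast this
  have hloc : ∀ x ∉ F, ∀ y, ‖y - x‖ < d x / 8 → ∀ c, ψ c y ≠ 0 → c ∈ T x := by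
    intro x hx y hy c hc
    obtain ⟨hcS, hyc⟩ := hψsupp c y hc
    refine (hT x hx c).2 ⟨hcS, ?_⟩
    have h1 := hdl c y
    have h2 := hdl y x
    rw [norm_sub_rev] at h1
    have h3 : ‖c - x‖ ≤ ‖y - c‖ + ‖y - x‖ := by
      rw [norm_sub_rev y c]; exact norm_sub_le_norm_sub_add_norm_sub _ _ _
    linarith
  let Ψ : E → ℝ := fun y => ∑ᶠ c, ψ c y
  have hΨ : ∀ x ∉ F, ∀ y, ‖y - x‖ < d x / 8 → Ψ y = ∑ c ∈ T x, ψ c y := by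
    intro x hx y hy
    exact finsum_eq_sum_of_support_subset _ fun c hc => hloc x hx y hy c hc
  have hself : ∀ x ∉ F, ‖x - x‖ < d x / 8 := fun x hx => by
    rw [sub_self, norm_zero]; linarith [hdpos x hx]
  have hΨ1 : ∀ x ∉ F, 1 ≤ Ψ x := by
    intro x hx
    obtain ⟨c, hc, hxc⟩ := hcov x hx (hdpos x hx)
    have h1 := hψone c hc x hxc
    rw [hΨ x hx x (hself x hx), ← h1]
    exact Finset.single_le_sum (f := fun c => ψ c x) (fun c _ => hψ0 c x)
      (hloc x hx x (hself x hx) c (by rw [h1]; exact one_ne_zero))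
  have hΨ0 : ∀ x, 0 ≤ Ψ x := fun x => finsum_nonneg fun c => hψ0 c x
  have hyF : ∀ x ∉ F, ∀ y, ‖y - x‖ < d x / 8 → y ∉ F := by
    intro x hx y hy hyF
    have h1 := hdl x y
    have h2 : d y = 0 := infDist_zero_of_mem hyF
    rw [norm_sub_rev] at h1
    linarith [hdpos x hx]
  refine ⟨{ φ := fun c x => ψ c x / Ψ x, nhd := T, C := 4 * N * K, nonneg := ?_, near := ?_,
            eq_zero := ?_, sum_eq_one := ?_, smooth := ?_, lip := ?_ }⟩
  · exact fun c x => div_nonneg (hψ0 c x) (hΨ0 x)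
  · intro c x h
    have := hψsupp c x (fun h0 => h (by simp only [h0, zero_div]))
    exact ⟨hSF this.1, this.2.le⟩
  · intro x hx y hy c hc
    have : ψ c y = 0 := by
      by_contra h0; exact hc (hloc x hx y hy c h0)
    simp only [this, zero_div]
  · intro x hx y hy
    rw [← Finset.sum_div, ← hΨ x hx y hy]
    exact div_self (by linarith [hΨ1 y (hyF x hx y hy)])
  · intro c x hx
    have hev : Ψ =ᶠ[𝓝 x] fun y => ∑ c ∈ T x, ψ c y := by
      filter_upwards [ball_mem_nhds x (show 0 < d x / 8 by linarith [hdpos x hx])] with y hy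
      exact hΨ x hx y (by rwa [← dist_eq_norm])
    have hsm : ContDiffAt ℝ (⊤ : ℕ∞) Ψ x :=
      (ContDiffAt.sum fun c _ => (hψsm c).contDiffAt).congr_of_eventuallyEq hev
    exact ((hψsm c).contDiffAt.div hsm (by linarith [hΨ1 x hx])).contDiffWithinAt
  · intro x hx y hy
    have hy1 := hΨ1 y (hyF x hx y hy)
    have hx1 := hΨ1 x hx
    set D : ℝ := ∑ c ∈ T x, |ψ c y - ψ c x| with hD
    have hΨD : |Ψ y - Ψ x| ≤ D := by
      rw [hΨ x hx y hy, hΨ x hx x (hself x hx), ← Finset.sum_sub_distrib]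
      exact Finset.abs_sum_le_sum_abs _ _
    have hDle : D ≤ N * (K * (2 / d x * ‖y - x‖)) := by
      calc D ≤ ∑ c ∈ T x, K * (2 / d x * ‖y - x‖) := by
            refine Finset.sum_le_sum fun c hc => ?_
            obtain ⟨hcS, hcx⟩ := (hT x hx c).1 hc
            refine (hψlip c hcS x y).trans ?_
            have h1 := hdl x c
            rw [norm_sub_rev] at h1
            have h2 : (d c)⁻¹ ≤ 2 / d x := by
              rw [inv_le_iff_one_le_mul₀ (hdpos c (hSF hcS)), div_mul_eq_mul_div,
                one_le_div (hdpos x hx)]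
              linarith
            gcongr
        _ = (T x).card * (K * (2 / d x * ‖y - x‖)) := by
            rw [Finset.sum_const, nsmul_eq_mul]
        _ ≤ _ := by
            have := hdpos x hx
            gcongr
            exact_mod_cast hTcard x hx
    have hterm : ∀ c, |ψ c y / Ψ y - ψ c x / Ψ x| ≤
        |ψ c y - ψ c x| + ψ c x / Ψ x * |Ψ y - Ψ x| := by
      intro c
      have e : ψ c y / Ψ y - ψ c x / Ψ x =
          (Ψ y)⁻¹ * ((ψ c y - ψ c x) - ψ c x / Ψ x * (Ψ y - Ψ x)) := by
        have : Ψ y ≠ 0 := by linarith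
        have : Ψ x ≠ 0 := by linarith
        field_simp; ring
      have h0 : 0 ≤ ψ c x / Ψ x := div_nonneg (hψ0 c x) (hΨ0 x)
      rw [e, abs_mul, abs_of_nonneg (inv_nonneg.2 (hΨ0 y))]
      calc _ ≤ 1 * |(ψ c y - ψ c x) - ψ c x / Ψ x * (Ψ y - Ψ x)| := by
            gcongr; exact inv_le_one_of_one_le₀ hy1
        _ ≤ _ := by
            rw [one_mul]
            refine (abs_sub _ _).trans ?_
            rw [abs_mul (ψ c x / Ψ x), abs_of_nonneg h0]
    calc _ ≤ ∑ c ∈ T x, (|ψ c y - ψ c x| + ψ c x / Ψ x * |Ψ y - Ψ x|) :=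
          Finset.sum_le_sum fun c _ => hterm c
      _ = D + |Ψ y - Ψ x| := by
          rw [Finset.sum_add_distrib, ← Finset.sum_mul, ← Finset.sum_div,
            ← hΨ x hx x (hself x hx), div_self (by linarith), one_mul]
      _ ≤ 2 * (N * (K * (2 / d x * ‖y - x‖))) := by linarith
      _ = 4 * N * K * ‖y - x‖ / infDist x F := by
          simp only [d]; ring

/-! ### The Whitney-type extension -/

lemma infDist_le_add {E : Type*} [NormedAddCommGroup E] {F : Set E} (x y : E) :
    infDist x F ≤ infDist y F + ‖x - y‖ := by
  rw [← dist_eq_norm]; exact infDist_le_infDist_add_dist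

lemma infDist_le_norm {E : Type*} [NormedAddCommGroup E] {F : Set E} {a : E} (ha : a ∈ F) (x : E) :
    infDist x F ≤ ‖x - a‖ := by
  rw [← dist_eq_norm]; exact infDist_le_dist_of_mem ha

lemma notMem_of_near {E : Type*} [NormedAddCommGroup E] {F : Set E} {x y : E}
    (hy : ‖y - x‖ < infDist x F / 8) : y ∉ F := by
  intro hyF
  have h1 := infDist_le_norm hyF x
  rw [norm_sub_rev] at h1
  linarith [norm_nonneg (y - x)]

section WhitneyExtension

variable {E Y : Type*} [NormedAddCommGroup E] [NormedSpace ℝ E]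
  [NormedAddCommGroup Y] [NormedSpace ℝ Y] {F : Set E}

open Classical in
/-- The Whitney-type extension of `f|F`: off `F` it is the average, with weights `φ c x`, of the
affine functions `x ↦ f (p c) + A c (x - p c)`. -/
noncomputable def WhitneyPartition.extend (W : WhitneyPartition F) (f : E → Y) (p : E → E)
    (A : E → E →L[ℝ] Y) (x : E) : Y :=
  if x ∈ F then f x else ∑ c ∈ W.nhd x, W.φ c x • (f (p c) + A c (x - p c))

variable (W : WhitneyPartition F) (f : E → Y) (p : E → E) (A : E → E →L[ℝ] Y)

lemma extend_of_mem {x : E} (hx : x ∈ F) : W.extend f p A x = f x := if_pos hx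

/-- Near `x ∉ F`, the extension is given by a sum over one and the same finite set of indices. -/
lemma extend_eq_sum (hpos : ∀ x ∉ F, 0 < infDist x F) {x y : E} (hx : x ∉ F)
    (hy : ‖y - x‖ < infDist x F / 8) :
    W.extend f p A y = ∑ c ∈ W.nhd x, W.φ c y • (f (p c) + A c (y - p c)) := by
  classical
  have hyF := notMem_of_near hy
  have hyy : ‖y - y‖ < infDist y F / 8 := by
    rw [sub_self, norm_zero]; linarith [hpos y hyF]
  rw [WhitneyPartition.extend, if_neg hyF]
  trans ∑ᶠ c, W.φ c y • (f (p c) + A c (y - p c))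
  · refine (finsum_eq_sum_of_support_subset _ fun c hc => ?_).symm
    by_contra h
    exact hc (by simp only [W.eq_zero y hyF y hyy c h, zero_smul])
  · refine finsum_eq_sum_of_support_subset _ fun c hc => ?_
    by_contra h
    exact hc (by simp only [W.eq_zero x hx y hy c h, zero_smul])

lemma extend_contDiffOn (hF : IsClosed F) (hpos : ∀ x ∉ F, 0 < infDist x F) :
    ContDiffOn ℝ (⊤ : ℕ∞) (W.extend f p A) Fᶜ := by
  intro x hx
  have hev : W.extend f p A =ᶠ[𝓝 x]
      fun y => ∑ c ∈ W.nhd x, W.φ c y • (f (p c) + A c (y - p c)) := by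
    filter_upwards [ball_mem_nhds x (show 0 < infDist x F / 8 by linarith [hpos x hx])] with y hy
    exact extend_eq_sum W f p A hpos hx (by rwa [← dist_eq_norm])
  refine ((ContDiffAt.sum fun c _ => ?_).congr_of_eventuallyEq hev).contDiffWithinAt
  refine ((W.smooth c).contDiffAt (hF.isOpen_compl.mem_nhds hx)).smul ?_
  exact contDiffAt_const.add ((A c).contDiff.contDiffAt.comp x
    (contDiffAt_id.sub contDiffAt_const))

/-- Off `F` the extension is a convex combination of the values of the affine functions active at
the point, so it is as close to `v` as they are. -/
lemma extend_sub_le (hpos : ∀ x ∉ F, 0 < infDist x F) {x : E} (hx : x ∉ F) (v : Y) (B : ℝ)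
    (h : ∀ c, W.φ c x ≠ 0 → ‖f (p c) + A c (x - p c) - v‖ ≤ B) :
    ‖W.extend f p A x - v‖ ≤ B := by
  have hxx : ‖x - x‖ < infDist x F / 8 := by
    rw [sub_self, norm_zero]; linarith [hpos x hx]
  have h1 := W.sum_eq_one x hx x hxx
  rw [extend_eq_sum W f p A hpos hx hxx, ← one_smul ℝ v, ← h1, Finset.sum_smul,
    ← Finset.sum_sub_distrib]
  calc _ ≤ ∑ c ∈ W.nhd x, W.φ c x * B := by
        refine norm_sum_le_of_le _ fun c _ => ?_
        rw [← smul_sub, norm_smul, Real.norm_of_nonneg (W.nonneg c x)]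
        by_cases hc : W.φ c x = 0
        · simp [hc]
        · exact mul_le_mul_of_nonneg_left (h c hc) (W.nonneg c x)
    _ = B := by rw [← Finset.sum_mul, h1, one_mul]

/-- If `c` is active at `x`, the distances of `c` and `x` to `F` are comparable, and the base point
`p c` is at a comparable distance from `x`. -/
lemma whitney_near (hpos : ∀ x ∉ F, 0 < infDist x F)
    (hp : ∀ c, p c ∈ F ∧ ‖c - p c‖ = infDist c F) {x c : E}
    (hc : W.φ c x ≠ 0) : 0 < infDist c F ∧ infDist c F ≤ 2 * infDist x F ∧
      infDist x F ≤ 2 * infDist c F ∧ ‖x - p c‖ ≤ 2 * infDist x F := by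
  obtain ⟨hcF, hxc⟩ := W.near c x hc
  have h1 := infDist_le_add (F := F) c x
  have h2 := infDist_le_add (F := F) x c
  rw [norm_sub_rev] at h1
  have h3 := (hp c).2
  have h4 : ‖x - p c‖ ≤ ‖x - c‖ + ‖c - p c‖ := norm_sub_le_norm_sub_add_norm_sub _ _ _
  exact ⟨hpos c hcF, by linarith, by linarith [infDist_nonneg (x := c) (s := F)], by linarith⟩

/-- If `f - T` is `ε`-Lipschitz on `F` and the operators `A c` are `ε`-close to `T` near `a`, then
the extension minus `T` is `C ε`-Lipschitz near `a`, with `C` depending on the partition only.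
Points far apart compared with their distance to `F` are joined through a point of `F`; points
close to each other are treated with the bound on the variation of the partition. -/
lemma extend_lipschitz_estimate (hpos : ∀ x ∉ F, 0 < infDist x F)
    (hp : ∀ c, p c ∈ F ∧ ‖c - p c‖ = infDist c F) :
    ∃ C : ℝ, 0 ≤ C ∧ ∀ a ∈ F, ∀ ρ ε : ℝ, 0 ≤ ε → ∀ T : E →L[ℝ] Y,
      (∀ q ∈ F, ∀ q' ∈ F, ‖q - a‖ < ρ → ‖q' - a‖ < ρ →
        ‖f q' - f q - T (q' - q)‖ ≤ ε * ‖q' - q‖) →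
      (∀ c, c ∉ F → infDist c F < ρ → ‖p c - a‖ < ρ → ‖A c - T‖ ≤ ε) →
      ∀ x y, ‖x - a‖ < ρ / 3 → ‖y - a‖ < ρ / 3 →
        ‖W.extend f p A y - W.extend f p A x - T (y - x)‖ ≤ C * ε * ‖y - x‖ := by
  refine ⟨7 * |W.C| + 86, by positivity, fun a ha ρ ε hε T hf hA => ?_⟩
  set g := W.extend f p A with hg
  -- the local data attached to an index `c` active at `x`
  have hact : ∀ x c, ‖x - a‖ < ρ / 3 → W.φ c x ≠ 0 → ‖p c - a‖ < ρ ∧ ‖A c - T‖ ≤ ε := by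
    intro x c hx hc
    obtain ⟨h1, h2, h3, h4⟩ := whitney_near W p hpos hp hc
    have h5 := infDist_le_norm ha x
    have h6 : ‖p c - a‖ ≤ ‖x - p c‖ + ‖x - a‖ := by
      rw [norm_sub_rev x]; exact norm_sub_le_norm_sub_add_norm_sub _ _ _
    have h7 : ‖p c - a‖ < ρ := by linarith
    exact ⟨h7, hA c (W.near c x hc).1 (by linarith) h7⟩
  -- one point in `F`, the other one outside
  have hmix : ∀ x ∉ F, ∀ q ∈ F, ‖x - a‖ < ρ / 3 → ‖q - a‖ < ρ →
      ‖g x - g q - T (x - q)‖ ≤ 5 * ε * ‖x - q‖ := by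
    intro x hx q hq hxa hqa
    rw [sub_sub, hg, extend_of_mem W f p A hq]
    refine extend_sub_le W f p A hpos hx _ _ fun c hc => ?_
    obtain ⟨hpa, hAc⟩ := hact x c hxa hc
    obtain ⟨h1, h2, h3, h4⟩ := whitney_near W p hpos hp hc
    have h5 := infDist_le_norm hq x
    have h6 : ‖p c - q‖ ≤ ‖x - p c‖ + ‖x - q‖ := by
      rw [norm_sub_rev x]; exact norm_sub_le_norm_sub_add_norm_sub _ _ _
    have e : f (p c) + A c (x - p c) - (f q + T (x - q)) =
        (f (p c) - f q - T (p c - q)) + (A c - T) (x - p c) := by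
      simp only [sub_apply, map_sub]; abel
    rw [e]
    calc _ ≤ ε * ‖p c - q‖ + ε * ‖x - p c‖ :=
          norm_add_le_of_le (hf q hq _ (hp c).1 hqa hpa)
            ((A c - T).le_of_opNorm_le hAc _)
      _ ≤ 5 * ε * ‖x - q‖ := by nlinarith
  -- both points outside `F`, far from each other relative to their distance to `F`
  have hfar : ∀ x ∉ F, ∀ y ∉ F, ‖x - a‖ < ρ / 3 → ‖y - a‖ < ρ / 3 →
      infDist x F / 8 ≤ ‖y - x‖ → (∃ q ∈ F, ‖x - q‖ = infDist x F) →
      ‖g y - g x - T (y - x)‖ ≤ 85 * ε * ‖y - x‖ := by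
    rintro x hx y hy hxa hya hxy ⟨q, hq, hxq⟩
    have h1 := infDist_le_norm ha x
    have hqa : ‖q - a‖ < ρ := by
      have : ‖q - a‖ ≤ ‖x - q‖ + ‖x - a‖ := by
        rw [norm_sub_rev x]; exact norm_sub_le_norm_sub_add_norm_sub _ _ _
      linarith [norm_nonneg (x - a)]
    have h2 : ‖y - q‖ ≤ ‖y - x‖ + ‖x - q‖ := norm_sub_le_norm_sub_add_norm_sub _ _ _
    have e : g y - g x - T (y - x) = (g y - g q - T (y - q)) - (g x - g q - T (x - q)) := by
      simp only [map_sub]; abel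
    rw [e]
    calc _ ≤ 5 * ε * ‖y - q‖ + 5 * ε * ‖x - q‖ :=
          norm_sub_le_of_le (hmix y hy q hq hya hqa) (hmix x hx q hq hxa hqa)
      _ ≤ 85 * ε * ‖y - x‖ := by nlinarith
  -- both points outside `F`, close to each other relative to their distance to `F`
  have hclose : ∀ x ∉ F, ∀ y ∉ F, ‖x - a‖ < ρ / 3 → ‖y - a‖ < ρ / 3 →
      ‖y - x‖ < infDist x F / 8 → (∃ q ∈ F, ‖x - q‖ = infDist x F) →
      ‖g y - g x - T (y - x)‖ ≤ (7 * |W.C| + 1) * ε * ‖y - x‖ := by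
    rintro x hx y hy hxa hya hxy ⟨q, hq, hxq⟩
    have hdx := hpos x hx
    have hxx : ‖x - x‖ < infDist x F / 8 := by rw [sub_self, norm_zero]; linarith
    have h1 := infDist_le_norm ha x
    have hqa : ‖q - a‖ < ρ := by
      have : ‖q - a‖ ≤ ‖x - q‖ + ‖x - a‖ := by
        rw [norm_sub_rev x]; exact norm_sub_le_norm_sub_add_norm_sub _ _ _
      linarith [norm_nonneg (x - a)]
    let w : E → Y := fun c => f (p c) - f q - T (p c - q) + (A c - T) (x - p c)
    have hsy := W.sum_eq_one x hx y hxy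
    have hsx := W.sum_eq_one x hx x hxx
    have e : g y - g x - T (y - x) = ∑ c ∈ W.nhd x,
        ((W.φ c y - W.φ c x) • w c + W.φ c y • (A c - T) (y - x)) := by
      have e1 : ∑ c ∈ W.nhd x, (W.φ c y - W.φ c x) • (f q + T (x - q)) = 0 := by
        rw [← Finset.sum_smul, Finset.sum_sub_distrib, hsy, hsx, sub_self, zero_smul]
      have e2 : ∑ c ∈ W.nhd x, W.φ c y • T (y - x) = T (y - x) := by
        rw [← Finset.sum_smul, hsy, one_smul]
      rw [hg, extend_eq_sum W f p A hpos hx hxy, extend_eq_sum W f p A hpos hx hxx,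
        ← e2, ← sub_zero (_ - _ - _), ← e1, ← Finset.sum_sub_distrib, ← Finset.sum_sub_distrib,
        ← Finset.sum_sub_distrib]
      refine Finset.sum_congr rfl fun c _ => ?_
      simp only [w, sub_apply, map_sub]
      module
    have hw : ∀ c, (W.φ c y ≠ 0 ∨ W.φ c x ≠ 0) → ‖w c‖ ≤ 7 * ε * infDist x F := by
      intro c hc
      have hkey : ‖p c - a‖ < ρ ∧ ‖A c - T‖ ≤ ε ∧ ‖x - p c‖ ≤ 3 * infDist x F := by
        rcases hc with hc | hc
        · obtain ⟨k1, k2⟩ := hact y c hya hc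
          obtain ⟨-, -, -, k4⟩ := whitney_near W p hpos hp hc
          have k5 := infDist_le_add (F := F) y x
          have k6 : ‖x - p c‖ ≤ ‖y - x‖ + ‖y - p c‖ := by
            rw [norm_sub_rev y x]; exact norm_sub_le_norm_sub_add_norm_sub _ _ _
          exact ⟨k1, k2, by linarith⟩
        · obtain ⟨k1, k2⟩ := hact x c hxa hc
          obtain ⟨-, -, -, k4⟩ := whitney_near W p hpos hp hc
          exact ⟨k1, k2, by linarith⟩
      obtain ⟨k1, k2, k3⟩ := hkey
      have k4 : ‖p c - q‖ ≤ ‖x - p c‖ + ‖x - q‖ := by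
        rw [norm_sub_rev x]; exact norm_sub_le_norm_sub_add_norm_sub _ _ _
      calc ‖w c‖ ≤ ε * ‖p c - q‖ + ε * ‖x - p c‖ :=
            norm_add_le_of_le (hf q hq _ (hp c).1 hqa k1) ((A c - T).le_of_opNorm_le k2 _)
        _ ≤ 7 * ε * infDist x F := by nlinarith
    have hlip := W.lip x hx y hxy
    rw [e]
    calc _ ≤ ∑ c ∈ W.nhd x, (|W.φ c y - W.φ c x| * (7 * ε * infDist x F)
            + W.φ c y * (ε * ‖y - x‖)) := by
          refine norm_sum_le_of_le _ fun c _ => norm_add_le_of_le ?_ ?_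
          · rw [norm_smul, Real.norm_eq_abs]
            by_cases hc : W.φ c y ≠ 0 ∨ W.φ c x ≠ 0
            · exact mul_le_mul_of_nonneg_left (hw c hc) (abs_nonneg _)
            · push Not at hc
              simp [hc.1, hc.2]
          · rw [norm_smul, Real.norm_of_nonneg (W.nonneg c y)]
            by_cases hc : W.φ c y = 0
            · simp [hc]
            · exact mul_le_mul_of_nonneg_left
                ((A c - T).le_of_opNorm_le (hact y c hya hc).2 _) (W.nonneg c y)
      _ = (∑ c ∈ W.nhd x, |W.φ c y - W.φ c x|) * (7 * ε * infDist x F) + ε * ‖y - x‖ := by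
          rw [Finset.sum_add_distrib, ← Finset.sum_mul, ← Finset.sum_mul, hsy, one_mul]
      _ ≤ (|W.C| * ‖y - x‖ / infDist x F) * (7 * ε * infDist x F) + ε * ‖y - x‖ := by
          gcongr
          refine hlip.trans ?_
          gcongr
          exact le_abs_self _
      _ = (7 * |W.C| + 1) * ε * ‖y - x‖ := by
          field_simp
  have hnearest : ∀ x, ∃ q ∈ F, ‖x - q‖ = infDist x F := fun x => ⟨p x, hp x⟩
  intro x y hxa hya
  have hρ : 0 < ρ := by linarith [norm_nonneg (x - a)]
  have hεn : 0 ≤ ε * ‖y - x‖ := by positivity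
  have hCε : 0 ≤ |W.C| * (ε * ‖y - x‖) := by positivity
  by_cases hx : x ∈ F
  · by_cases hy : y ∈ F
    · rw [hg, extend_of_mem W f p A hx, extend_of_mem W f p A hy]
      refine (hf x hx y hy (by linarith) (by linarith)).trans ?_
      nlinarith
    · refine (hmix y hy x hx hya (by linarith)).trans ?_
      nlinarith
  · by_cases hy : y ∈ F
    · have e : g y - g x - T (y - x) = -(g x - g y - T (x - y)) := by
        simp only [map_sub]; abel
      rw [e, norm_neg]
      refine (hmix x hx y hy hxa (by linarith)).trans ?_
      rw [norm_sub_rev x y]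
      nlinarith
    · rcases le_or_gt (infDist x F / 8) ‖y - x‖ with h | h
      · refine (hfar x hx y hy hxa hya h (hnearest x)).trans ?_
        nlinarith
      · refine (hclose x hx y hy hxa hya h (hnearest x)).trans ?_
        nlinarith

variable {L : E → E →L[ℝ] Y}

/-- The correction terms `(A c - L a) (x - p c)` active at `x` are `o(‖x - a‖)`, because
`‖x - p c‖` is comparable to the distance of `c` to `F`. -/
lemma active_estimate (hpos : ∀ x ∉ F, 0 < infDist x F)
    (hp : ∀ c, p c ∈ F ∧ ‖c - p c‖ = infDist c F) {a : E} (ha : a ∈ F)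
    (hA : ∀ ε : ℝ, 0 < ε → ∃ δ : ℝ, 0 < δ ∧ ∀ c, c ∉ F → infDist c F < δ → ‖p c - a‖ < δ →
      ‖A c - L a‖ * infDist c F ≤ ε * (‖p c - a‖ + infDist c F))
    {ε : ℝ} (hε : 0 < ε) :
    ∃ δ : ℝ, 0 < δ ∧ ∀ x ∉ F, ‖x - a‖ < δ → ∀ c, W.φ c x ≠ 0 →
      ‖(A c - L a) (x - p c)‖ ≤ ε * ‖x - a‖ ∧ ‖p c - a‖ ≤ 3 * ‖x - a‖ ∧
        ‖x - p c‖ ≤ 2 * ‖x - a‖ := by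
  obtain ⟨δ, hδ, h⟩ := hA (ε / 20) (by positivity)
  refine ⟨δ / 3, by positivity, fun x hx hxa c hc => ?_⟩
  obtain ⟨h1, h2, h3, h4⟩ := whitney_near W p hpos hp hc
  have h5 := infDist_le_norm ha x
  have h6 : ‖p c - a‖ ≤ ‖x - p c‖ + ‖x - a‖ := by
    rw [norm_sub_rev x]; exact norm_sub_le_norm_sub_add_norm_sub _ _ _
  refine ⟨?_, by linarith, by linarith⟩
  have h7 := h c (W.near c x hc).1 (by linarith [norm_nonneg (x - a)]) (by linarith)
  have h8 := norm_nonneg (A c - L a)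
  calc _ ≤ ‖A c - L a‖ * ‖x - p c‖ := (A c - L a).le_opNorm _
    _ ≤ ‖A c - L a‖ * (4 * infDist c F) := by gcongr; linarith
    _ = 4 * (‖A c - L a‖ * infDist c F) := by ring
    _ ≤ 4 * (ε / 20 * (‖p c - a‖ + infDist c F)) := by gcongr
    _ ≤ 4 * (ε / 20 * (5 * ‖x - a‖)) := by gcongr; linarith
    _ = ε * ‖x - a‖ := by ring

lemma active_value_estimate {x a q : E} {T A : E →L[ℝ] Y}
    (h1 : ‖(A - T) (x - q)‖ ≤ 1 * ‖x - a‖) (h2 : ‖x - q‖ ≤ 2 * ‖x - a‖) :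
    ‖f q + A (x - q) - f a‖ ≤ ‖f q - f a‖ + (1 + 2 * ‖T‖) * ‖x - a‖ := by
  have e : f q + A (x - q) - f a = (f q - f a) + ((A - T) (x - q) + T (x - q)) := by
    simp only [sub_apply]; abel
  rw [e]
  refine (norm_add_le_of_le le_rfl (norm_add_le_of_le h1 (T.le_opNorm _))).trans ?_
  nlinarith [norm_nonneg T]

lemma extend_continuousAt (hpos : ∀ x ∉ F, 0 < infDist x F)
    (hp : ∀ c, p c ∈ F ∧ ‖c - p c‖ = infDist c F) {a : E} (ha : a ∈ F)
    (hA : ∀ ε : ℝ, 0 < ε → ∃ δ : ℝ, 0 < δ ∧ ∀ c, c ∉ F → infDist c F < δ → ‖p c - a‖ < δ →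
      ‖A c - L a‖ * infDist c F ≤ ε * (‖p c - a‖ + infDist c F))
    (hf : ContinuousWithinAt f F a) : ContinuousAt (W.extend f p A) a := by
  rw [Metric.continuousAt_iff]
  intro ε hε
  obtain ⟨δ₁, hδ₁, h1⟩ := Metric.continuousWithinAt_iff.1 hf (ε / 2) (by positivity)
  obtain ⟨δ₂, hδ₂, h2⟩ := active_estimate W p A (L := L) hpos hp ha hA one_pos
  refine ⟨min (δ₁ / 3) (min δ₂ (ε / (2 * (1 + 2 * ‖L a‖)))), by positivity, fun {x} hx => ?_⟩
  simp only [lt_min_iff, dist_eq_norm] at hx h1 ⊢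
  rw [extend_of_mem W f p A ha]
  by_cases hxF : x ∈ F
  · rw [extend_of_mem W f p A hxF]
    exact (h1 hxF (by linarith [norm_nonneg (x - a)])).trans (by linarith)
  · have hb : (1 + 2 * ‖L a‖) * ‖x - a‖ < ε / 2 := by
      have := hx.2.2
      rw [lt_div_iff₀ (by positivity)] at this
      linarith
    refine (extend_sub_le W f p A hpos hxF _ (ε / 2 + (1 + 2 * ‖L a‖) * ‖x - a‖)
      fun c hc => ?_).trans_lt (by linarith)
    obtain ⟨k1, k2, k3⟩ := h2 x hxF hx.2.1 c hc
    have := h1 (hp c).1 (by linarith)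
    exact (active_value_estimate f k1 k3).trans (by linarith)

lemma extend_holderAtWithin (hpos : ∀ x ∉ F, 0 < infDist x F)
    (hp : ∀ c, p c ∈ F ∧ ‖c - p c‖ = infDist c F) {a : E} (ha : a ∈ F)
    (hA : ∀ ε : ℝ, 0 < ε → ∃ δ : ℝ, 0 < δ ∧ ∀ c, c ∉ F → infDist c F < δ → ‖p c - a‖ < δ →
      ‖A c - L a‖ * infDist c F ≤ ε * (‖p c - a‖ + infDist c F))
    {α : ℝ} (hα : α ∈ Ioc (0 : ℝ) 1) (hf : HolderAtWithin f F α a) :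
    HolderAtWithin (W.extend f p A) univ α a := by
  obtain ⟨K, δ₁, hδ₁, h1⟩ := hf
  obtain ⟨δ₂, hδ₂, h2⟩ := active_estimate W p A (L := L) hpos hp ha hA one_pos
  have h3 : (1 : ℝ) ≤ 3 ^ α := Real.one_le_rpow (by norm_num) hα.1.le
  refine ⟨|K| * 3 ^ α + (1 + 2 * ‖L a‖), min (δ₁ / 3) (min δ₂ 1), by positivity,
    fun x _ hx => ?_⟩
  simp only [lt_min_iff] at hx
  have hr : 0 ≤ ‖x - a‖ ^ α := Real.rpow_nonneg (norm_nonneg _) _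
  rw [extend_of_mem W f p A ha]
  by_cases hxF : x ∈ F
  · rw [extend_of_mem W f p A hxF]
    refine (h1 x hxF (by linarith [norm_nonneg (x - a)])).trans ?_
    gcongr
    have : |K| ≤ |K| * 3 ^ α := le_mul_of_one_le_right (abs_nonneg _) h3
    linarith [le_abs_self K, norm_nonneg (L a)]
  · have hxa : 0 < ‖x - a‖ := (hpos x hxF).trans_le (infDist_le_norm ha x)
    have hle : ‖x - a‖ ≤ ‖x - a‖ ^ α := by
      simpa using Real.rpow_le_rpow_of_exponent_ge hxa hx.2.2.le hα.2
    refine extend_sub_le W f p A hpos hxF _ _ fun c hc => ?_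
    obtain ⟨k1, k2, k3⟩ := h2 x hxF hx.2.1 c hc
    have k4 := h1 (p c) (hp c).1 (by linarith)
    have k5 : ‖p c - a‖ ^ α ≤ 3 ^ α * ‖x - a‖ ^ α := by
      rw [← Real.mul_rpow (by norm_num) (norm_nonneg _)]
      exact Real.rpow_le_rpow (norm_nonneg _) k2 hα.1.le
    refine (active_value_estimate f k1 k3).trans ?_
    calc _ ≤ |K| * (3 ^ α * ‖x - a‖ ^ α) + (1 + 2 * ‖L a‖) * ‖x - a‖ ^ α := by
          gcongr
          refine k4.trans ?_
          have : 0 ≤ ‖p c - a‖ ^ α := Real.rpow_nonneg (norm_nonneg _) _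
          calc K * ‖p c - a‖ ^ α ≤ |K| * ‖p c - a‖ ^ α := by gcongr; exact le_abs_self K
            _ ≤ _ := by gcongr
      _ = _ := by ring

lemma extend_hasFDerivAt (hpos : ∀ x ∉ F, 0 < infDist x F)
    (hp : ∀ c, p c ∈ F ∧ ‖c - p c‖ = infDist c F) {a : E} (ha : a ∈ F)
    (hA : ∀ ε : ℝ, 0 < ε → ∃ δ : ℝ, 0 < δ ∧ ∀ c, c ∉ F → infDist c F < δ → ‖p c - a‖ < δ →
      ‖A c - L a‖ * infDist c F ≤ ε * (‖p c - a‖ + infDist c F))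
    (hf : HasFDerivWithinAt f (L a) F a) : HasFDerivAt (W.extend f p A) (L a) a := by
  rw [hasFDerivAt_iff_isLittleO, Asymptotics.isLittleO_iff]
  intro ε hε
  have hf' := (Asymptotics.isLittleO_iff.1 (hasFDerivWithinAt_iff_isLittleO.1 hf))
    (c := ε / 4) (by positivity)
  obtain ⟨δ₁, hδ₁, h1⟩ := Metric.mem_nhdsWithin_iff.1 hf'
  obtain ⟨δ₂, hδ₂, h2⟩ := active_estimate W p A (L := L) hpos hp ha hA
    (show 0 < ε / 4 by positivity)
  filter_upwards [ball_mem_nhds a (show 0 < min (δ₁ / 3) δ₂ by positivity)] with x hx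
  rw [mem_ball, dist_eq_norm, lt_min_iff] at hx
  have h1' : ∀ q ∈ F, ‖q - a‖ < δ₁ → ‖f q - f a - L a (q - a)‖ ≤ ε / 4 * ‖q - a‖ :=
    fun q hq hqa => h1 ⟨by rwa [mem_ball, dist_eq_norm], hq⟩
  rw [extend_of_mem W f p A ha]
  by_cases hxF : x ∈ F
  · rw [extend_of_mem W f p A hxF]
    refine (h1' x hxF (by linarith [norm_nonneg (x - a)])).trans ?_
    gcongr; linarith
  · rw [sub_sub]
    refine extend_sub_le W f p A hpos hxF _ _ fun c hc => ?_
    obtain ⟨k1, k2, k3⟩ := h2 x hxF hx.2 c hc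
    have e : f (p c) + A c (x - p c) - (f a + L a (x - a)) =
        (f (p c) - f a - L a (p c - a)) + (A c - L a) (x - p c) := by
      simp only [sub_apply, map_sub]; abel
    rw [e]
    refine (norm_add_le_of_le (h1' _ (hp c).1 (by linarith)) k1).trans ?_
    nlinarith

/-- The extension has strict derivative `L a` at `a` as soon as `f` has it relative to `F` and the
operators `A c` converge to `L a`. -/
lemma extend_relStrictDerivAt (hpos : ∀ x ∉ F, 0 < infDist x F)
    (hp : ∀ c, p c ∈ F ∧ ‖c - p c‖ = infDist c F) {a : E} (ha : a ∈ F)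
    (hA : ∀ ε : ℝ, 0 < ε → ∃ δ : ℝ, 0 < δ ∧ ∀ c, c ∉ F → infDist c F < δ → ‖p c - a‖ < δ →
      ‖A c - L a‖ ≤ ε)
    (hf : RelStrictDerivAt f F (L a) a) : RelStrictDerivAt (W.extend f p A) univ (L a) a := by
  obtain ⟨C, hC, hest⟩ := extend_lipschitz_estimate W f p A hpos hp
  intro ε hε
  obtain ⟨δ₁, hδ₁, h1⟩ := hf (ε / (C + 1)) (by positivity)
  obtain ⟨δ₂, hδ₂, h2⟩ := hA (ε / (C + 1)) (by positivity)
  refine ⟨min δ₁ δ₂ / 3, by positivity, fun x _ y _ hx hy => ?_⟩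
  refine (hest a ha (min δ₁ δ₂) (ε / (C + 1)) (by positivity) (L a) ?_ ?_ x y hx hy).trans ?_
  · intro q hq q' hq' hqa hqa'
    exact h1 q hq q' hq' (hqa.trans_le (min_le_left _ _)) (hqa'.trans_le (min_le_left _ _))
  · intro c hc hcd hca
    exact h2 c hc (hcd.trans_le (min_le_right _ _)) (hca.trans_le (min_le_right _ _))
  · gcongr
    rw [mul_div_assoc', div_le_iff₀ (by positivity)]
    nlinarith

end WhitneyExtension

lemma RelStrictDerivAt.hasFDerivAt {E Y : Type*} [NormedAddCommGroup E] [NormedSpace ℝ E]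
    [NormedAddCommGroup Y] [NormedSpace ℝ Y] {g : E → Y} {T : E →L[ℝ] Y} {a : E}
    (h : RelStrictDerivAt g univ T a) : HasFDerivAt g T a := by
  rw [hasFDerivAt_iff_isLittleO, Asymptotics.isLittleO_iff]
  intro ε hε
  obtain ⟨δ, hδ, h⟩ := h ε hε
  filter_upwards [ball_mem_nhds a hδ] with x hx
  exact h a trivial x trivial (by simpa using hδ) (by rwa [← dist_eq_norm])

/-- If `T` is a strict derivative of `g` at `a`, then `g - T` is Lipschitz with a small constant
near `a`, so its derivatives at nearby points are small. -/
lemma RelStrictDerivAt.continuousWithinAt_fderiv {E Y : Type*} [NormedAddCommGroup E]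
    [NormedSpace ℝ E] [NormedAddCommGroup Y] [NormedSpace ℝ Y] {g : E → Y} {T : E →L[ℝ] Y} {a : E}
    {D : Set E} (h : RelStrictDerivAt g univ T a) (hD : ∀ x ∈ D, DifferentiableAt ℝ g x) :
    ContinuousWithinAt (fderiv ℝ g) (D ∪ {a}) a := by
  rw [Metric.continuousWithinAt_iff]
  intro ε hε
  obtain ⟨δ, hδ, hs⟩ := h (ε / 2) (by positivity)
  refine ⟨δ, hδ, fun {x} hx hxa => ?_⟩
  have hx' : DifferentiableAt ℝ g x := by
    rcases hx with hx | hx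
    · exact hD x hx
    · rw [mem_singleton_iff.1 hx]; exact h.hasFDerivAt.differentiableAt
  rw [h.hasFDerivAt.fderiv, dist_eq_norm]
  have hder : HasFDerivAt (fun y => g y - T y) (fderiv ℝ g x - T) x :=
    hx'.hasFDerivAt.sub T.hasFDerivAt
  refine (hder.le_of_lip' (C := ε / 2) (by positivity) ?_).trans_lt (by linarith)
  filter_upwards [isOpen_ball.mem_nhds (show x ∈ ball a δ from hxa)] with y hy
  have := hs x trivial y trivial (by rwa [← dist_eq_norm]) (by rwa [← dist_eq_norm])
  rw [map_sub] at this
  convert this using 2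
  abel

/-- A function which is Lipschitz near every point of a compact set is Lipschitz on this set. -/
lemma lipschitzOnSet_of_isCompact {E Y : Type*} [NormedAddCommGroup E] [NormedAddCommGroup Y]
    {g : E → Y} {s : Set E} (hs : IsCompact s)
    (h : ∀ z ∈ s, ∃ K : ℝ, ∃ t ∈ 𝓝 z, ∀ x ∈ t, ∀ y ∈ t, ‖g y - g x‖ ≤ K * ‖y - x‖) :
    LipschitzOnSet g s := by
  have hloc : LocallyLipschitzOn s g := by
    intro z hz
    obtain ⟨K, t, ht, hK⟩ := h z hz
    refine ⟨K.toNNReal, t, mem_nhdsWithin_of_mem_nhds ht, LipschitzOnWith.of_dist_le_mul ?_⟩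
    intro x hx y hy
    rw [dist_eq_norm, dist_eq_norm]
    refine (hK y hy x hx).trans ?_
    gcongr
    exact Real.le_coe_toNNReal K
  obtain ⟨K, hK⟩ := LocallyLipschitzOn.exists_lipschitzOnWith_of_compact hs hloc
  refine ⟨K, fun x hx y hy => ?_⟩
  rw [← dist_eq_norm, ← dist_eq_norm]
  exact hK.dist_le_mul y hy x hx

/-! ### The extension theorem -/

/-- Extension theorem for vector-valued functions defined on closed subsets of `ℝⁿ`,
with preservation of continuity, Hölder and Lipschitz points, Fréchet and strict
differentiability, and local/global Lipschitz continuity. -/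
theorem extension_preserving_derivatives_finite_dim
    (n : ℕ) {Y : Type*} [NormedAddCommGroup Y] [NormedSpace ℝ Y]
    (F : Set (EuclideanSpace ℝ (Fin n))) (hF : IsClosed F)
    (f : EuclideanSpace ℝ (Fin n) → Y)
    (L : EuclideanSpace ℝ (Fin n) → (EuclideanSpace ℝ (Fin n) →L[ℝ] Y))
    (hL : BaireOneOn L F) :
    ∃ fbar : EuclideanSpace ℝ (Fin n) → Y,
      -- (i)
      (∀ x ∈ F, fbar x = f x) ∧
      -- (ii)
      (∀ a ∈ F, ContinuousWithinAt f F a → ContinuousAt fbar a) ∧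
      -- (iii)
      (∀ a ∈ F, ∀ α : ℝ, α ∈ Set.Ioc (0 : ℝ) 1 →
        HolderAtWithin f F α a → HolderAtWithin fbar Set.univ α a) ∧
      -- (iv)
      (∀ a ∈ F, HasFDerivWithinAt f (L a) F a → HasFDerivAt fbar (L a) a) ∧
      -- (v)
      ContDiffOn ℝ (⊤ : ℕ∞) fbar Fᶜ ∧
      -- (vi)
      (∀ a ∈ F, ContinuousWithinAt L F a → RelStrictDerivAt f F (L a) a →
        ContinuousWithinAt (fderiv ℝ fbar) (Fᶜ ∪ {a}) a ∧
        RelStrictDerivAt fbar Set.univ (L a) a) ∧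
      -- (vii), local version
      (∀ a ∈ F, ∀ R : ℝ, 0 < R →
        (∃ M : ℝ, ∀ x ∈ Metric.ball a R ∩ F, ‖L x‖ ≤ M) →
        LipschitzOnSet f (Metric.ball a R ∩ F) →
        ∀ r : ℝ, r < R → LipschitzOnSet fbar (Metric.ball a r)) ∧
      -- (vii), global version
      ((∃ M : ℝ, ∀ x ∈ F, ‖L x‖ ≤ M) → LipschitzOnSet f F →
        LipschitzOnSet fbar Set.univ) := by
  rcases F.eq_empty_or_nonempty with rfl | hne
  · refine ⟨fun _ => 0, by simp, by simp, by simp, by simp, contDiffOn_const, by simp, by simp,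
      fun _ _ => ⟨0, by simp⟩⟩
  have hpos : ∀ x ∉ F, 0 < infDist x F := fun x hx => (hF.notMem_iff_infDist_pos hne).1 hx
  obtain ⟨A₀, hA1, hA2, hA3, hA4⟩ := exists_scale_selection hL
  obtain ⟨W⟩ := exists_whitneyPartition hF hne
  have hnearest : ∀ c, ∃ q, q ∈ F ∧ ‖c - q‖ = infDist c F := fun c => by
    obtain ⟨q, hq, h⟩ := hF.exists_infDist_eq_dist hne c
    exact ⟨q, hq, by rw [h, dist_eq_norm]⟩
  choose p hp using hnearest
  let A := fun c => A₀ (p c) (infDist c F)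
  have hA : ∀ a ∈ F, ∀ ε : ℝ, 0 < ε → ∃ δ : ℝ, 0 < δ ∧ ∀ c, c ∉ F → infDist c F < δ →
      ‖p c - a‖ < δ → ‖A c - L a‖ * infDist c F ≤ ε * (‖p c - a‖ + infDist c F) := by
    intro a ha ε hε
    obtain ⟨δ, hδ, h⟩ := hA3 a ha ε hε
    exact ⟨δ, hδ, fun c hc h1 h2 => h (p c) (hp c).1 _ (hpos c hc) h1 h2⟩
  have hsmooth := extend_contDiffOn W f p A hF hpos
  have hdiff : ∀ x ∈ Fᶜ, ContDiffAt ℝ (⊤ : ℕ∞) (W.extend f p A) x := fun x hx =>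
    hsmooth.contDiffAt (hF.isOpen_compl.mem_nhds hx)
  obtain ⟨C, hC, hest⟩ := extend_lipschitz_estimate W f p A hpos hp
  refine ⟨W.extend f p A, fun x hx => extend_of_mem W f p A hx,
    fun a ha hfa => extend_continuousAt W f p A hpos hp ha (hA a ha) hfa,
    fun a ha α hα hfa => extend_holderAtWithin W f p A hpos hp ha (hA a ha) hα hfa,
    fun a ha hfa => extend_hasFDerivAt W f p A hpos hp ha (hA a ha) hfa,
    hsmooth, fun a ha hLa hfa => ?_, ?_, ?_⟩
  · have hstrict : RelStrictDerivAt (W.extend f p A) univ (L a) a := by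
      refine extend_relStrictDerivAt W f p A hpos hp ha (fun ε hε => ?_) hfa
      obtain ⟨δ, hδ, h⟩ := hA4 a ha hLa ε hε
      exact ⟨δ, hδ, fun c hc h1 h2 => h (p c) (hp c).1 _ (hpos c hc) h1 h2⟩
    exact ⟨hstrict.continuousWithinAt_fderiv fun x hx =>
      (hdiff x hx).differentiableAt (by simp), hstrict⟩
  · rintro a ha R hR ⟨M, hM⟩ ⟨K, hK⟩ r hr
    -- by compactness it suffices to work near each point of the closed ball, which lies in
    -- `ball a R`; off `F` smoothness is enough
    have hcl : LipschitzOnSet (W.extend f p A) (closedBall a r) := by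
      refine lipschitzOnSet_of_isCompact (isCompact_closedBall a r) fun z hz => ?_
      by_cases hzF : z ∈ F
      · have hzR : dist z a < R := (mem_closedBall.1 hz).trans_lt hr
        obtain ⟨δ, hδ, h⟩ := hA2 z hzF (R - dist z a) (by linarith)
        have hball : ∀ u ∈ F, ‖u - z‖ < R - dist z a → u ∈ ball a R ∩ F := by
          intro u hu huz
          rw [← dist_eq_norm] at huz
          exact ⟨by rw [mem_ball]; linarith [dist_triangle u z a], hu⟩
        have hρ : 0 < min δ (R - dist z a) := lt_min hδ (by linarith)
        refine ⟨C * (|M| + |K|), ball z (min δ (R - dist z a) / 3),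
          ball_mem_nhds z (by positivity), fun x hx y hy => ?_⟩
        rw [mem_ball, dist_eq_norm] at hx hy
        have := hest z hzF (min δ (R - dist z a)) (|M| + |K|) (by positivity) 0 ?_ ?_ x y hx hy
        · simpa using this
        · intro q hq q' hq' hqz hqz'
          have := hK q (hball q hq (hqz.trans_le (min_le_right _ _)))
            q' (hball q' hq' (hqz'.trans_le (min_le_right _ _)))
          simp only [zero_apply, sub_zero]
          refine this.trans ?_
          gcongr
          linarith [le_abs_self K, abs_nonneg M]
        · intro c hc hcd hcz
          rw [sub_zero]
          rcases h (p c) (hp c).1 _ (hpos c hc) (hcd.trans_le (min_le_left _ _))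
            (hcz.trans_le (min_le_left _ _)) with h0 | ⟨u, hu, huz, h0⟩
          · simp only [A, h0, norm_zero]; positivity
          · simp only [A, h0]
            linarith [hM u (hball u hu huz), le_abs_self M, abs_nonneg K]
      · obtain ⟨K', t, ht, hK'⟩ := ((hdiff z hzF).of_le (by simp)).exists_lipschitzOnWith
        refine ⟨K', t, ht, fun x hx y hy => ?_⟩
        rw [← dist_eq_norm, ← dist_eq_norm]
        exact hK'.dist_le_mul y hy x hx
    obtain ⟨K', hK'⟩ := hcl
    exact ⟨K', fun x hx y hy => hK' x (ball_subset_closedBall hx) y (ball_subset_closedBall hy)⟩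
  · rintro ⟨M, hM⟩ ⟨K, hK⟩
    obtain ⟨a, ha⟩ := hne
    refine ⟨C * (|M| + |K|), fun x _ y _ => ?_⟩
    -- the constant does not depend on the radius, which is chosen to include both points
    have := hest a ha (3 * (‖x - a‖ + ‖y - a‖ + 1)) (|M| + |K|) (by positivity) 0 ?_ ?_ x y
      (by linarith [norm_nonneg (y - a)]) (by linarith [norm_nonneg (x - a)])
    · simpa using this
    · intro q hq q' hq' _ _
      simp only [zero_apply, sub_zero]
      refine (hK q hq q' hq').trans ?_
      gcongr
      linarith [le_abs_self K, abs_nonneg M]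
    · intro c hc _ _
      rw [sub_zero]
      rcases hA1 (p c) (infDist c F) with h0 | ⟨u, hu, h0⟩
      · simp only [A, h0, norm_zero]; positivity
      · simp only [A, h0]
        linarith [hM u hu, le_abs_self M, abs_nonneg K]
end
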